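/- Assume condition (Cond1) and additionally that b, ω ∈ W^{1,2}_loc(ℝ). Let u_τ ∈ H with u_τ ≥ 0 and ‖u_τ‖ > 0. Then the unique non-negative strong solution u to problem (Incl) satisfies u ∈ C((τ,∞),H³(0,1)) ∩ C¹((τ,∞),V), d²u/dt² ∈ L²_loc(τ+ε,∞;H) for every ε > 0, and the partial derivatives u_t, u_xx exist in the classical sense and are continuous on (τ,∞)×[0,1]. If moreover b, ω ∈ W^{k+1,2}_loc(ℝ) for some k ∈ ℕ, then u ∈ C^{k+1}((τ,∞),V), u ∈ ⋂_{j=0}^{k} C^j((τ,∞),H^{2(k−j)+3}(0,1)), d^{k+2}u/dt^{k+2} ∈ L²_loc(τ+ε,∞;H) for every ε > 0, and u ∈ C^{k+1}((τ,∞)×[0,1]). -/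

import Mathlib

open MeasureTheory Set

noncomputable section

/-- Lebesgue measure restricted to the spatial interval `(0,1)`. -/
def μ01 : Measure ℝ := volume.restrict (Ioo (0:ℝ) 1)

/-- `H = L²(0,1)`. -/
abbrev Hsp : Type := Lp ℝ 2 μ01

/-- The Heaviside multifunction. -/
def heaviside (s : ℝ) : Set ℝ :=
  if s < 0 then {-1} else if s = 0 then Icc (-1) 1 else {1}

/-- Condition (Cond1). -/
structure Cond1 (b ω : ℝ → ℝ) (b0 b1 ω0 ω1 : ℝ) : Prop where
  contb : Continuous b
  contω : Continuous ω
  b0pos : 0 < b0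
  blb : ∀ t, b0 ≤ b t
  bub : ∀ t, b t ≤ b1
  ω0nonneg : 0 ≤ ω0
  ωlb : ∀ t, ω0 ≤ ω t
  ωub : ∀ t, ω t ≤ ω1

/-- `v ∈ H²(0,1) ∩ H¹₀(0,1)` with (weak) second derivative `w ∈ L²(0,1)`:
`v` has a representative that is continuous on `[0,1]`, vanishes at the boundary,
is differentiable on `(0,1)` and whose derivative is an antiderivative of `w`. -/
def InDomainA (v w : Hsp) : Prop :=
  ∃ vt : ℝ → ℝ, ContinuousOn vt (Icc 0 1) ∧ vt 0 = 0 ∧ vt 1 = 0 ∧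
    (∀ᵐ x ∂μ01, vt x = v x) ∧
    ∃ g : ℝ → ℝ,
      (∀ x ∈ Ioo (0:ℝ) 1, HasDerivAt vt (g x) x) ∧
      ∀ x ∈ Ioo (0:ℝ) 1, ∀ y ∈ Ioo (0:ℝ) 1, g x - g y = ∫ z in y..x, w z

/-- A strong solution of the inclusion on `[τ,∞)`, with explicit data:
`r` is the `L²`-selection, `u'` the time derivative, `uxx` the second spatial derivative. -/
structure IsStrongSolutionWith (b ω : ℝ → ℝ) (τ : ℝ) (u r u' uxx : ℝ → Hsp) : Prop where
  cont : ContinuousOn u (Ici τ)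
  rmem : ∀ T, τ < T → MemLp r 2 (volume.restrict (Ioo τ T))
  sel : ∀ᵐ t ∂(volume.restrict (Ioi τ)), ∀ᵐ x ∂μ01,
      ∃ h ∈ heaviside (u t x), r t x = b t * h + ω t * u t x
  dom : ∀ᵐ t ∂(volume.restrict (Ioi τ)), InDomainA (u t) (uxx t)
  eq : ∀ᵐ t ∂(volume.restrict (Ioi τ)), u' t = r t + uxx t
  fund : ∀ T1 T2 : ℝ, τ < T1 → T1 < T2 →
      IntervalIntegrable u' volume T1 T2 ∧
      ∀ t ∈ Icc T1 T2, u t = u T1 + ∫ s in T1..t, u' s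

/-- A strong solution of the inclusion on `[τ,∞)`. -/
def IsStrongSolution (b ω : ℝ → ℝ) (τ : ℝ) (u : ℝ → Hsp) : Prop :=
  ∃ r u' uxx, IsStrongSolutionWith b ω τ u r u' uxx

/-- The solution is non-negative on `[τ,∞)`. -/
def NonnegOn (u : ℝ → Hsp) (τ : ℝ) : Prop :=
  ∀ t, τ ≤ t → ∀ᵐ x ∂μ01, 0 ≤ u t x

/-- `v` is positive: it has a continuous representative on `[0,1]`
which is strictly positive on `(0,1)`. -/
def IsPositive (v : Hsp) : Prop :=
  ∃ vt : ℝ → ℝ, ContinuousOn vt (Icc 0 1) ∧ (∀ᵐ x ∂μ01, vt x = v x) ∧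
    ∀ x ∈ Ioo (0:ℝ) 1, 0 < vt x


/-- `f'` is the weak derivative of `f : ℝ → E` on the open set `S ⊆ ℝ`. -/
def HasWeakDerivOn {E : Type*} [NormedAddCommGroup E] [NormedSpace ℝ E]
    (f f' : ℝ → E) (S : Set ℝ) : Prop :=
  ∀ φ : ℝ → ℝ, ContDiff ℝ (⊤ : ℕ∞) φ → HasCompactSupport φ → tsupport φ ⊆ S →
    ∫ t in S, deriv φ t • f t = - ∫ t in S, φ t • f' t

/-- `f ∈ W^{k,2}_loc(ℝ)`. -/
def Wkloc (k : ℕ) (f : ℝ → ℝ) : Prop :=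
  ∀ T1 T2 : ℝ, T1 < T2 →
    ∃ D : ℕ → ℝ → ℝ, D 0 = f ∧
      (∀ j < k, HasWeakDerivOn (D j) (D (j + 1)) (Ioo T1 T2)) ∧
      ∀ j ≤ k, MemLp (D j) 2 (volume.restrict (Ioo T1 T2))

/-- `w` is the spatial weak derivative of `v` on `(0,1)`. -/
def IsSpatialWeakDeriv (v w : Hsp) : Prop :=
  ∀ φ : ℝ → ℝ, ContDiff ℝ (⊤ : ℕ∞) φ → HasCompactSupport φ → tsupport φ ⊆ Ioo (0:ℝ) 1 →
    ∫ x in Ioo (0:ℝ) 1, deriv φ x * v x = - ∫ x in Ioo (0:ℝ) 1, φ x * w x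

/-- `v : s → H` is of class `C^m` (in the `L²(0,1)` norm). -/
def TimeCk (m : ℕ) (v : ℝ → Hsp) (s : Set ℝ) : Prop :=
  ∃ Dt : ℕ → ℝ → Hsp, Dt 0 = v ∧
    (∀ j < m, ∀ t ∈ s, HasDerivAt (Dt j) (Dt (j + 1) t) t) ∧
    ∀ j ≤ m, ContinuousOn (Dt j) s

/-- `v : s → V = H¹₀(0,1)` is of class `C^m`: both `v` and its spatial derivative
are `C^m` into `L²(0,1)`. -/
def CkIntoV (m : ℕ) (v : ℝ → Hsp) (s : Set ℝ) : Prop :=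
  TimeCk m v s ∧
  ∃ d1 : ℝ → Hsp, (∀ t ∈ s, IsSpatialWeakDeriv (v t) (d1 t)) ∧ TimeCk m d1 s

/-- `v : s → H^m(0,1)` is of class `C^j`: all spatial weak derivatives up to
order `m` exist and are `C^j` in time into `L²(0,1)`. -/
def CjIntoHm (j m : ℕ) (v : ℝ → Hsp) (s : Set ℝ) : Prop :=
  ∃ Dx : ℕ → ℝ → Hsp, Dx 0 = v ∧
    (∀ i < m, ∀ t ∈ s, IsSpatialWeakDeriv (Dx i t) (Dx (i + 1) t)) ∧
    ∀ i ≤ m, TimeCk j (Dx i) s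

/-- `d^m v/dt^m ∈ L²_loc(τ+ε,∞;H)` for every `ε > 0`. -/
def HasL2locTimeDerivChain (m : ℕ) (v : ℝ → Hsp) (τ : ℝ) : Prop :=
  ∃ Dt : ℕ → ℝ → Hsp, Dt 0 = v ∧
    ∀ ε > (0:ℝ), ∀ T, τ + ε < T →
      (∀ j < m, HasWeakDerivOn (Dt j) (Dt (j + 1)) (Ioo (τ + ε) T)) ∧
      MemLp (Dt m) 2 (volume.restrict (Ioo (τ + ε) T))

/-- The partial derivatives `u_t`, `u_xx` exist in the classical sense
and are continuous on `(τ,∞)×[0,1]`. -/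
def ClassicalUtUxx (τ : ℝ) (u : ℝ → Hsp) : Prop :=
  ∃ F Fx ut uxx : ℝ → ℝ → ℝ,
    (∀ t ∈ Ioi τ, ∀ᵐ x ∂μ01, F t x = u t x) ∧
    (∀ t ∈ Ioi τ, ∀ x ∈ Icc (0:ℝ) 1, HasDerivAt (fun s => F s x) (ut t x) t) ∧
    (∀ t ∈ Ioi τ, ∀ x ∈ Icc (0:ℝ) 1, HasDerivWithinAt (F t) (Fx t x) (Icc 0 1) x) ∧
    (∀ t ∈ Ioi τ, ∀ x ∈ Icc (0:ℝ) 1, HasDerivWithinAt (Fx t) (uxx t x) (Icc 0 1) x) ∧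
    ContinuousOn (fun p : ℝ × ℝ => ut p.1 p.2) (Ioi τ ×ˢ Icc 0 1) ∧
    ContinuousOn (fun p : ℝ × ℝ => uxx p.1 p.2) (Ioi τ ×ˢ Icc 0 1)

def IsPrim {E : Type*} [NormedAddCommGroup E] [NormedSpace ℝ E] (f f' : ℝ → E) (S : Set ℝ) : Prop :=
  ∀ a ∈ S, ∀ c ∈ S, IntervalIntegrable f' volume a c ∧ f c - f a = ∫ s in a..c, f' s

section
variable {E : Type*} [NormedAddCommGroup E] [NormedSpace ℝ E]
  {G : Type*} [NormedAddCommGroup G] [NormedSpace ℝ G]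

theorem IsPrim.mono {f f' : ℝ → E} {S T : Set ℝ} (h : IsPrim f f' S) (hT : T ⊆ S) : IsPrim f f' T :=
  fun a ha c hc => h a (hT ha) c (hT hc)

theorem IsPrim.continuousOn_uIcc {f f' : ℝ → E} {S : Set ℝ} (h : IsPrim f f' S)
    (hS : S.OrdConnected) {a c : ℝ} (ha : a ∈ S) (hc : c ∈ S) : ContinuousOn f (uIcc a c) := by
  have h1 := intervalIntegral.continuousOn_primitive_interval' (h a ha c hc).1 left_mem_uIcc
  refine (h1.const_add (f a)).congr fun x hx => ?_
  have := (h a ha x (hS.uIcc_subset ha hc hx)).2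
  simp only [← this]; abel

theorem IsPrim.continuousOn {f f' : ℝ → E} {S : Set ℝ} (h : IsPrim f f' S)
    (hS : S.OrdConnected) (hO : IsOpen S) : ContinuousOn f S := by
  intro x hx
  obtain ⟨ε, hε, hb⟩ := Metric.isOpen_iff.1 hO x hx
  have h1 : x - ε/2 ∈ S := hb (by simp [Real.ball_eq_Ioo]; constructor <;> linarith)
  have h2 : x + ε/2 ∈ S := hb (by simp [Real.ball_eq_Ioo]; constructor <;> linarith)
  have := (h.continuousOn_uIcc hS h1 h2)
  rw [uIcc_of_le (by linarith)] at this
  exact (this.continuousAt (Icc_mem_nhds (by linarith) (by linarith))).continuousWithinAt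

theorem IsPrim.add {f f' g g' : ℝ → E} {S : Set ℝ} (h : IsPrim f f' S) (h2 : IsPrim g g' S) :
    IsPrim (fun t => f t + g t) (fun t => f' t + g' t) S := fun a ha c hc => by
  obtain ⟨i1, e1⟩ := h a ha c hc
  obtain ⟨i2, e2⟩ := h2 a ha c hc
  refine ⟨i1.add i2, ?_⟩
  rw [intervalIntegral.integral_add i1 i2, ← e1, ← e2]; beta_reduce; abel

theorem IsPrim.clm [CompleteSpace E] [CompleteSpace G] {f f' : ℝ → E} {S : Set ℝ} (h : IsPrim f f' S) (L : E →L[ℝ] G) :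
    IsPrim (fun t => L (f t)) (fun t => L (f' t)) S := fun a ha c hc => by
  obtain ⟨i1, e1⟩ := h a ha c hc
  refine ⟨⟨L.integrable_comp i1.1, L.integrable_comp i1.2⟩, ?_⟩
  rw [L.intervalIntegral_comp_comm i1, ← e1, map_sub]

theorem IsPrim.congr_ae {f f' g' : ℝ → E} {S : Set ℝ} (h : IsPrim f f' S) 
    (hS : S.OrdConnected) (hg : ∀ᵐ t, t ∈ S → f' t = g' t) : IsPrim f g' S := fun a ha c hc => by
  obtain ⟨i1, e1⟩ := h a ha c hc
  have : ∀ᵐ t, t ∈ uIoc a c → f' t = g' t := by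
    filter_upwards [hg] with t ht h
    exact ht (hS.uIcc_subset ha hc (uIoc_subset_uIcc h))
  refine ⟨i1.congr_ae ?_, ?_⟩
  · exact (ae_restrict_iff' measurableSet_uIoc).2 this
  · rw [e1]; exact intervalIntegral.integral_congr_ae this

theorem IsPrim.congr_left {f f' g : ℝ → E} {S : Set ℝ} (h : IsPrim f f' S)
    (hg : ∀ t ∈ S, f t = g t) : IsPrim g f' S := fun a ha c hc => by
  rw [← hg a ha, ← hg c hc]; exact h a ha c hc

theorem IsPrim.of_hasDerivAt [CompleteSpace E] {f f' : ℝ → E} {S : Set ℝ} (hS : S.OrdConnected)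
    (h : ∀ t ∈ S, HasDerivAt f (f' t) t) (hc : ContinuousOn f' S) : IsPrim f f' S :=
  fun a ha c hc' => by
  have hs := hS.uIcc_subset ha hc'
  have hi : IntervalIntegrable f' volume a c := (hc.mono hs).intervalIntegrable
  exact ⟨hi, (intervalIntegral.integral_eq_sub_of_hasDerivAt (fun x hx => h x (hs hx)) hi).symm⟩

theorem IsPrim.hasDerivAt [CompleteSpace E] {f f' : ℝ → E} {S : Set ℝ} (h : IsPrim f f' S)
    (hO : IsOpen S) (hc : ContinuousOn f' S) {t : ℝ} (ht : t ∈ S) :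
    HasDerivAt f (f' t) t := by
  have h1 : HasDerivAt (fun x => ∫ s in t..x, f' s) (f' t) t := by
    refine intervalIntegral.integral_hasDerivAt_right (by simp) ?_ (hc.continuousAt (hO.mem_nhds ht))
    exact ContinuousOn.stronglyMeasurableAtFilter hO hc t ht
  refine (h1.const_add (f t)).congr_of_eventuallyEq ?_
  filter_upwards [hO.mem_nhds ht] with x hx
  rw [← (h t ht x hx).2]; abel

theorem IsPrim.ae_hasDerivAt [CompleteSpace E] {f f' : ℝ → E} {S : Set ℝ} (h : IsPrim f f' S)
    (hO : IsOpen S) (hS : S.OrdConnected) : ∀ᵐ t, t ∈ S → HasDerivAt f (f' t) t := by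
  have key : ∀ p ∈ S, ∀ q ∈ S, ∀ᵐ t, t ∈ Ioo p q → HasDerivAt f (f' t) t := by
    intro p hp q hq
    rcases le_or_gt q p with hpq | hpq
    · simp [Ioo_eq_empty (not_lt.2 hpq)]
    filter_upwards [(h p hp q hq).1.ae_hasDerivAt_integral] with t ht hm
    have hmem : t ∈ uIcc p q := by rw [uIcc_of_le hpq.le]; exact Ioo_subset_Icc_self hm
    have h1 := ht hmem p left_mem_uIcc
    refine (h1.const_add (f p)).congr_of_eventuallyEq ?_
    filter_upwards [Ioo_mem_nhds hm.1 hm.2] with x hx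
    have : x ∈ S := hS.out hp hq (Ioo_subset_Icc_self hx)
    rw [← (h p hp x this).2]; abel
  have : ∀ᵐ t, ∀ p q : ℚ, (p:ℝ) ∈ S → (q:ℝ) ∈ S → t ∈ Ioo (p:ℝ) q → HasDerivAt f (f' t) t := by
    rw [ae_all_iff]; intro p; rw [ae_all_iff]; intro q
    by_cases hp : (p:ℝ) ∈ S
    · by_cases hq : (q:ℝ) ∈ S
      · filter_upwards [key p hp q hq] with t ht _ _ hm using ht hm
      · simp [hq]
    · simp [hp]
  filter_upwards [this] with t ht hm
  obtain ⟨ε, hε, hb⟩ := Metric.isOpen_iff.1 hO t hm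
  rw [Real.ball_eq_Ioo] at hb
  obtain ⟨p, hp1, hp2⟩ := exists_rat_btwn (show t - ε < t by linarith)
  obtain ⟨q, hq1, hq2⟩ := exists_rat_btwn (show t < t + ε by linarith)
  exact ht p q (hb ⟨hp1, by linarith⟩) (hb ⟨by linarith, hq2⟩) ⟨hp2, hq1⟩

theorem IsPrim.mul_real {f f' g g' : ℝ → ℝ} {S : Set ℝ} (hS : S.OrdConnected)
    (hf : IsPrim f f' S) (hg : IsPrim g g' S) :
    IsPrim (fun t => f t * g t) (fun t => f' t * g t + f t * g' t) S := fun a ha c hc => by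
  have hs := hS.uIcc_subset ha hc
  have cf := hf.continuousOn_uIcc hS ha hc
  have cg := hg.continuousOn_uIcc hS ha hc
  have if' := (hf a ha c hc).1
  have ig' := (hg a ha c hc).1
  refine ⟨(if'.mul_continuousOn cg).add (ig'.continuousOn_mul cf), ?_⟩
  set F : ℝ → ℝ := fun x => ∫ s in a..x, f' s
  set G : ℝ → ℝ := fun x => ∫ s in a..x, g' s
  have aF : AbsolutelyContinuousOnInterval F a c :=
    if'.absolutelyContinuousOnInterval_intervalIntegral left_mem_uIcc
  have aG : AbsolutelyContinuousOnInterval G a c :=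
    ig'.absolutelyContinuousOnInterval_intervalIntegral left_mem_uIcc
  have hFG := aF.integral_deriv_mul_eq_sub aG
  have eF : ∀ᵐ x, x ∈ uIoc a c → deriv F x = f' x := by
    filter_upwards [if'.ae_hasDerivAt_integral] with x hx hm
    exact (hx (uIoc_subset_uIcc hm) a left_mem_uIcc).deriv
  have eG : ∀ᵐ x, x ∈ uIoc a c → deriv G x = g' x := by
    filter_upwards [ig'.ae_hasDerivAt_integral] with x hx hm
    exact (hx (uIoc_subset_uIcc hm) a left_mem_uIcc).deriv
  have e1 : ∫ x in a..c, (deriv F x * G x + F x * deriv G x)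
      = ∫ x in a..c, ((f' x * g x + f x * g' x) - (f' x * g a + f a * g' x)) := by
    apply intervalIntegral.integral_congr_ae
    filter_upwards [eF, eG] with x h1 h2 hm
    have hx := hs (uIoc_subset_uIcc hm)
    have : F x = f x - f a := ((hf a ha x hx).2).symm
    have h4 : G x = g x - g a := ((hg a ha x hx).2).symm
    rw [h1 hm, h2 hm, this, h4]; ring
  rw [e1, intervalIntegral.integral_sub, intervalIntegral.integral_add (if'.mul_const _) (ig'.const_mul _),
    intervalIntegral.integral_mul_const, intervalIntegral.integral_const_mul,
    ← (hf a ha c hc).2, ← (hg a ha c hc).2] at hFG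
  · have : F c = f c - f a := ((hf a ha c hc).2).symm
    have h4 : G c = g c - g a := ((hg a ha c hc).2).symm
    have h5 : F a = 0 := by simp [F]
    rw [this, h4, h5] at hFG
    linarith
  · exact (if'.mul_continuousOn cg).add (ig'.continuousOn_mul cf)
  · exact (if'.mul_const _).add (ig'.const_mul _)

theorem IsPrim.smul [CompleteSpace E] {f f' : ℝ → ℝ} {g g' : ℝ → E} {S : Set ℝ} (hS : S.OrdConnected)
    (hf : IsPrim f f' S) (hg : IsPrim g g' S) :
    IsPrim (fun t => f t • g t) (fun t => f' t • g t + f t • g' t) S := fun a ha c hc => by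
  have cf := hf.continuousOn_uIcc hS ha hc
  have cg := hg.continuousOn_uIcc hS ha hc
  have if' := (hf a ha c hc).1
  have ig' := (hg a ha c hc).1
  have hI : IntervalIntegrable (fun t => f' t • g t + f t • g' t) volume a c :=
    (if'.smul_continuousOn cg).add (ig'.continuousOn_smul cf)
  refine ⟨hI, ?_⟩
  rw [SeparatingDual.eq_iff_forall_dual_eq (R := ℝ)]
  intro L
  rw [← L.intervalIntegral_comp_comm hI]
  have := ((hf.mul_real hS (hg.clm L)) a ha c hc).2
  simpa using this
end

def L2loc {E : Type*} [NormedAddCommGroup E] (τ : ℝ) (f : ℝ → E) : Prop :=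
  ∀ a c, τ < a → MemLp f 2 (volume.restrict (Ioc a c))

def Rg {E : Type*} [NormedAddCommGroup E] [NormedSpace ℝ E] (τ : ℝ) : ℕ → (ℝ → E) → Prop
  | 0, f => L2loc τ f
  | m + 1, f => ∃ f', Rg τ m f' ∧ IsPrim f f' (Ioi τ)

section
variable {E : Type*} [NormedAddCommGroup E] [NormedSpace ℝ E]
  {G : Type*} [NormedAddCommGroup G] [NormedSpace ℝ G] {τ : ℝ}

theorem L2loc_of_continuousOn {f : ℝ → E} (h : ContinuousOn f (Ioi τ)) : L2loc τ f := by
  intro a c ha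
  have h1 : ContinuousOn f (Icc a c) := h.mono fun x hx => lt_of_lt_of_le ha hx.1
  have hm : MemLp f 2 (volume.restrict (Icc a c)) := by
    obtain ⟨C, hC⟩ := isCompact_Icc.exists_bound_of_continuousOn h1
    refine MemLp.of_bound (h1.aestronglyMeasurable_of_isCompact isCompact_Icc measurableSet_Icc) C ?_
    exact (ae_restrict_iff' measurableSet_Icc).2 (Filter.Eventually.of_forall hC)
  exact hm.mono_measure (Measure.restrict_mono Ioc_subset_Icc_self le_rfl)

theorem L2loc.intervalIntegrable {f : ℝ → E} (h : L2loc τ f) {a c : ℝ} (ha : τ < a) (hc : τ < c) :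
    IntervalIntegrable f volume a c :=
  ⟨(h a c ha).integrable (by norm_num), (h c a hc).integrable (by norm_num)⟩

theorem Rg.continuousOn {m : ℕ} {f : ℝ → E} (h : Rg τ (m+1) f) : ContinuousOn f (Ioi τ) := by
  obtain ⟨f', _, h2⟩ := h
  exact h2.continuousOn ordConnected_Ioi isOpen_Ioi

theorem Rg.pred {m : ℕ} {f : ℝ → E} (h : Rg τ (m+1) f) : Rg τ m f := by
  induction m generalizing f with
  | zero => exact L2loc_of_continuousOn h.continuousOn
  | succ m ih =>
    obtain ⟨f', h1, h2⟩ := h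
    exact ⟨f', ih h1, h2⟩

theorem Rg.mono {m n : ℕ} {f : ℝ → E} (h : Rg τ n f) (hm : m ≤ n) : Rg τ m f := by
  induction hm with
  | refl => exact h
  | step _ ih => exact ih h.pred

theorem Rg.contDiffOn [CompleteSpace E] {m : ℕ} {f : ℝ → E} (h : Rg τ (m+1) f) :
    ContDiffOn ℝ m f (Ioi τ) := by
  induction m generalizing f with
  | zero => simpa using h.continuousOn
  | succ m ih =>
    obtain ⟨f', h1, h2⟩ := h
    have hd : ∀ t ∈ Ioi τ, HasDerivAt f (f' t) t := fun t ht => h2.hasDerivAt isOpen_Ioi h1.continuousOn ht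
    rw [Nat.cast_succ, contDiffOn_succ_iff_deriv_of_isOpen isOpen_Ioi]
    refine ⟨fun t ht => (hd t ht).differentiableAt.differentiableWithinAt, by simp, ?_⟩
    exact (ih h1).congr fun t ht => (hd t ht).deriv

theorem Rg.add {m : ℕ} {f g : ℝ → E} (h : Rg τ m f) (h2 : Rg τ m g) : Rg τ m (fun t => f t + g t) := by
  induction m generalizing f g with
  | zero => exact fun a c ha => (h a c ha).add (h2 a c ha)
  | succ m ih =>
    obtain ⟨f', h1, h3⟩ := h
    obtain ⟨g', h1', h3'⟩ := h2
    exact ⟨_, ih h1 h1', h3.add h3'⟩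

theorem Rg.clm [CompleteSpace E] [CompleteSpace G] {m : ℕ} {f : ℝ → E} (h : Rg τ m f) (L : E →L[ℝ] G) :
    Rg τ m (fun t => L (f t)) := by
  induction m generalizing f with
  | zero => exact fun a c ha => L.comp_memLp' (h a c ha)
  | succ m ih =>
    obtain ⟨f', h1, h3⟩ := h
    exact ⟨_, ih h1, h3.clm L⟩

theorem L2loc.cont_smul {f : ℝ → ℝ} {g : ℝ → E} (hf : ContinuousOn f (Ioi τ)) (hg : L2loc τ g) :
    L2loc τ (fun t => f t • g t) := by
  intro a c ha
  have h1 : ContinuousOn f (Icc a c) := hf.mono fun x hx => lt_of_lt_of_le ha hx.1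
  obtain ⟨C, hC⟩ := isCompact_Icc.exists_bound_of_continuousOn h1
  have hm : MemLp f ⊤ (volume.restrict (Ioc a c)) := by
    refine memLp_top_of_bound ?_ C ?_
    · exact (h1.mono Ioc_subset_Icc_self).aestronglyMeasurable measurableSet_Ioc
    · exact (ae_restrict_iff' measurableSet_Ioc).2 (Filter.Eventually.of_forall fun x hx => hC x (Ioc_subset_Icc_self hx))
  exact (hg a c ha).smul hm

theorem L2loc.smul_cont {f : ℝ → ℝ} {g : ℝ → E} (hf : L2loc τ f) (hg : ContinuousOn g (Ioi τ)) :
    L2loc τ (fun t => f t • g t) := by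
  intro a c ha
  have h1 : ContinuousOn g (Icc a c) := hg.mono fun x hx => lt_of_lt_of_le ha hx.1
  obtain ⟨C, hC⟩ := isCompact_Icc.exists_bound_of_continuousOn h1
  have hm : MemLp g ⊤ (volume.restrict (Ioc a c)) := by
    refine memLp_top_of_bound ?_ C ?_
    · exact (h1.mono Ioc_subset_Icc_self).aestronglyMeasurable measurableSet_Ioc
    · exact (ae_restrict_iff' measurableSet_Ioc).2 (Filter.Eventually.of_forall fun x hx => hC x (Ioc_subset_Icc_self hx))
  exact hm.smul (hf a c ha)

theorem Rg.smul_aux [CompleteSpace E] {m : ℕ} : ∀ {f : ℝ → ℝ} {g : ℝ → E},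
    (Rg τ (m+1) f → Rg τ m g → Rg τ m (fun t => f t • g t)) ∧
    (Rg τ m f → Rg τ (m+1) g → Rg τ m (fun t => f t • g t)) := by
  induction m with
  | zero => exact fun {f g} => ⟨fun h1 h2 => L2loc.cont_smul h1.continuousOn h2,
      fun h1 h2 => L2loc.smul_cont h1 h2.continuousOn⟩
  | succ m ih =>
    have key : ∀ {f : ℝ → ℝ} {g : ℝ → E}, Rg τ (m+1) f → Rg τ (m+1) g → Rg τ (m+1) (fun t => f t • g t) := by
      intro f g hf hg
      obtain ⟨f', h1, h3⟩ := id hf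
      obtain ⟨g', h1', h3'⟩ := id hg
      exact ⟨_, (ih.2 h1 hg).add (ih.1 hf h1'), h3.smul ordConnected_Ioi h3'⟩
    exact fun {f g} => ⟨fun h1 h2 => key h1.pred h2, fun h1 h2 => key h1 h2.pred⟩

theorem Rg.smul [CompleteSpace E] {m : ℕ} {f : ℝ → ℝ} {g : ℝ → E} (hf : Rg τ (m+1) f) (hg : Rg τ (m+1) g) :
    Rg τ (m+1) (fun t => f t • g t) := by
  obtain ⟨f', h1, h3⟩ := id hf
  obtain ⟨g', h1', h3'⟩ := id hg
  exact ⟨_, (Rg.smul_aux.2 h1 hg).add (Rg.smul_aux.1 hf h1'), h3.smul ordConnected_Ioi h3'⟩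

theorem Rg.congr {m : ℕ} {f g : ℝ → E} (h : Rg τ (m+1) f) (he : ∀ t ∈ Ioi τ, f t = g t) : Rg τ (m+1) g := by
  obtain ⟨f', h1, h3⟩ := h
  exact ⟨f', h1, h3.congr_left he⟩

/-- exponential of a primitive -/
theorem Rg.exp {m : ℕ} {w : ℝ → ℝ} (hw : Rg τ (m+1) w) (e : ℝ → ℝ)
    (he : ∀ t ∈ Ioi τ, HasDerivAt e (w t * e t) t) : Rg τ (m+2) e := by
  have hc : ContinuousOn e (Ioi τ) := fun t ht => (he t ht).continuousAt.continuousWithinAt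
  have hp : IsPrim e (fun t => w t * e t) (Ioi τ) :=
    IsPrim.of_hasDerivAt ordConnected_Ioi he (hw.continuousOn.mul hc)
  have : ∀ j, j ≤ m + 1 → Rg τ (j+1) e := by
    intro j
    induction j with
    | zero => exact fun _ => ⟨_, L2loc_of_continuousOn (hw.continuousOn.mul hc), hp⟩
    | succ j ih =>
      intro hj
      exact ⟨_, (hw.mono hj).smul (ih (by omega)), hp⟩
  exact this (m+1) le_rfl

theorem hasWeakDerivOn_of_isPrim [CompleteSpace E] {f f' : ℝ → E} {S : Set ℝ} (hS : S.OrdConnected) (hO : IsOpen S)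
    (h : IsPrim f f' S) : HasWeakDerivOn f f' S := by
  intro φ hφ hcs hsub
  have hφd : ∀ t, HasDerivAt φ (deriv φ t) t := fun t => (hφ.differentiable (by simp)).differentiableAt.hasDerivAt
  have hφc : Continuous (deriv φ) := hφ.continuous_deriv (by simp)
  have hpφ : IsPrim φ (deriv φ) S := IsPrim.of_hasDerivAt hS (fun t _ => hφd t) hφc.continuousOn
  have hcont := h.continuousOn hS hO
  rcases (tsupport φ).eq_empty_or_nonempty with he | hne
  · have : φ = 0 := by rwa [tsupport_eq_empty_iff] at he
    subst this; simp
  have hK : IsCompact (tsupport φ) := hcs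
  obtain ⟨p, hp⟩ := hK.exists_isLeast hne
  obtain ⟨q, hq⟩ := hK.exists_isGreatest hne
  obtain ⟨ε, hε, hb1⟩ := Metric.isOpen_iff.1 hO p (hsub hp.1)
  obtain ⟨δ, hδ, hb2⟩ := Metric.isOpen_iff.1 hO q (hsub hq.1)
  have ha : p - ε/2 ∈ S := hb1 (by simp [Real.ball_eq_Ioo]; constructor <;> linarith)
  have hc : q + δ/2 ∈ S := hb2 (by simp [Real.ball_eq_Ioo]; constructor <;> linarith)
  have hpq : p ≤ q := hp.2 hq.1
  set a := p - ε/2 with hadef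
  set c := q + δ/2 with hcdef
  have hac : a ≤ c := by linarith
  have hout : ∀ t, t ∉ Ioc a c → t ∉ tsupport φ := by
    intro t ht hm
    exact ht ⟨by linarith [hp.2 hm], by linarith [hq.2 hm]⟩
  have hIoc : Ioc a c ⊆ S := fun t ht => hS.out ha hc (Ioc_subset_Icc_self ht)
  have z1 : ∀ t, t ∉ tsupport φ → φ t = 0 := fun t ht => image_eq_zero_of_notMem_tsupport ht
  have z2 : ∀ t, t ∉ tsupport φ → deriv φ t = 0 := fun t ht =>
    image_eq_zero_of_notMem_tsupport (fun hm => ht (tsupport_deriv_subset hm))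
  have e1 : ∫ t in S, deriv φ t • f t = ∫ t in a..c, deriv φ t • f t := by
    rw [intervalIntegral.integral_of_le hac]
    apply setIntegral_eq_of_subset_of_forall_sdiff_eq_zero hO.measurableSet hIoc
    intro t ht
    rw [z2 t (hout t ht.2), zero_smul]
  have e2 : ∫ t in S, φ t • f' t = ∫ t in a..c, φ t • f' t := by
    rw [intervalIntegral.integral_of_le hac]
    apply setIntegral_eq_of_subset_of_forall_sdiff_eq_zero hO.measurableSet hIoc
    intro t ht
    rw [z1 t (hout t ht.2), zero_smul]
  have hpr := (hpφ.smul hS h a ha c hc).2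
  have za : φ a = 0 := z1 a (hout a (by simp))
  have zc : φ c = 0 := z1 c (fun hm => by linarith [hq.2 hm])
  beta_reduce at hpr
  rw [za, zc, intervalIntegral.integral_add] at hpr
  · rw [e1, e2]
    simp only [zero_smul, sub_zero] at hpr
    exact eq_neg_of_add_eq_zero_left hpr.symm
  · exact (hφc.continuousOn.smul (hcont.mono (hS.uIcc_subset ha hc))).intervalIntegrable
  · exact (h a ha c hc).1.continuousOn_smul hφ.continuous.continuousOn

/-- the L² chain -/
theorem Rg.chain [CompleteSpace E] {m : ℕ} {f : ℝ → E} (h : Rg τ m f) :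
    ∃ D : ℕ → ℝ → E, D 0 = f ∧ (∀ j < m, IsPrim (D j) (D (j+1)) (Ioi τ)) ∧ L2loc τ (D m)
      ∧ ∀ j ≤ m, Rg τ (m - j) (D j) := by
  induction m generalizing f with
  | zero => exact ⟨fun _ => f, rfl, by simp, h, fun j hj => by simpa [Nat.le_zero.1 hj] using h⟩
  | succ m ih =>
    obtain ⟨f', h1, h2⟩ := id h
    obtain ⟨D, hD0, hD1, hD2, hD3⟩ := ih h1
    refine ⟨fun j => Nat.casesOn j f D, rfl, ?_, hD2, ?_⟩
    · intro j hj
      cases j with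
      | zero => simpa [hD0] using h2
      | succ j => exact hD1 j (by omega)
    · intro j hj
      cases j with
      | zero => exact h
      | succ j =>
        have := hD3 j (by omega)
        simpa using this

theorem Rg.l2chain {m : ℕ} {v : ℝ → Hsp} (h : Rg τ m v) : HasL2locTimeDerivChain m v τ := by
  obtain ⟨D, h0, h1, h2, _⟩ := h.chain
  refine ⟨D, h0, fun ε hε T hT => ⟨fun j hj => ?_, ?_⟩⟩
  · exact hasWeakDerivOn_of_isPrim ordConnected_Ioo isOpen_Ioo
      ((h1 j hj).mono fun t ht => by simp at ht ⊢; linarith [ht.1])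
  · exact (h2 (τ+ε) T (by linarith)).mono_measure (Measure.restrict_mono Ioo_subset_Ioc_self le_rfl)

theorem timeCk_of_contDiffOn {m : ℕ} {v : ℝ → Hsp} (h : ContDiffOn ℝ m v (Ioi τ)) : TimeCk m v (Ioi τ) := by
  refine ⟨fun j => iteratedDeriv j v, iteratedDeriv_zero, fun j hj t ht => ?_, fun j hj t ht => ?_⟩
  · have hc : ContDiffAt ℝ m v t := h.contDiffAt (Ioi_mem_nhds ht)
    beta_reduce
    rw [iteratedDeriv_succ]
    have h1 := h.differentiableOn_iteratedDerivWithin (m := j) (by exact_mod_cast hj) isOpen_Ioi.uniqueDiffOn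
    have h2 : DifferentiableOn ℝ (iteratedDeriv j v) (Ioi τ) :=
      h1.congr fun t ht => (iteratedDerivWithin_of_isOpen isOpen_Ioi ht).symm
    exact (h2.differentiableAt (Ioi_mem_nhds ht)).hasDerivAt
  · have hc := h.continuousOn_iteratedDerivWithin (m := j) (by exact_mod_cast hj) isOpen_Ioi.uniqueDiffOn
    exact (hc.congr fun t ht => (iteratedDerivWithin_of_isOpen isOpen_Ioi ht).symm) t ht

theorem contDiffOn_of_chain {m : ℕ} {D : ℕ → ℝ → E} (h : ∀ j < m, ∀ t ∈ Ioi τ, HasDerivAt (D j) (D (j+1) t) t)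
    (hc : ContinuousOn (D m) (Ioi τ)) : ContDiffOn ℝ m (D 0) (Ioi τ) := by
  induction m generalizing D with
  | zero => simpa using hc
  | succ m ih =>
    rw [Nat.cast_succ, contDiffOn_succ_iff_deriv_of_isOpen isOpen_Ioi]
    refine ⟨fun t ht => (h 0 (by omega) t ht).differentiableAt.differentiableWithinAt, by simp, ?_⟩
    have := ih (D := fun j => D (j+1)) (fun j hj t ht => h (j+1) (by omega) t ht) hc
    exact this.congr fun t ht => (h 0 (by omega) t ht).deriv
end

theorem exists_test_antideriv {χ : ℝ → ℝ} {T1 T2 : ℝ} (h1 : ContDiff ℝ (⊤ : ℕ∞) χ)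
    (h2 : HasCompactSupport χ) (h3 : tsupport χ ⊆ Ioo T1 T2) (h4 : ∫ t, χ t = 0) :
    ∃ Φ : ℝ → ℝ, ContDiff ℝ (⊤ : ℕ∞) Φ ∧ HasCompactSupport Φ ∧ tsupport Φ ⊆ Ioo T1 T2 ∧ deriv Φ = χ := by
  rcases (tsupport χ).eq_empty_or_nonempty with he | hne
  · have : χ = 0 := by rwa [tsupport_eq_empty_iff] at he
    subst this
    refine ⟨0, contDiff_const, HasCompactSupport.zero, by simp, ?_⟩
    ext t; simp
  have hK : IsCompact (tsupport χ) := h2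
  obtain ⟨p, hp⟩ := hK.exists_isLeast hne
  obtain ⟨q, hq⟩ := hK.exists_isGreatest hne
  have hpS := h3 hp.1
  have hqS := h3 hq.1
  have hpq : p ≤ q := hp.2 hq.1
  have z : ∀ t, t ∉ Icc p q → χ t = 0 := fun t ht => image_eq_zero_of_notMem_tsupport
    (fun hm => ht ⟨hp.2 hm, hq.2 hm⟩)
  set Φ : ℝ → ℝ := fun t => ∫ s in T1..t, χ s with hΦ
  have hd : ∀ t, HasDerivAt Φ (χ t) t := fun t =>
    (h1.continuous.integral_hasStrictDerivAt T1 t).hasDerivAt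
  have hder : deriv Φ = χ := funext fun t => (hd t).deriv
  have hsupp : Function.support Φ ⊆ Icc p q := by
    intro t ht
    by_contra hn
    apply ht
    rcases lt_or_ge t p with h | h
    · have : ∫ s in T1..t, χ s = ∫ s in T1..t, (0:ℝ) := by
        apply intervalIntegral.integral_congr
        intro s hs
        apply z
        rintro ⟨hs1, hs2⟩
        have := hs.2
        have h5 := hpS.1
        rcases le_total T1 t with h6 | h6
        · simp [h6] at this; linarith
        · simp [h6] at this; linarith
      simp [hΦ, this]
    · have hqt : q < t := by by_contra hh; exact hn ⟨h, not_lt.1 hh⟩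
      have : ∫ s in T1..t, χ s = ∫ s, χ s := by
        rw [intervalIntegral.integral_of_le (by linarith [hqS.2, hpS.1])]
        apply setIntegral_eq_integral_of_forall_compl_eq_zero
        intro s hs
        apply z
        rintro ⟨hs1, hs2⟩
        exact hs ⟨by linarith [hpS.1], by linarith⟩
      simp [hΦ, this, h4]
  have hts : tsupport Φ ⊆ Icc p q := closure_minimal hsupp isClosed_Icc
  refine ⟨Φ, ?_, ?_, hts.trans fun t ht => ⟨hpS.1.trans_le ht.1, ht.2.trans_lt hqS.2⟩, hder⟩
  · rw [contDiff_infty_iff_deriv]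
    exact ⟨fun t => (hd t).differentiableAt, by rw [hder]; exact h1⟩
  · exact HasCompactSupport.intro isCompact_Icc (fun t ht => by
      by_contra hh; exact ht (hsupp hh))

theorem dBR0 {h : ℝ → ℝ} {T1 T2 : ℝ} (hT : T1 < T2) (hi : IntegrableOn h (Ioo T1 T2))
    (hw : ∀ φ : ℝ → ℝ, ContDiff ℝ (⊤ : ℕ∞) φ → HasCompactSupport φ → tsupport φ ⊆ Ioo T1 T2 →
      ∫ t in Ioo T1 T2, deriv φ t * h t = 0) :
    ∃ c, ∀ᵐ t, t ∈ Ioo T1 T2 → h t = c := by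
  set B : ContDiffBump ((T1+T2)/2) := ⟨(T2-T1)/8, (T2-T1)/4, by linarith, by linarith⟩ with hB
  set φ0 := B.normed volume with hφ0
  have s0 : tsupport φ0 ⊆ Ioo T1 T2 := by
    rw [hφ0, B.tsupport_normed_eq, Real.closedBall_eq_Icc]
    intro t ht
    simp only [hB, mem_Icc, mem_Ioo] at ht ⊢
    constructor <;> linarith [ht.1, ht.2]
  have c0 : ContDiff ℝ (⊤ : ℕ∞) φ0 := B.contDiff_normed
  have k0 : HasCompactSupport φ0 := B.hasCompactSupport_normed
  have i0 : ∫ t, φ0 t = 1 := B.integral_normed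
  have hint : ∀ φ : ℝ → ℝ, Continuous φ → HasCompactSupport φ → IntegrableOn (fun t => φ t * h t) (Ioo T1 T2) := by
    intro φ hc hs
    obtain ⟨C, hC⟩ := hc.bounded_above_of_compact_support hs
    exact hi.bdd_mul hc.aestronglyMeasurable (Filter.Eventually.of_forall hC)
  set c := ∫ t in Ioo T1 T2, φ0 t * h t with hc
  refine ⟨c, ?_⟩
  have key : ∀ᵐ t, t ∈ Ioo T1 T2 → h t - c = 0 := by
    apply isOpen_Ioo.ae_eq_zero_of_integral_contDiff_smul_eq_zero
    · exact (hi.sub (by simp)).locallyIntegrableOn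
    · intro ψ hψ1 hψ2 hψ3
      set κ := ∫ t, ψ t
      have hts : tsupport (fun t => ψ t - κ * φ0 t) ⊆ Ioo T1 T2 := by
        refine (tsupport_sub ψ (fun t => κ * φ0 t)).trans (union_subset hψ3 ?_)
        exact (tsupport_mul_subset_right (f := fun _ => κ) (g := φ0)).trans s0
      obtain ⟨Φ, p1, p2, p3, p4⟩ := exists_test_antideriv (χ := fun t => ψ t - κ * φ0 t)
        (hψ1.sub (contDiff_const.mul c0)) (hψ2.sub k0.mul_left) hts (by
          rw [integral_sub (hψ1.continuous.integrable_of_hasCompactSupport hψ2)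
            ((c0.continuous.integrable_of_hasCompactSupport k0).const_mul _), integral_const_mul, i0]
          simp [κ])
      have := hw Φ p1 p2 p3
      rw [p4] at this
      have e1 : ∫ t, ψ t • (h t - c) = ∫ t in Ioo T1 T2, ψ t • (h t - c) := by
        symm
        apply setIntegral_eq_integral_of_forall_compl_eq_zero
        intro t ht
        rw [image_eq_zero_of_notMem_tsupport (fun hm => ht (hψ3 hm)), zero_smul]
      have e2 : ∫ t in Ioo T1 T2, ψ t = κ := by
        apply setIntegral_eq_integral_of_forall_compl_eq_zero
        intro t ht
        rw [image_eq_zero_of_notMem_tsupport (fun hm => ht (hψ3 hm))]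
      rw [e1]
      simp only [smul_eq_mul, mul_sub]
      rw [integral_sub (hint ψ hψ1.continuous hψ2)
        ((hψ1.continuous.integrable_of_hasCompactSupport hψ2).integrableOn.mul_const c), integral_mul_const, e2]
      simp only [sub_mul, mul_assoc] at this
      rw [integral_sub (hint ψ hψ1.continuous hψ2) ((hint φ0 c0.continuous k0).const_mul _),
        integral_const_mul, ← hc] at this
      exact this
  filter_upwards [key] with t ht hm
  linarith [ht hm]

theorem dBR {f g : ℝ → ℝ} {T1 T2 : ℝ} (hT : T1 < T2) (hf : MemLp f 2 (volume.restrict (Ioo T1 T2)))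
    (hg : MemLp g 2 (volume.restrict (Ioo T1 T2))) (hw : HasWeakDerivOn f g (Ioo T1 T2)) :
    ∃ F : ℝ → ℝ, IsPrim F g (Ioo T1 T2) ∧ ContinuousOn F (Icc T1 T2) ∧ ∀ᵐ t, t ∈ Ioo T1 T2 → f t = F t := by
  have hfi : IntegrableOn f (Ioo T1 T2) := hf.integrable (by norm_num)
  have hgi : IntegrableOn g (Ioo T1 T2) := hg.integrable (by norm_num)
  have hgI : IntervalIntegrable g volume T1 T2 := by
    rw [intervalIntegrable_iff_integrableOn_Ioo_of_le hT.le]; exact hgi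
  set G : ℝ → ℝ := fun t => ∫ s in T1..t, g s with hG
  have hGc : ContinuousOn G (Icc T1 T2) := by
    have := intervalIntegral.continuousOn_primitive_interval' hgI left_mem_uIcc
    rwa [uIcc_of_le hT.le] at this
  have hGp : IsPrim G g (Ioo T1 T2) := by
    intro a ha c hc
    have ia : IntervalIntegrable g volume T1 a := hgI.mono_set (by
      rw [uIcc_of_le hT.le, uIcc_of_le ha.1.le]; exact Icc_subset_Icc_right ha.2.le)
    have ic : IntervalIntegrable g volume T1 c := hgI.mono_set (by
      rw [uIcc_of_le hT.le, uIcc_of_le hc.1.le]; exact Icc_subset_Icc_right hc.2.le)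
    refine ⟨ia.symm.trans ic, ?_⟩
    simp only [hG]
    rw [intervalIntegral.integral_interval_sub_left ic ia]
  have hGi : IntegrableOn G (Ioo T1 T2) := (hGc.integrableOn_Icc).mono_set Ioo_subset_Icc_self
  have hGw := hasWeakDerivOn_of_isPrim ordConnected_Ioo isOpen_Ioo hGp
  obtain ⟨c, hc⟩ := dBR0 hT (hfi.sub hGi) (by
    intro φ h1 h2 h3
    have e1 := hw φ h1 h2 h3
    have e2 := hGw φ h1 h2 h3
    have hint : ∀ h : ℝ → ℝ, IntegrableOn h (Ioo T1 T2) → IntegrableOn (fun t => deriv φ t * h t) (Ioo T1 T2) := by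
      intro h hi
      have hc' : Continuous (deriv φ) := h1.continuous_deriv (by simp)
      obtain ⟨C, hC⟩ := hc'.bounded_above_of_compact_support h2.deriv
      exact hi.bdd_mul hc'.aestronglyMeasurable (Filter.Eventually.of_forall hC)
    simp only [smul_eq_mul] at e1 e2
    simp only [Pi.sub_apply, mul_sub]
    rw [integral_sub (hint f hfi) (hint G hGi), e1, e2]; ring)
  refine ⟨fun t => G t + c, ?_, hGc.add continuousOn_const, ?_⟩
  · intro a ha d hd
    refine ⟨(hGp a ha d hd).1, ?_⟩
    rw [← (hGp a ha d hd).2]; ring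
  · filter_upwards [hc] with t ht hm
    have := ht hm
    simp only [Pi.sub_apply] at this
    linarith

theorem eqOn_of_ae_Ioo {f g : ℝ → ℝ} {T1 T2 : ℝ} (hf : ContinuousOn f (Ioo T1 T2)) (hg : ContinuousOn g (Ioo T1 T2))
    (h : ∀ᵐ t, t ∈ Ioo T1 T2 → f t = g t) : EqOn f g (Ioo T1 T2) :=
  Measure.eqOn_open_of_ae_eq ((ae_restrict_iff' measurableSet_Ioo).2 h) isOpen_Ioo hf hg

theorem wk_local {T1 T2 : ℝ} (hT : T1 < T2) (k : ℕ) : ∀ (D : ℕ → ℝ → ℝ) (f : ℝ → ℝ),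
    ContinuousOn f (Ioo T1 T2) → (∀ᵐ t, t ∈ Ioo T1 T2 → D 0 t = f t) →
    (∀ j < k+1, HasWeakDerivOn (D j) (D (j + 1)) (Ioo T1 T2)) →
    (∀ j ≤ k+1, MemLp (D j) 2 (volume.restrict (Ioo T1 T2))) →
    (∀ j < k+1, IsPrim (deriv^[j] f) (deriv^[j+1] f) (Ioo T1 T2)) ∧
      MemLp (deriv^[k+1] f) 2 (volume.restrict (Ioo T1 T2)) := by
  induction k with
  | zero =>
    intro D f hf h0 h1 h2
    obtain ⟨F, p1, p2, p3⟩ := dBR hT (h2 0 (by omega)) (h2 1 (by omega)) (h1 0 (by omega))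
    have e : EqOn F f (Ioo T1 T2) := eqOn_of_ae_Ioo (p2.mono Ioo_subset_Icc_self) hf (by
      filter_upwards [h0, p3] with t a b hm
      rw [← a hm, b hm])
    have q := p1.congr_left e
    have hd : ∀ᵐ t, t ∈ Ioo T1 T2 → D 1 t = deriv f t := by
      filter_upwards [q.ae_hasDerivAt isOpen_Ioo ordConnected_Ioo] with t ht hm
      exact (ht hm).deriv.symm
    refine ⟨?_, ?_⟩
    · intro j hj
      obtain rfl : j = 0 := by omega
      exact q.congr_ae ordConnected_Ioo hd
    · exact (memLp_congr_ae ((ae_restrict_iff' measurableSet_Ioo).2 hd)).1 (h2 1 (by omega))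
  | succ k ih =>
    intro D f hf h0 h1 h2
    obtain ⟨F, p1, p2, p3⟩ := dBR hT (h2 0 (by omega)) (h2 1 (by omega)) (h1 0 (by omega))
    obtain ⟨F1, q1, q2, q3⟩ := dBR hT (h2 1 (by omega)) (h2 2 (by omega)) (h1 1 (by omega))
    have e : EqOn F f (Ioo T1 T2) := eqOn_of_ae_Ioo (p2.mono Ioo_subset_Icc_self) hf (by
      filter_upwards [h0, p3] with t a b hm
      rw [← a hm, b hm])
    have q := (p1.congr_left e).congr_ae ordConnected_Ioo q3
    have cF1 := q2.mono Ioo_subset_Icc_self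
    have hd : ∀ t ∈ Ioo T1 T2, F1 t = deriv f t := fun t ht => (q.hasDerivAt isOpen_Ioo cF1 ht).deriv.symm
    obtain ⟨r1, r2⟩ := ih (fun j => D (j+1)) (deriv f) (cF1.congr fun t ht => (hd t ht).symm) (by
        filter_upwards [q3] with t ht hm
        rw [← hd t hm, ht hm]) (fun j hj => h1 (j+1) (by omega)) (fun j hj => h2 (j+1) (by omega))
    refine ⟨?_, r2⟩
    intro j hj
    cases j with
    | zero => exact q.congr_ae ordConnected_Ioo (Filter.Eventually.of_forall hd)
    | succ j => exact r1 j (by omega)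

theorem Rg_of_chain {τ : ℝ} (k : ℕ) : ∀ (f : ℝ → ℝ), (∀ j < k, IsPrim (deriv^[j] f) (deriv^[j+1] f) (Ioi τ)) →
    L2loc τ (deriv^[k] f) → Rg τ k f := by
  induction k with
  | zero => intro f _ h; exact h
  | succ k ih =>
    intro f h1 h2
    exact ⟨deriv f, ih _ (fun j hj => h1 (j+1) (by omega)) h2, h1 0 (by omega)⟩

theorem Rg_of_Wkloc {b : ℝ → ℝ} (hc : Continuous b) {k : ℕ} (h : Wkloc (k+1) b) (τ : ℝ) : Rg τ (k+1) b := by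
  apply Rg_of_chain
  · intro j hj a ha c hc'
    obtain ⟨D, h0, h1, h2⟩ := h (min a c - 1) (max a c + 1) (by have := min_le_max (a := a) (b := c); linarith)
    have := (wk_local (by have := min_le_max (a := a) (b := c); linarith) k D b hc.continuousOn (by simp [h0]) h1 h2).1 j hj
    exact this a ⟨by linarith [min_le_left a c], by linarith [le_max_left a c]⟩ c
      ⟨by linarith [min_le_right a c], by linarith [le_max_right a c]⟩
  · intro a c ha
    rcases le_or_gt c a with hca | hca
    · simp [Ioc_eq_empty (not_lt.2 hca)]
    obtain ⟨D, h0, h1, h2⟩ := h (a-1) (c+1) (by linarith)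
    have := (wk_local (by linarith) k D b hc.continuousOn (by simp [h0]) h1 h2).2
    exact this.mono_measure (Measure.restrict_mono (show Ioc a c ⊆ Ioo (a-1) (c+1) from fun t ht => ⟨by linarith [ht.1], by linarith [ht.2]⟩) le_rfl)

instance : IsFiniteMeasure μ01 := by unfold μ01; infer_instance

def nu (n : ℕ) : ℝ := (n + 1) * Real.pi
def lam (n : ℕ) : ℝ := nu n ^ 2

theorem nu_pos (n : ℕ) : 0 < nu n := by unfold nu; positivity
theorem lam_pos (n : ℕ) : 0 < lam n := by have := nu_pos n; unfold lam; positivity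
theorem nu_ge (n : ℕ) : (n:ℝ) + 1 ≤ nu n := by
  unfold nu; nlinarith [Real.pi_gt_three, (Nat.cast_nonneg n : (0:ℝ) ≤ n)]

theorem sin_span (p : Polynomial ℝ) : ∃ a : ℕ →₀ ℝ, ∀ x : ℝ,
    Real.sin (Real.pi * x) * p.eval (Real.cos (Real.pi * x)) = a.sum fun n c => c * Real.sin (nu n * x) := by
  set S : Submodule ℝ (ℝ → ℝ) := Submodule.span ℝ (range fun n : ℕ => fun x : ℝ => Real.sin (nu n * x)) with hS
  have hgen : ∀ n : ℕ, (fun x : ℝ => Real.sin (nu n * x)) ∈ S := fun n => Submodule.subset_span ⟨n, rfl⟩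
  have hcos : ∀ f ∈ S, (fun x => Real.cos (Real.pi * x) * f x) ∈ S := by
    intro f hf
    induction hf using Submodule.span_induction with
    | mem f hf =>
      obtain ⟨n, rfl⟩ := hf
      have h1 : (fun x : ℝ => Real.cos (Real.pi * x) * Real.sin (nu n * x)) =
          (1/2:ℝ) • (fun x : ℝ => Real.sin (nu (n+1) * x)) + (1/2:ℝ) • (fun x : ℝ => Real.sin ((n:ℝ) * Real.pi * x)) := by
        ext x
        have e1 : nu (n+1) * x = nu n * x + Real.pi * x := by unfold nu; push_cast; ring
        have e2 : (n:ℝ) * Real.pi * x = nu n * x - Real.pi * x := by unfold nu; ring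
        simp only [Pi.add_apply, Pi.smul_apply, smul_eq_mul]
        rw [e1, e2, Real.sin_add, Real.sin_sub]; ring
      show (fun x : ℝ => Real.cos (Real.pi * x) * Real.sin (nu n * x)) ∈ S
      rw [h1]
      refine S.add_mem (S.smul_mem _ (hgen _)) (S.smul_mem _ ?_)
      rcases n with _ | n
      · simp only [Nat.cast_zero, zero_mul, Real.sin_zero]; exact S.zero_mem
      · have := hgen n; unfold nu at this; push_cast; exact this
    | zero => simp only [Pi.zero_apply, mul_zero]; exact S.zero_mem
    | add f g _ _ hf hg =>
      have := S.add_mem hf hg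
      convert this using 1; ext x; simp [mul_add]
    | smul c f _ hf =>
      have := S.smul_mem c hf
      convert this using 1; ext x; simp; ring
  have hp : (fun x => Real.sin (Real.pi * x) * p.eval (Real.cos (Real.pi * x))) ∈ S := by
    induction p using Polynomial.induction_on' with
    | add p q hp hq =>
      have := S.add_mem hp hq
      convert this using 1; ext x; simp [mul_add]
    | monomial n c =>
      induction n with
      | zero =>
        have := S.smul_mem c (hgen 0)
        convert this using 1; ext x; simp [nu]; ring
      | succ n ih =>
        have := hcos _ ih
        convert this using 1; ext x; simp [pow_succ]; ring
  obtain ⟨a, ha⟩ := (Finsupp.mem_span_range_iff_exists_finsupp).1 hp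
  refine ⟨a, fun x => ?_⟩
  have := congrFun ha x
  simp only [Finsupp.sum, Finset.sum_apply, Pi.smul_apply, smul_eq_mul] at this ⊢
  exact this.symm

abbrev TB : BoundedContinuousFunction ℝ ℝ →L[ℝ] Hsp := BoundedContinuousFunction.toLp 2 μ01 ℝ

theorem TB_ae (f : BoundedContinuousFunction ℝ ℝ) : ∀ᵐ x ∂μ01, TB f x = f x :=
  BoundedContinuousFunction.coeFn_toLp 2 μ01 ℝ f

theorem int01 (f : ℝ → ℝ) : ∫ x, f x ∂μ01 = ∫ x in (0:ℝ)..1, f x := by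
  rw [intervalIntegral.integral_of_le zero_le_one, integral_Ioc_eq_integral_Ioo]; rfl

theorem inner_TB (h : Hsp) (f : BoundedContinuousFunction ℝ ℝ) :
    inner ℝ h (TB f) = ∫ x in (0:ℝ)..1, h x * f x := by
  rw [L2.inner_def, ← int01]
  apply integral_congr_ae
  filter_upwards [TB_ae f] with x hx
  rw [hx]; simp [mul_comm]

theorem inner_TB_TB (h f : BoundedContinuousFunction ℝ ℝ) :
    inner ℝ (TB h) (TB f) = ∫ x in (0:ℝ)..1, h x * f x := by
  rw [inner_TB, ← int01, ← int01]
  apply integral_congr_ae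
  filter_upwards [TB_ae h] with x hx
  rw [hx]

theorem ae_Ioo : ∀ᵐ x ∂μ01, x ∈ Ioo (0:ℝ) 1 := ae_restrict_mem measurableSet_Ioo

theorem exists_mul_bcf (f : Hsp) (g : BoundedContinuousFunction ℝ ℝ) : ∃ G : Hsp, ∀ᵐ x ∂μ01, G x = f x * g x := by
  have : MemLp (fun x => f x * g x) 2 μ01 := by
    have h1 : MemLp (fun x => g x) ⊤ μ01 := by
      apply MemLp.of_bound (g.continuous.aestronglyMeasurable) ‖g‖
      exact Filter.Eventually.of_forall fun x => g.norm_coe_le_norm x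
    have := (Lp.memLp f).mul' (r := 2) h1
    simpa only [mul_comm] using this
  exact ⟨this.toLp _, this.coeFn_toLp⟩

def sinB (c : ℝ) : BoundedContinuousFunction ℝ ℝ :=
  BoundedContinuousFunction.ofNormedAddCommGroup (fun x => Real.sin (c * x)) (by fun_prop) 1
    (fun x => by simpa using Real.abs_sin_le_one _)
def cosB (c : ℝ) : BoundedContinuousFunction ℝ ℝ :=
  BoundedContinuousFunction.ofNormedAddCommGroup (fun x => Real.cos (c * x)) (by fun_prop) 1
    (fun x => by simpa using Real.abs_cos_le_one _)
@[simp] theorem sinB_apply (c x) : sinB c x = Real.sin (c * x) := rfl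
@[simp] theorem cosB_apply (c x) : cosB c x = Real.cos (c * x) := rfl

/-- continuous nonnegative functions on the unit interval are limits of squares of polynomials in cos -/
theorem approx_sq (g : ℝ → ℝ) (hg : ContinuousOn g (Icc 0 1)) (h0 : ∀ x, 0 ≤ g x) (ε : ℝ) (hε : 0 < ε) :
    ∃ q : Polynomial ℝ, ∀ x ∈ Icc (0:ℝ) 1, |q.eval (Real.cos (Real.pi * x)) ^ 2 - g x| < ε := by
  let h : ℝ → ℝ := fun y => Real.sqrt (g (Real.arccos y / Real.pi))
  have hmap : ∀ y, Real.arccos y / Real.pi ∈ Icc (0:ℝ) 1 := fun y =>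
    ⟨div_nonneg (Real.arccos_nonneg y) Real.pi_pos.le, (div_le_one Real.pi_pos).2 (Real.arccos_le_pi y)⟩
  have hc : Continuous h := by
    apply Real.continuous_sqrt.comp
    exact hg.comp_continuous (by fun_prop) hmap
  obtain ⟨M, hM⟩ := (isCompact_Icc (a := (-1:ℝ)) (b := 1)).exists_bound_of_continuousOn hc.continuousOn
  have hM0 : 0 ≤ M := (norm_nonneg _).trans (hM 0 (by norm_num))
  set δ := min 1 (ε / (2 * M + 2)) with hδ
  have hδ0 : 0 < δ := lt_min one_pos (by positivity)
  obtain ⟨q, hq⟩ := exists_polynomial_near_of_continuousOn (-1) 1 h hc.continuousOn δ hδ0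
  refine ⟨q, fun x hx => ?_⟩
  have hcx : Real.cos (Real.pi * x) ∈ Icc (-1:ℝ) 1 := ⟨Real.neg_one_le_cos _, Real.cos_le_one _⟩
  have e1 := hq _ hcx
  have e2 := hM _ hcx
  have e3 : h (Real.cos (Real.pi * x)) ^ 2 = g x := by
    simp only [h]
    rw [Real.sq_sqrt (h0 _), Real.arccos_cos (by nlinarith [hx.1, Real.pi_pos]) (by nlinarith [hx.2, Real.pi_pos])]
    congr 1; field_simp
  rw [← e3]
  set Y := h (Real.cos (Real.pi * x))
  set Q := q.eval (Real.cos (Real.pi * x))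
  have e4 : Q ^ 2 - Y ^ 2 = (Q - Y) * (Q + Y) := by ring
  rw [e4, abs_mul]
  have e5 : |Q + Y| ≤ 1 + 2 * M := by
    have : Q + Y = (Q - Y) + 2 * Y := by ring
    rw [this]
    refine (abs_add_le _ _).trans ?_
    have : |2 * Y| ≤ 2 * M := by rw [abs_mul]; simpa using e2
    have : δ ≤ 1 := min_le_left _ _
    linarith
  have e6 : δ * (2 * M + 2) ≤ ε := by
    have := min_le_right 1 (ε / (2 * M + 2))
    rwa [le_div_iff₀ (by positivity)] at this
  calc |Q - Y| * |Q + Y| ≤ |Q - Y| * (1 + 2 * M) := by gcongr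
    _ ≤ δ * (1 + 2 * M) := by gcongr
    _ < δ * (2 * M + 2) := by nlinarith
    _ ≤ ε := e6

theorem nonneg_of_test (f : Hsp)
    (h : ∀ q : Polynomial ℝ, 0 ≤ ∫ x in (0:ℝ)..1, f x * (Real.sin (Real.pi * x) * q.eval (Real.cos (Real.pi * x)) ^ 2)) :
    ∀ᵐ x ∂μ01, 0 ≤ f x := by
  obtain ⟨G, hG⟩ := exists_mul_bcf f (sinB Real.pi)
  have hGi : Integrable G μ01 := (Lp.memLp G).integrable (by norm_num)
  have key : ∀ g : BoundedContinuousFunction ℝ ℝ, (∀ x, 0 ≤ g x) → 0 ≤ ∫ x, G x * g x ∂μ01 := by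
    intro g hg
    apply le_of_forall_pos_le_add
    intro ε hε
    obtain ⟨q, hq⟩ := approx_sq g g.continuous.continuousOn hg (ε / ((∫ x, |G x| ∂μ01) + 1)) (by
      have : 0 ≤ ∫ x, |G x| ∂μ01 := integral_nonneg fun _ => abs_nonneg _
      positivity)
    set I := ∫ x, |G x| ∂μ01 with hI
    have hI0 : 0 ≤ I := integral_nonneg fun _ => abs_nonneg _
    have h1 := h q
    rw [← int01] at h1
    have h2 : ∫ x, f x * (Real.sin (Real.pi * x) * q.eval (Real.cos (Real.pi * x)) ^ 2) ∂μ01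
        = ∫ x, G x * q.eval (Real.cos (Real.pi * x)) ^ 2 ∂μ01 := by
      apply integral_congr_ae
      filter_upwards [hG] with x hx
      rw [hx, sinB_apply]; ring
    rw [h2] at h1
    have i1 : Integrable (fun x => G x * g x) μ01 :=
      hGi.mul_bdd (c := ‖g‖) g.continuous.aestronglyMeasurable (Filter.Eventually.of_forall fun x => g.norm_coe_le_norm x)
    have hpc : Continuous (fun x => q.eval (Real.cos (Real.pi * x)) ^ 2) := by fun_prop
    obtain ⟨M, hM⟩ := (isCompact_Icc (a := (0:ℝ)) (b := 1)).exists_bound_of_continuousOn hpc.continuousOn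
    have i2 : Integrable (fun x => G x * q.eval (Real.cos (Real.pi * x)) ^ 2) μ01 :=
      hGi.mul_bdd (c := M) hpc.aestronglyMeasurable (by
        filter_upwards [ae_Ioo] with x hx using hM x (Ioo_subset_Icc_self hx))
    have h3 : ∫ x, G x * q.eval (Real.cos (Real.pi * x)) ^ 2 ∂μ01 - ∫ x, G x * g x ∂μ01 ≤ ε := by
      rw [← integral_sub i2 i1]
      calc _ ≤ ∫ x, |G x| * (ε / (I+1)) ∂μ01 := by
              apply integral_mono_ae (i2.sub i1) (hGi.abs.mul_const _)
              filter_upwards [ae_Ioo] with x hx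
              have := hq x (Ioo_subset_Icc_self hx)
              show G x * q.eval (Real.cos (Real.pi * x)) ^ 2 - G x * g x ≤ _
              rw [← mul_sub]
              refine (le_abs_self _).trans ?_
              rw [abs_mul]
              gcongr
        _ = I * (ε / (I+1)) := integral_mul_const _ _
        _ ≤ ε := by
              rw [mul_div_assoc', div_le_iff₀ (by positivity)]; nlinarith
    linarith
  have hcl : ∀ g : Hsp, 0 ≤ inner ℝ G (Lp.posPart g : Hsp) := by
    have hd : DenseRange (TB : BoundedContinuousFunction ℝ ℝ → Hsp) :=
      BoundedContinuousFunction.toLp_denseRange ℝ μ01 ℝ (by norm_num)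
    intro g
    refine hd.induction_on g (isClosed_le continuous_const ?_) ?_
    · exact (continuous_const (y := G)).inner (Lp.continuous_posPart)
    · intro g
      have := key (g ⊔ 0) (fun x => by simp)
      convert this using 1
      rw [L2.inner_def]
      apply integral_congr_ae
      filter_upwards [TB_ae g, Lp.coeFn_posPart (TB g)] with x h1 h2
      rw [h2, h1]; simp [mul_comm]
  have h1 := hcl (-f)
  rw [L2.inner_def] at h1
  have e : (fun x => inner ℝ (G x) ((Lp.posPart (-f) : Hsp) x)) =ᵐ[μ01] fun x => - (Real.sin (Real.pi * x) * (max (-f x) 0)^2) := by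
    filter_upwards [hG, Lp.coeFn_posPart (-f), Lp.coeFn_neg f] with x h1 h2 h3
    rw [h1, h2, h3]
    simp only [RCLike.inner_apply, conj_trivial, Pi.neg_apply, sinB_apply]
    rcases le_total 0 (f x) with h | h
    · rw [max_eq_right (by linarith)]; ring
    · rw [max_eq_left (by linarith)]; ring
  have hint := (L2.integrable_inner (𝕜 := ℝ) G (Lp.posPart (-f) : Hsp)).congr e
  rw [integral_congr_ae e, integral_neg] at h1
  have hint' : Integrable (fun x => (Real.sin (Real.pi * x) * (max (-f x) 0)^2)) μ01 := by simpa using hint.neg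
  have hnn : 0 ≤ᵐ[μ01] (fun x => (Real.sin (Real.pi * x) * (max (-f x) 0)^2)) := by
    filter_upwards [ae_Ioo] with x hx
    have : 0 ≤ Real.sin (Real.pi * x) := Real.sin_nonneg_of_nonneg_of_le_pi (by nlinarith [hx.1, Real.pi_pos]) (by nlinarith [hx.2, Real.pi_pos])
    simp only [Pi.zero_apply]; positivity
  have h0 := (integral_eq_zero_iff_of_nonneg_ae hnn hint').1 (le_antisymm (by linarith) (integral_nonneg_of_ae hnn))
  filter_upwards [h0, ae_Ioo] with x h0 hx
  have : 0 < Real.sin (Real.pi * x) := Real.sin_pos_of_pos_of_lt_pi (by nlinarith [hx.1, Real.pi_pos]) (by nlinarith [hx.2, Real.pi_pos])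
  simp only [Pi.zero_apply, mul_eq_zero, this.ne', false_or, pow_eq_zero_iff two_ne_zero] at h0
  have := le_max_left (-f x) 0
  linarith

theorem int_cos_mul_pi (m : ℤ) (hm : m ≠ 0) : ∫ x in (0:ℝ)..1, Real.cos (m * Real.pi * x) = 0 := by
  have hm' : (m:ℝ) * Real.pi ≠ 0 := mul_ne_zero (by exact_mod_cast hm) Real.pi_ne_zero
  rw [intervalIntegral.integral_comp_mul_left _ hm', integral_cos]
  simp [Real.sin_int_mul_pi]

def sB (n : ℕ) : BoundedContinuousFunction ℝ ℝ := Real.sqrt 2 • sinB (nu n)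
def cB (n : ℕ) : BoundedContinuousFunction ℝ ℝ := Real.sqrt 2 • cosB (nu n)
@[simp] theorem sB_apply (n x) : sB n x = Real.sqrt 2 * Real.sin (nu n * x) := rfl
@[simp] theorem cB_apply (n x) : cB n x = Real.sqrt 2 * Real.cos (nu n * x) := rfl
theorem sB_norm (n) : ‖sB n‖ ≤ 2 := by
  refine (BoundedContinuousFunction.norm_le (by norm_num)).2 fun x => ?_
  rw [sB_apply, norm_mul, Real.norm_eq_abs, Real.norm_eq_abs, abs_of_nonneg (Real.sqrt_nonneg _)]
  have := Real.abs_sin_le_one (nu n * x)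
  have h2 : Real.sqrt 2 ≤ 2 := by rw [Real.sqrt_le_left] <;> norm_num
  nlinarith [Real.sqrt_nonneg 2, abs_nonneg (Real.sin (nu n * x))]
theorem cB_norm (n) : ‖cB n‖ ≤ 2 := by
  refine (BoundedContinuousFunction.norm_le (by norm_num)).2 fun x => ?_
  rw [cB_apply, norm_mul, Real.norm_eq_abs, Real.norm_eq_abs, abs_of_nonneg (Real.sqrt_nonneg _)]
  have := Real.abs_cos_le_one (nu n * x)
  have h2 : Real.sqrt 2 ≤ 2 := by rw [Real.sqrt_le_left] <;> norm_num
  nlinarith [Real.sqrt_nonneg 2, abs_nonneg (Real.cos (nu n * x))]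

def eS (n : ℕ) : Hsp := TB (sB n)
def eC (n : ℕ) : Hsp := TB (cB n)

theorem trig_ii (n m : ℕ) : (∫ x in (0:ℝ)..1, Real.cos ((nu n - nu m) * x)) = (if n = m then 1 else 0) ∧
    (∫ x in (0:ℝ)..1, Real.cos ((nu n + nu m) * x)) = 0 := by
  constructor
  · split_ifs with h
    · subst h; simp
    · have := int_cos_mul_pi ((n:ℤ) - m) (by omega)
      rw [← this]; congr 1; ext x; unfold nu; push_cast; congr 1; ring
  · have := int_cos_mul_pi ((n:ℤ) + m + 2) (by omega)
    rw [← this]; congr 1; ext x; unfold nu; push_cast; congr 1; ring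

theorem orthS : Orthonormal ℝ eS := by
  rw [orthonormal_iff_ite]
  intro n m
  rw [eS, eS, inner_TB_TB]
  have e : (fun x => sB n x * sB m x) = fun x => Real.cos ((nu n - nu m) * x) - Real.cos ((nu n + nu m) * x) := by
    ext x
    rw [sB_apply, sB_apply, sub_mul, add_mul, Real.cos_sub, Real.cos_add]
    have := Real.mul_self_sqrt (show (0:ℝ) ≤ 2 by norm_num)
    linear_combination (Real.sin (nu n * x) * Real.sin (nu m * x)) * this
  rw [e, intervalIntegral.integral_sub, (trig_ii n m).1, (trig_ii n m).2, sub_zero]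
  all_goals exact Continuous.intervalIntegrable (by fun_prop) _ _

theorem orthC : Orthonormal ℝ eC := by
  rw [orthonormal_iff_ite]
  intro n m
  rw [eC, eC, inner_TB_TB]
  have e : (fun x => cB n x * cB m x) = fun x => Real.cos ((nu n - nu m) * x) + Real.cos ((nu n + nu m) * x) := by
    ext x
    rw [cB_apply, cB_apply, sub_mul, add_mul, Real.cos_sub, Real.cos_add]
    have := Real.mul_self_sqrt (show (0:ℝ) ≤ 2 by norm_num)
    linear_combination (Real.cos (nu n * x) * Real.cos (nu m * x)) * this
  rw [e, intervalIntegral.integral_add, (trig_ii n m).1, (trig_ii n m).2, add_zero]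
  all_goals exact Continuous.intervalIntegrable (by fun_prop) _ _

theorem ii_mul (f : Hsp) {g : ℝ → ℝ} (hg : Continuous g) : IntervalIntegrable (fun x => f x * g x) volume 0 1 := by
  rw [intervalIntegrable_iff_integrableOn_Ioo_of_le zero_le_one]
  have hGi : Integrable f μ01 := (Lp.memLp f).integrable (by norm_num)
  obtain ⟨M, hM⟩ := (isCompact_Icc (a := (0:ℝ)) (b := 1)).exists_bound_of_continuousOn hg.continuousOn
  exact hGi.mul_bdd (c := M) hg.aestronglyMeasurable (by
        filter_upwards [ae_Ioo] with x hx using hM x (Ioo_subset_Icc_self hx))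

theorem int_eq_inner (f : Hsp) (n : ℕ) : ∫ x in (0:ℝ)..1, f x * Real.sin (nu n * x) = inner ℝ f (eS n) / Real.sqrt 2 := by
  rw [eS, inner_TB]
  have : (fun x => f x * sB n x) = fun x => Real.sqrt 2 * (f x * Real.sin (nu n * x)) := by
    ext x; rw [sB_apply]; ring
  rw [this, intervalIntegral.integral_const_mul]
  field_simp

theorem int_finsupp (f : Hsp) (a : ℕ →₀ ℝ) :
    ∫ x in (0:ℝ)..1, f x * (a.sum fun n c => c * Real.sin (nu n * x)) = a.sum fun n c => c * (inner ℝ f (eS n) / Real.sqrt 2) := by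
  simp only [Finsupp.sum, Finset.mul_sum]
  rw [intervalIntegral.integral_finset_sum]
  · apply Finset.sum_congr rfl
    intro n _
    rw [← int_eq_inner, ← intervalIntegral.integral_const_mul]
    congr 1; ext x; ring
  · intro n _; exact ii_mul f (by fun_prop)

theorem eS_complete (f : Hsp) (h : ∀ n, inner ℝ f (eS n) = 0) : f = 0 := by
  have key : ∀ f : Hsp, (∀ n, inner ℝ f (eS n) = 0) → ∀ᵐ x ∂μ01, 0 ≤ f x := by
    intro f h
    apply nonneg_of_test
    intro q
    obtain ⟨a, ha⟩ := sin_span (q^2)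
    simp only [Polynomial.eval_pow] at ha
    simp only [ha]
    rw [int_finsupp]
    simp [h, Finsupp.sum]
  have h1 := key f h
  have h2 := key (-f) (fun n => by rw [inner_neg_left, h, neg_zero])
  apply Lp.ext
  filter_upwards [h1, h2, Lp.coeFn_neg f, Lp.coeFn_zero ℝ 2 μ01] with x h1 h2 h3 h4
  rw [h3] at h2; rw [h4]; simp only [Pi.neg_apply, Pi.zero_apply] at *; linarith

def hbS : HilbertBasis ℕ ℝ Hsp := HilbertBasis.mkOfOrthogonalEqBot orthS (by
  rw [Submodule.eq_bot_iff]
  intro f hf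
  apply eS_complete
  intro n
  exact (Submodule.mem_orthogonal' _ _).1 hf _ (Submodule.subset_span ⟨n, rfl⟩))
theorem hbS_apply (n) : hbS n = eS n := by
  unfold hbS; rw [HilbertBasis.coe_mkOfOrthogonalEqBot]

theorem second_deriv_min {f f' : ℝ → ℝ} {f'' x : ℝ} (h1 : ∀ y, HasDerivAt f (f' y) y) (h2 : HasDerivAt f' f'' x)
    (hm : IsLocalMin f x) : 0 ≤ f'' := by
  by_contra hneg
  push Not at hneg
  have hd : deriv f = f' := funext fun y => (h1 y).deriv
  have hM : IsLocalMax f x := isLocalMax_of_deriv_deriv_neg (by rw [hd, h2.deriv]; exact hneg)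
    (by rw [hd]; exact hm.hasDerivAt_eq_zero (h1 x)) (h1 x).continuousAt
  have he : f =ᶠ[nhds x] fun _ => f x := by
    filter_upwards [hm, hM] with y a b using le_antisymm b a
  have he2 : f' =ᶠ[nhds x] fun _ => 0 := by
    have := he.deriv
    rw [hd] at this
    simpa using this
  have := h2.congr_of_eventuallyEq he2.symm
  have h0 : f'' = 0 := this.unique (hasDerivAt_const x (0:ℝ))
  linarith

theorem left_deriv_min {f : ℝ → ℝ} {f' t0 t : ℝ} (ht : t0 < t) (h1 : HasDerivAt f f' t)
    (hm : ∀ s ∈ Icc t0 t, f t ≤ f s) : f' ≤ 0 := by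
  by_contra hpos
  push Not at hpos
  have h2 := (hasDerivAt_iff_tendsto_slope.1 h1).eventually (lt_mem_nhds hpos)
  have h3 : ∀ᶠ s in nhdsWithin t (Iio t), 0 < slope f t s :=
    h2.filter_mono (nhdsWithin_mono _ (fun s hs => ne_of_lt hs))
  have h4 : ∀ᶠ s in nhdsWithin t (Iio t), s ∈ Ioo t0 t := Ioo_mem_nhdsLT ht
  obtain ⟨s, h5, h6⟩ := (h3.and h4).exists
  rw [slope_def_field] at h5
  have := hm s ⟨h6.1.le, h6.2.le⟩
  have h7 : s - t < 0 := by linarith [h6.2]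
  have := div_nonpos_of_nonneg_of_nonpos (sub_nonneg.2 this) h7.le
  linarith

def Wf (a : ℕ →₀ ℝ) (t x : ℝ) : ℝ := a.sum fun n c => c * Real.exp (-lam n * t) * Real.sin (nu n * x)

theorem sin_nu (n : ℕ) : Real.sin (nu n) = 0 := by
  have := Real.sin_nat_mul_pi (n+1); unfold nu; push_cast at this; exact this

theorem Wf_nonneg (a : ℕ →₀ ℝ) (h0 : ∀ x ∈ Icc (0:ℝ) 1, 0 ≤ Wf a 0 x) {t1 x1 : ℝ} (ht1 : 0 ≤ t1) (hx1 : x1 ∈ Icc (0:ℝ) 1) :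
    0 ≤ Wf a t1 x1 := by
  by_contra hneg
  push Not at hneg
  have ht1' : 0 < t1 := by
    rcases ht1.eq_or_lt with h | h
    · rw [← h] at hneg; linarith [h0 x1 hx1]
    · exact h
  set ε := - Wf a t1 x1 / (2 * t1) with hε
  have hε0 : 0 < ε := div_pos (by linarith) (by linarith)
  have hc : Continuous (fun p : ℝ × ℝ => Wf a p.1 p.2 + ε * p.1) := by
    unfold Wf Finsupp.sum; fun_prop
  obtain ⟨⟨t, x⟩, ⟨ht, hx⟩, hmin⟩ := (isCompact_Icc (a := (0:ℝ)) (b := t1)).prod (isCompact_Icc (a := (0:ℝ)) (b := 1)) |>.exists_isMinOn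
    ⟨(t1, x1), ⟨ht1, le_rfl⟩, hx1⟩ hc.continuousOn
  have hmin' : ∀ s ∈ Icc 0 t1, ∀ y ∈ Icc (0:ℝ) 1, Wf a t x + ε * t ≤ Wf a s y + ε * s := fun s hs y hy => hmin (a := (s,y)) ⟨hs, hy⟩
  simp only at ht hx
  have hlt : Wf a t x + ε * t < 0 := by
    refine (hmin' t1 ⟨ht1, le_rfl⟩ x1 hx1).trans_lt ?_
    have : ε * t1 = - Wf a t1 x1 / 2 := by rw [hε]; field_simp
    rw [this]; linarith
  have ht0 : 0 < t := by
    rcases ht.1.eq_or_lt with h | h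
    · rw [← h] at hlt; linarith [h0 x hx]
    · exact h
  have hx0 : 0 < x := by
    rcases hx.1.eq_or_lt with h | h
    · rw [← h] at hlt; simp [Wf, Finsupp.sum] at hlt; nlinarith
    · exact h
  have hx1 : x < 1 := by
    rcases hx.2.eq_or_lt with h | h
    · rw [h] at hlt; simp [Wf, Finsupp.sum, sin_nu] at hlt; nlinarith
    · exact h
  have d1 : ∀ y, HasDerivAt (fun y => Wf a t y) (a.sum fun n c => c * Real.exp (-lam n * t) * (Real.cos (nu n * y) * nu n)) y := by
    intro y
    unfold Wf Finsupp.sum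
    apply HasDerivAt.fun_sum
    intro n _
    exact (((hasDerivAt_id y).const_mul (nu n)).sin.const_mul _).congr_deriv (by simp)
  have d2 : HasDerivAt (fun y => a.sum fun n c => c * Real.exp (-lam n * t) * (Real.cos (nu n * y) * nu n))
      (a.sum fun n c => c * (Real.exp (-lam n * t) * (-lam n)) * Real.sin (nu n * x)) x := by
    unfold Finsupp.sum
    apply HasDerivAt.fun_sum
    intro n _
    refine ((((hasDerivAt_id x).const_mul (nu n)).cos.mul_const (nu n)).const_mul _).congr_deriv ?_
    simp [lam]; ring
  have d3 : HasDerivAt (fun s => Wf a s x + ε * s) ((a.sum fun n c => c * (Real.exp (-lam n * t) * (-lam n)) * Real.sin (nu n * x)) + ε) t := by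
    refine HasDerivAt.add ?_ (((hasDerivAt_id t).const_mul ε).congr_deriv (by simp))
    unfold Wf Finsupp.sum
    apply HasDerivAt.fun_sum
    intro n _
    exact ((((hasDerivAt_id t).const_mul (-lam n)).exp.const_mul _).mul_const _).congr_deriv (by simp)
  have p1 : 0 ≤ (a.sum fun n c => c * (Real.exp (-lam n * t) * (-lam n)) * Real.sin (nu n * x)) := by
    apply second_deriv_min d1 d2
    filter_upwards [Icc_mem_nhds hx0 hx1] with y hy
    have := hmin' t ht y hy
    linarith
  have p2 := left_deriv_min ht0 d3 (fun s hs => hmin' s ⟨hs.1, hs.2.trans ht.2⟩ x hx)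
  linarith

theorem countable_of_isolated {s : Set ℝ} (h : ∀ x ∈ s, ∀ᶠ y in nhdsWithin x {x}ᶜ, y ∉ s) : s.Countable := by
  have := countable_setOfPred_isolated_right_within (s := s)
  refine this.mono (show s ⊆ _ from fun x hx => ?_)
  refine ⟨hx, ?_⟩
  rw [← Filter.empty_mem_iff_bot]
  have h1 : ∀ᶠ y in nhdsWithin x (s ∩ Ioi x), y ∉ s :=
    (h x hx).filter_mono (nhdsWithin_mono _ fun y hy => ne_of_gt hy.2)
  have h2 : ∀ᶠ y in nhdsWithin x (s ∩ Ioi x), y ∈ s ∩ Ioi x := eventually_mem_nhdsWithin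
  filter_upwards [h1, h2] with y a b using a b.1

theorem Hsp_ii (w : Hsp) : IntervalIntegrable (fun x => w x) volume 0 1 := by
  rw [intervalIntegrable_iff_integrableOn_Ioo_of_le zero_le_one]
  exact (Lp.memLp w).integrable (by norm_num)

/-- package of the domain information -/
theorem dom_pack {v w : Hsp} (h : InDomainA v w) : ∃ vt G : ℝ → ℝ, ContinuousOn vt (Icc 0 1) ∧ vt 0 = 0 ∧ vt 1 = 0 ∧
    (∀ᵐ x ∂μ01, vt x = v x) ∧ (∀ x ∈ Ioo (0:ℝ) 1, HasDerivAt vt (G x) x) ∧ IsPrim G (fun x => w x) (Icc 0 1) := by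
  obtain ⟨vt, hc, h0, h1, hae, g, hg, hw⟩ := h
  have hm : (1/2:ℝ) ∈ Ioo (0:ℝ) 1 := by norm_num
  have hii : ∀ a ∈ Icc (0:ℝ) 1, ∀ c ∈ Icc (0:ℝ) 1, IntervalIntegrable (fun x => w x) volume a c := by
    intro a ha c hc
    apply (Hsp_ii w).mono_set
    rw [uIcc_of_le zero_le_one]
    exact (ordConnected_Icc).uIcc_subset ha hc
  refine ⟨vt, fun x => g (1/2) + ∫ z in (1/2)..x, w z, hc, h0, h1, hae, fun x hx => ?_, ?_⟩
  · have := hw x hx _ hm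
    show HasDerivAt vt (g (1/2) + ∫ z in (1/2)..x, w z) x
    rw [← this]; simpa using hg x hx
  · intro a ha c hc
    refine ⟨hii a ha c hc, ?_⟩
    have := intervalIntegral.integral_add_adjacent_intervals (hii _ (Ioo_subset_Icc_self hm) a ha) (hii a ha c hc)
    show (g (1/2) + ∫ z in (1/2)..c, w z) - (g (1/2) + ∫ z in (1/2)..a, w z) = ∫ z in a..c, w z
    rw [← this]; ring

theorem ibp {v w : Hsp} (h : InDomainA v w) (n : ℕ) : inner ℝ w (eS n) = - lam n * inner ℝ v (eS n) := by
  obtain ⟨vt, G, hc, h0, h1, hae, hd, hp⟩ := dom_pack h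
  have hGc : ContinuousOn G (Icc 0 1) := by
    have := hp.continuousOn_uIcc ordConnected_Icc (left_mem_Icc.2 zero_le_one) (right_mem_Icc.2 zero_le_one)
    rwa [uIcc_of_le zero_le_one] at this
  have hs : IsPrim (fun x => Real.sin (nu n * x)) (fun x => nu n * Real.cos (nu n * x)) (Icc 0 1) := by
    apply IsPrim.of_hasDerivAt ordConnected_Icc
    · intro t _
      exact (((hasDerivAt_id t).const_mul (nu n)).sin).congr_deriv (by simp; ring)
    · fun_prop
  have e1 := (hp.mul_real ordConnected_Icc hs 0 (left_mem_Icc.2 zero_le_one) 1 (right_mem_Icc.2 zero_le_one)).2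
  simp only [mul_one, sin_nu, mul_zero, Real.sin_zero, sub_zero] at e1
  have i1 : IntervalIntegrable (fun x => G x * (nu n * Real.cos (nu n * x))) volume 0 1 := by
    apply ContinuousOn.intervalIntegrable
    rw [uIcc_of_le zero_le_one]
    exact hGc.mul (by fun_prop)
  have i2 : IntervalIntegrable (fun x => vt x * (-lam n * Real.sin (nu n * x))) volume 0 1 := by
    apply ContinuousOn.intervalIntegrable
    rw [uIcc_of_le zero_le_one]
    exact hc.mul (by fun_prop)
  have e2 := intervalIntegral.integral_eq_sub_of_hasDerivAt_of_le zero_le_one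
    (f := fun x => vt x * (nu n * Real.cos (nu n * x))) (f' := fun x => G x * (nu n * Real.cos (nu n * x)) + vt x * (-lam n * Real.sin (nu n * x)))
    (hc.mul (by fun_prop)) (fun x hx => by
      refine ((hd x hx).mul ((((hasDerivAt_id x).const_mul (nu n)).cos).const_mul (nu n))).congr_deriv ?_
      simp only [id_eq, lam, mul_one]; ring) (i1.add i2)
  rw [h0, h1, intervalIntegral.integral_add i1 i2] at e2
  rw [intervalIntegral.integral_add (ii_mul w (by fun_prop)) i1, int_eq_inner] at e1
  have e3 : ∫ x in (0:ℝ)..1, vt x * (-lam n * Real.sin (nu n * x)) = - lam n * (inner ℝ v (eS n) / Real.sqrt 2) := by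
    rw [← int_eq_inner, ← intervalIntegral.integral_const_mul, ← int01, ← int01]
    apply integral_congr_ae
    filter_upwards [hae] with x hx
    rw [hx]; ring
  rw [e3] at e2
  have h2 : (0:ℝ) < Real.sqrt 2 := by positivity
  set J := ∫ x in (0:ℝ)..1, G x * (nu n * Real.cos (nu n * x))
  have e4 : inner ℝ w (eS n) / Real.sqrt 2 = - lam n * (inner ℝ v (eS n) / Real.sqrt 2) := by linarith
  field_simp at e4 ⊢
  linarith

theorem cont_nonneg {f : ℝ → ℝ} (hf : ContinuousOn f (Icc 0 1)) (h : ∀ᵐ x ∂μ01, 0 ≤ f x) : ∀ x ∈ Ioo (0:ℝ) 1, 0 ≤ f x := by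
  intro x hx
  by_contra hneg
  push Not at hneg
  have hc : ContinuousAt f x := hf.continuousAt (Icc_mem_nhds hx.1 hx.2)
  have h1 : ∀ᶠ y in nhds x, f y < 0 ∧ y ∈ Ioo (0:ℝ) 1 := (hc.eventually_lt continuousAt_const hneg).and (Ioo_mem_nhds hx.1 hx.2)
  obtain ⟨U, hU, hUo, hxU⟩ := eventually_nhds_iff.1 h1
  have h2 : ∀ᵐ y, y ∈ Ioo (0:ℝ) 1 → 0 ≤ f y := (ae_restrict_iff' measurableSet_Ioo).1 h
  have h3 : volume U = 0 := by
    refine measure_mono_null (fun y hy => ?_) h2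
    simp only [mem_compl_iff, mem_setOf_eq]
    intro hh
    have := hU y hy
    linarith [hh this.2]
  exact (hUo.measure_pos volume ⟨x, hxU⟩).ne' h3

theorem uxx_zero {v w : Hsp} (h : InDomainA v w) (hv : ∀ᵐ x ∂μ01, 0 ≤ v x) : ∀ᵐ x ∂μ01, v x = 0 → w x = 0 := by
  obtain ⟨vt, G, hc, h0, h1, hae, hd, hp⟩ := dom_pack h
  have hn := cont_nonneg hc (by filter_upwards [hae, hv] with x a b; rw [a]; exact b)
  have hG := (hp.mono Ioo_subset_Icc_self).ae_hasDerivAt isOpen_Ioo ordConnected_Ioo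
  have hz : ∀ x ∈ Ioo (0:ℝ) 1, vt x = 0 → G x = 0 := by
    intro x hx h
    have : IsLocalMin vt x := by
      filter_upwards [Ioo_mem_nhds hx.1 hx.2] with y hy
      rw [h]; exact hn y hy
    exact this.hasDerivAt_eq_zero (hd x hx)
  set Z := {x | x ∈ Ioo (0:ℝ) 1 ∧ vt x = 0 ∧ HasDerivAt G (w x) x ∧ w x ≠ 0} with hZ
  have hcount : Z.Countable := by
    apply countable_of_isolated
    intro x hx
    have := hx.2.2.1.eventually_ne hx.2.2.2 (c := 0)
    filter_upwards [this] with y hy hyZ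
    exact hy (hz y hyZ.1 hyZ.2.1)
  have hnull : ∀ᵐ x ∂μ01, x ∉ Z := by
    have : ∀ᵐ x, x ∉ Z := by rw [ae_iff]; simpa using hcount.measure_zero volume
    exact ae_restrict_of_ae this
  filter_upwards [hnull, hae, ae_Ioo, ae_restrict_of_ae hG] with x a1 a2 a3 a4 a5
  by_contra hne
  exact a1 ⟨a3, by rw [a2, a5], a4 a3, hne⟩

theorem ut_nonneg {u : ℝ → Hsp} {du : Hsp} {τ t : ℝ} (ht : τ < t) (hn : NonnegOn u τ) (hd : HasDerivAt u du t) :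
    ∀ᵐ x ∂μ01, u t x = 0 → 0 ≤ du x := by
  have m1 : Measurable (u t) := (Lp.stronglyMeasurable (u t)).measurable
  have m2 : Measurable du := (Lp.stronglyMeasurable du).measurable
  set A := {x | u t x = 0 ∧ du x < 0} with hA
  have hAm : MeasurableSet A := (m1 (measurableSet_singleton 0)).inter (m2 measurableSet_Iio)
  set ψ : Hsp := indicatorConstLp 2 hAm (measure_ne_top μ01 A) (1:ℝ) with hψ
  have d1 : HasDerivAt (fun s => inner ℝ ψ (u s)) (inner ℝ ψ du) t := 
    ((innerSL ℝ ψ).hasFDerivAt.comp_hasDerivAt t hd)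
  have i0 : inner ℝ ψ (u t) = 0 := by
    rw [hψ, L2.inner_indicatorConstLp_one]
    exact setIntegral_eq_zero_of_forall_eq_zero fun x hx => hx.1
  have hmin : IsLocalMin (fun s => inner ℝ ψ (u s)) t := by
    filter_upwards [lt_mem_nhds ht] with s hs
    rw [i0, hψ, L2.inner_indicatorConstLp_one]
    exact integral_nonneg_of_ae (ae_restrict_of_ae (hn s hs.le))
  have h0 := hmin.hasDerivAt_eq_zero d1
  rw [hψ, L2.inner_indicatorConstLp_one] at h0
  have hint : IntegrableOn (fun x => - du x) A μ01 := ((Lp.memLp du).integrable (by norm_num)).neg.integrableOn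
  have hnn : 0 ≤ᵐ[μ01.restrict A] fun x => - du x := by
    filter_upwards [ae_restrict_mem hAm] with x hx
    have := hx.2; simp; linarith
  have h2 : ∫ x in A, - du x ∂μ01 = 0 := by rw [integral_neg, h0, neg_zero]
  have h3 := (integral_eq_zero_iff_of_nonneg_ae hnn hint).1 h2
  have h4 := (ae_restrict_iff' hAm).1 h3
  filter_upwards [h4] with x h4 hx
  by_contra hneg
  push Not at hneg
  have := h4 ⟨hx, hneg⟩
  simp at this; linarith

theorem sol_prim {b ω : ℝ → ℝ} {τ : ℝ} {u r u' uxx : ℝ → Hsp} (h : IsStrongSolutionWith b ω τ u r u' uxx) :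
    IsPrim u u' (Ioi τ) := by
  intro a ha c hc
  rcases lt_trichotomy a c with hac | hac | hac
  · obtain ⟨h1, h2⟩ := h.fund a c ha hac
    exact ⟨h1, by rw [h2 c ⟨hac.le, le_rfl⟩]; abel⟩
  · subst hac; simp
  · obtain ⟨h1, h2⟩ := h.fund c a hc hac
    refine ⟨h1.symm, ?_⟩
    rw [intervalIntegral.integral_symm, h2 a ⟨hac.le, le_rfl⟩]; abel

theorem ae_Ioi_iff {τ : ℝ} {p : ℝ → Prop} : (∀ᵐ t ∂(volume.restrict (Ioi τ)), p t) ↔ ∀ᵐ t, t ∈ Ioi τ → p t :=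
  ae_restrict_iff' measurableSet_Ioi

theorem r_nonneg {b ω : ℝ → ℝ} {b0 b1 ω0 ω1 τ : ℝ} (hC : Cond1 b ω b0 b1 ω0 ω1) {u r u' uxx : ℝ → Hsp}
    (h : IsStrongSolutionWith b ω τ u r u' uxx) (hn : NonnegOn u τ) :
    ∀ᵐ t ∂(volume.restrict (Ioi τ)), ∀ᵐ x ∂μ01, 0 ≤ r t x := by
  have hd := ae_Ioi_iff.2 ((sol_prim h).ae_hasDerivAt isOpen_Ioi ordConnected_Ioi)
  filter_upwards [h.sel, h.dom, h.eq, hd, ae_restrict_mem measurableSet_Ioi] with t h1 h2 h3 h4 ht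
  have hpos := hn t (le_of_lt ht)
  have a1 := uxx_zero h2 hpos
  have a2 := ut_nonneg ht hn h4
  rw [h3] at a2
  filter_upwards [h1, a1, a2, hpos, Lp.coeFn_add (r t) (uxx t)] with x p1 p2 p3 p4 p5
  rcases p4.eq_or_lt with h | h
  · have q1 := p2 h.symm
    have q2 := p3 h.symm
    rw [p5, Pi.add_apply, q1, add_zero] at q2
    exact q2
  · obtain ⟨hh, q1, q2⟩ := p1
    simp only [heaviside, not_lt.2 h.le, if_false, h.ne', mem_singleton_iff] at q1
    rw [q2, q1]
    have := hC.blb t; have := hC.b0pos; have := hC.ωlb t; have := hC.ω0nonneg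
    have : 0 ≤ ω t := by linarith
    have : 0 ≤ b t := by linarith
    nlinarith [mul_nonneg ‹0 ≤ ω t› h.le]

theorem hat_clm {u u' : ℝ → Hsp} {S : Set ℝ} (h : IsPrim u u' S) (e : Hsp) :
    IsPrim (fun t => inner ℝ (u t) e) (fun t => inner ℝ (u' t) e) S := by
  have := h.clm (innerSL ℝ e)
  simpa only [innerSL_apply_apply, real_inner_comm] using this

theorem hat_prim {b ω : ℝ → ℝ} {τ : ℝ} {u r u' uxx : ℝ → Hsp} (h : IsStrongSolutionWith b ω τ u r u' uxx) (n : ℕ) :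
    IsPrim (fun t => inner ℝ (u t) (eS n)) (fun t => inner ℝ (r t) (eS n) - lam n * inner ℝ (u t) (eS n)) (Ioi τ) := by
  apply (hat_clm (sol_prim h) (eS n)).congr_ae ordConnected_Ioi
  have h1 := ae_Ioi_iff.1 h.eq
  have h2 := ae_Ioi_iff.1 h.dom
  filter_upwards [h1, h2] with t h1 h2 ht
  rw [h1 ht, inner_add_left, ibp (h2 ht)]; ring

theorem exp_prim {û r : ℝ → ℝ} {S : Set ℝ} (hS : S.OrdConnected) (l T : ℝ) (h : IsPrim û (fun t => r t - l * û t) S) :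
    IsPrim (fun t => Real.exp (-l * (T - t)) * û t) (fun t => Real.exp (-l * (T - t)) * r t) S := by
  have h1 : IsPrim (fun t => Real.exp (-l * (T - t))) (fun t => l * Real.exp (-l * (T - t))) S := by
    apply IsPrim.of_hasDerivAt hS
    · intro t _
      exact ((((hasDerivAt_id t).const_sub T).const_mul (-l)).exp).congr_deriv (by simp; ring)
    · fun_prop
  convert h1.mul_real hS h using 1
  ext t; ring

theorem compare {b ω : ℝ → ℝ} {b0 b1 ω0 ω1 τ : ℝ} (hC : Cond1 b ω b0 b1 ω0 ω1) {u r u' uxx : ℝ → Hsp}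
    (h : IsStrongSolutionWith b ω τ u r u' uxx) (hn : NonnegOn u τ) {t0 T : ℝ} (ht0 : τ < t0) (hT : t0 ≤ T)
    (a : ℕ →₀ ℝ) (ha : ∀ x ∈ Icc (0:ℝ) 1, 0 ≤ Wf a 0 x) :
    (a.sum fun n c => c * (Real.exp (-lam n * (T - t0)) * inner ℝ (u t0) (eS n))) ≤ a.sum fun n c => c * inner ℝ (u T) (eS n) := by
  have hp := fun n => exp_prim ordConnected_Ioi (lam n) T (hat_prim h n) t0 ht0 T (ht0.trans_le hT)
  simp only [sub_self, mul_zero, Real.exp_zero, one_mul] at hp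
  rw [← sub_nonneg]
  simp only [Finsupp.sum]
  rw [← Finset.sum_sub_distrib]
  simp only [← mul_sub, (hp _).2]
  simp only [← intervalIntegral.integral_const_mul]
  rw [← intervalIntegral.integral_finset_sum (fun n _ => (hp n).1.const_mul _)]
  apply intervalIntegral.integral_nonneg_of_ae_restrict hT
  have h1 := ae_Ioi_iff.1 (r_nonneg hC h hn)
  have h2 : ∀ᵐ t ∂(volume.restrict (Icc t0 T)), ∀ᵐ x ∂μ01, 0 ≤ r t x := by
    rw [ae_restrict_iff' measurableSet_Icc]
    filter_upwards [h1] with t h1 ht using h1 (ht0.trans_le ht.1)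
  filter_upwards [h2, ae_restrict_mem measurableSet_Icc] with t h2 ht
  have h3 := int_finsupp (r t) (a.mapRange (fun c => c) rfl)
  have h4 : ∑ n ∈ a.support, a n * (Real.exp (-lam n * (T - t)) * inner ℝ (r t) (eS n)) =
      Real.sqrt 2 * ∫ x in (0:ℝ)..1, r t x * Wf a (T - t) x := by
    simp only [Wf, Finsupp.sum, Finset.mul_sum]
    rw [intervalIntegral.integral_finset_sum (fun n _ => ii_mul (r t) (by fun_prop)), Finset.mul_sum]
    apply Finset.sum_congr rfl
    intro n _
    have : (fun x => r t x * (a n * Real.exp (-lam n * (T - t)) * Real.sin (nu n * x))) =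
      fun x => (a n * Real.exp (-lam n * (T - t))) * (r t x * Real.sin (nu n * x)) := by ext x; ring
    rw [this, intervalIntegral.integral_const_mul, int_eq_inner]
    field_simp
  simp only [Pi.zero_apply]
  rw [h4, ← int01]
  refine mul_nonneg (Real.sqrt_nonneg _) (integral_nonneg_of_ae ?_)
  filter_upwards [h2, ae_Ioo] with x h5 h6
  exact mul_nonneg h5 (Wf_nonneg a ha (by linarith [ht.2]) (Ioo_subset_Icc_self h6))

theorem summable_inv_sq : Summable (fun n : ℕ => 1 / ((n:ℝ) + 1)^2) := by
  have := (summable_nat_add_iff 1).2 (Real.summable_one_div_nat_pow.2 (one_lt_two))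
  simpa using this

theorem lam_ge (n : ℕ) : ((n:ℝ) + 1)^2 ≤ lam n := by
  unfold lam; have := nu_ge n; gcongr

theorem exp_lam_le (n : ℕ) {s : ℝ} (hs : 0 < s) : Real.exp (-lam n * s) ≤ (1/s) * (1 / ((n:ℝ)+1)^2) := by
  have h1 := lam_ge n
  have h2 : lam n * s ≤ Real.exp (lam n * s) := by linarith [Real.add_one_le_exp (lam n * s)]
  rw [neg_mul, Real.exp_neg, one_div_mul_one_div, ← one_div]
  apply one_div_le_one_div_of_le (by positivity)
  nlinarith

theorem csin_norm (z : ℂ) : ‖Complex.sin z‖ ≤ Real.exp |z.im| := by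
  rw [Complex.sin]
  rw [norm_div, norm_mul, Complex.norm_I, mul_one, Complex.norm_ofNat]
  have h1 : ‖Complex.exp (-z * Complex.I)‖ ≤ Real.exp |z.im| := by
    rw [Complex.norm_exp]; gcongr; simp; exact le_abs_self _
  have h2 : ‖Complex.exp (z * Complex.I)‖ ≤ Real.exp |z.im| := by
    rw [Complex.norm_exp]; gcongr; simp; exact neg_le_abs _
  have := norm_sub_le (Complex.exp (-z * Complex.I)) (Complex.exp (z * Complex.I))
  linarith

theorem heat_zero_countable (d : ℕ → ℝ) {C s : ℝ} (hs : 0 < s) (hd : ∀ n, |d n| ≤ C * Real.exp (-lam n * s))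
    (hne : ∃ x : ℝ, ∑' n, d n * Real.sin (nu n * x) ≠ 0) : {x : ℝ | ∑' n, d n * Real.sin (nu n * x) = 0}.Countable := by
  have hC : 0 ≤ C := by
    have := (abs_nonneg _).trans (hd 0)
    exact nonneg_of_mul_nonneg_left this (Real.exp_pos _)
  let F : ℂ → ℂ := fun z => ∑' n, (d n : ℂ) * Complex.sin (nu n * z)
  have hF : ∀ x : ℝ, F x = ((∑' n, d n * Real.sin (nu n * x) : ℝ) : ℂ) := by
    intro x; simp only [F]; push_cast; rfl
  have hdiff : ∀ z, DifferentiableAt ℂ F z := by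
    intro z
    set R := ‖z‖ + 1
    have : DifferentiableOn ℂ F (Metric.ball 0 R) := by
      apply Complex.differentiableOn_tsum_of_summable_norm (u := fun n : ℕ => (C * Real.exp (R^2/(2*s)) * (1/(s/2))) * (1 / ((n:ℝ)+1)^2))
      · exact summable_inv_sq.mul_left _
      · intro n; fun_prop
      · exact Metric.isOpen_ball
      · intro n w hw
        have hw' : ‖w‖ < R := by simpa using hw
        rw [norm_mul, Complex.norm_real, Real.norm_eq_abs]
        have e1 : ‖Complex.sin (nu n * w)‖ ≤ Real.exp (nu n * R) := by
          refine (csin_norm _).trans ?_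
          gcongr
          simp only [Complex.mul_im, Complex.ofReal_re, Complex.ofReal_im, zero_mul, add_zero, abs_mul, abs_of_pos (nu_pos n)]
          have := nu_pos n
          gcongr
          exact (Complex.abs_im_le_norm w).trans hw'.le
        calc |d n| * ‖Complex.sin (nu n * w)‖ ≤ (C * Real.exp (-lam n * s)) * Real.exp (nu n * R) := by
              gcongr; exact hd n
          _ = C * Real.exp (-lam n * s + nu n * R) := by rw [Real.exp_add]; ring
          _ ≤ C * Real.exp (R^2/(2*s) + -lam n * (s/2)) := by
              refine mul_le_mul_of_nonneg_left (Real.exp_le_exp.2 ?_) hC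
              have : (R - nu n * s)^2 / (2*s) ≥ 0 := by positivity
              have e : (R - nu n * s)^2 / (2*s) = R^2/(2*s) - nu n * R + lam n * (s / 2) := by
                unfold lam; field_simp; ring
              rw [e] at this; nlinarith
          _ = C * Real.exp (R^2/(2*s)) * Real.exp (-lam n * (s/2)) := by rw [Real.exp_add]; ring
          _ ≤ C * Real.exp (R^2/(2*s)) * ((1/(s/2)) * (1 / ((n:ℝ)+1)^2)) := by
              gcongr; exact exp_lam_le n (by positivity)
          _ = _ := by ring
    exact this.differentiableAt (Metric.isOpen_ball.mem_nhds (by simp [R]))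
  have hana : AnalyticOnNhd ℂ F univ := fun z _ =>
    (DifferentiableOn.analyticAt (s := univ) (fun w _ => (hdiff w).differentiableWithinAt) Filter.univ_mem)
  apply countable_of_isolated
  intro x hx
  by_contra hfreq
  have hf : ∃ᶠ y in nhdsWithin x {x}ᶜ, y ∈ {x : ℝ | ∑' n, d n * Real.sin (nu n * x) = 0} := by
    intro h; exact hfreq h
  have ht : Filter.Tendsto (fun y : ℝ => (y:ℂ)) (nhdsWithin x {x}ᶜ) (nhdsWithin (x:ℂ) {(x:ℂ)}ᶜ) := by
    apply tendsto_nhdsWithin_of_tendsto_nhds_of_eventually_within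
    · exact (Complex.continuous_ofReal.tendsto x).mono_left nhdsWithin_le_nhds
    · filter_upwards [self_mem_nhdsWithin] with y hy
      simpa using hy
  have hf2 : ∃ᶠ z in nhdsWithin (x:ℂ) {(x:ℂ)}ᶜ, F z = 0 := by
    apply ht.frequently
    apply hf.mono
    intro y hy
    simp only [mem_setOf_eq] at hy
    rw [hF, hy]; simp
  have := hana.eqOn_zero_of_preconnected_of_frequently_eq_zero isPreconnected_univ (mem_univ _) hf2
  obtain ⟨y, hy⟩ := hne
  apply hy
  have h0 := this (mem_univ (y:ℂ))
  rw [hF] at h0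
  simpa using h0

theorem bcf_summable {d : ℕ → ℝ} (hd : Summable d) : Summable (fun n => d n • sB n) := by
  refine Summable.of_norm_bounded (hd.abs.mul_right 2) fun n => ?_
  rw [norm_smul, Real.norm_eq_abs]
  exact mul_le_mul_of_nonneg_left (sB_norm n) (abs_nonneg _)
theorem bcf_summableC {d : ℕ → ℝ} (hd : Summable d) : Summable (fun n => d n • cB n) := by
  refine Summable.of_norm_bounded (hd.abs.mul_right 2) fun n => ?_
  rw [norm_smul, Real.norm_eq_abs]
  exact mul_le_mul_of_nonneg_left (cB_norm n) (abs_nonneg _)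

theorem bcf_apply {d : ℕ → ℝ} (hd : Summable d) (x : ℝ) : (∑' n, d n • sB n) x = ∑' n, d n * sB n x :=
  ((bcf_summable hd).hasSum.mapL (BoundedContinuousFunction.evalCLM ℝ x)).tsum_eq.symm
theorem bcf_applyC {d : ℕ → ℝ} (hd : Summable d) (x : ℝ) : (∑' n, d n • cB n) x = ∑' n, d n * cB n x :=
  ((bcf_summableC hd).hasSum.mapL (BoundedContinuousFunction.evalCLM ℝ x)).tsum_eq.symm

theorem bcf_hasSum {d : ℕ → ℝ} (hd : Summable d) : HasSum (fun n => d n • eS n) (TB (∑' n, d n • sB n)) := by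
  have := (bcf_summable hd).hasSum.mapL TB
  simpa only [map_smul, eS] using this
theorem bcf_hasSumC {d : ℕ → ℝ} (hd : Summable d) : HasSum (fun n => d n • eC n) (TB (∑' n, d n • cB n)) := by
  have := (bcf_summableC hd).hasSum.mapL TB
  simpa only [map_smul, eC] using this

theorem inner_hasSum {d : ℕ → ℝ} {U : Hsp} (h : HasSum (fun n => d n • eS n) U) (m : ℕ) : inner ℝ U (eS m) = d m := by
  have h1 := h.mapL (innerSL ℝ (eS m))
  rw [real_inner_comm]
  refine h1.unique ?_
  have e : (fun b => (innerSL ℝ (eS m)) (d b • eS b)) = fun b => if b = m then d m else 0 := by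
    funext n
    simp only [innerSL_apply_apply, inner_smul_right, orthonormal_iff_ite.1 orthS]
    by_cases h : n = m
    · simp [h]
    · simp [h, Ne.symm h]
  rw [e]
  exact hasSum_ite_eq m (d m)

theorem Hsp_ext {f g : Hsp} (h : ∀ n, inner ℝ f (eS n) = inner ℝ g (eS n)) : f = g := by
  rw [← sub_eq_zero]; apply eS_complete; intro n; rw [inner_sub_left, h, sub_self]

theorem u_pos {b ω : ℝ → ℝ} {b0 b1 ω0 ω1 τ : ℝ} (hC : Cond1 b ω b0 b1 ω0 ω1) {u r u' uxx : ℝ → Hsp}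
    (h : IsStrongSolutionWith b ω τ u r u' uxx) (hn : NonnegOn u τ) (h0 : 0 < ‖u τ‖) {T : ℝ} (hT : τ < T) :
    ∀ᵐ x ∂μ01, 0 < u T x := by
  obtain ⟨t0, ht0, ht0T, hne⟩ : ∃ t0, τ < t0 ∧ t0 < T ∧ u t0 ≠ 0 := by
    have hc : ContinuousWithinAt u (Ioi τ) τ := (h.cont τ self_mem_Ici).mono Ioi_subset_Ici_self
    have h1 : ∀ᶠ t in nhdsWithin τ (Ioi τ), u t ≠ 0 := hc.eventually_ne (norm_pos_iff.1 h0)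
    have h2 : ∀ᶠ t in nhdsWithin τ (Ioi τ), t ∈ Ioo τ T := Ioo_mem_nhdsGT hT
    obtain ⟨t, a, c⟩ := (h1.and h2).exists
    exact ⟨t, c.1, c.2, a⟩
  set s := T - t0 with hs
  have hs0 : 0 < s := by linarith
  set d : ℕ → ℝ := fun n => Real.exp (-lam n * s) * inner ℝ (u t0) (eS n) with hd
  have hdb : ∀ n, |d n| ≤ ‖u t0‖ * Real.exp (-lam n * s) := by
    intro n
    rw [hd]; simp only
    rw [abs_mul, abs_of_pos (Real.exp_pos _), mul_comm]
    gcongr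
    have := abs_real_inner_le_norm (u t0) (eS n)
    rwa [orthS.1 n, mul_one] at this
  have hsum : Summable d := by
    refine Summable.of_norm_bounded (summable_inv_sq.mul_left (‖u t0‖ * (1/s))) fun n => ?_
    refine (hdb n).trans ?_
    rw [mul_assoc]
    gcongr
    exact exp_lam_le n hs0
  set U := TB (∑' n, d n • sB n) with hU
  have hUi : ∀ m, inner ℝ U (eS m) = d m := inner_hasSum (bcf_hasSum hsum)
  have hψ : ∀ q : Polynomial ℝ, ∃ a : ℕ →₀ ℝ, (∀ x ∈ Icc (0:ℝ) 1, 0 ≤ Wf a 0 x) ∧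
      ∀ x, (Real.sin (Real.pi * x) * q.eval (Real.cos (Real.pi * x)) ^ 2) = a.sum fun n c => c * Real.sin (nu n * x) := by
    intro q
    obtain ⟨a, ha⟩ := sin_span (q^2)
    simp only [Polynomial.eval_pow] at ha
    refine ⟨a, fun x hx => ?_, ha⟩
    have : Wf a 0 x = a.sum fun n c => c * Real.sin (nu n * x) := by simp [Wf]
    rw [this, ← ha x]
    have : 0 ≤ Real.sin (Real.pi * x) := Real.sin_nonneg_of_nonneg_of_le_pi (by nlinarith [hx.1, Real.pi_pos]) (by nlinarith [hx.2, Real.pi_pos])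
    positivity
  have p1 : ∀ᵐ x ∂μ01, 0 ≤ U x := by
    apply nonneg_of_test
    intro q
    obtain ⟨a, ha1, ha2⟩ := hψ q
    simp only [ha2]
    rw [int_finsupp]
    have e : (a.sum fun n c => c * (inner ℝ U (eS n) / Real.sqrt 2)) = ∫ x in (0:ℝ)..1, u t0 x * Wf a s x := by
      simp only [Wf, Finsupp.sum, Finset.mul_sum]
      rw [intervalIntegral.integral_finset_sum (fun n _ => ii_mul (u t0) (by fun_prop))]
      apply Finset.sum_congr rfl
      intro n _
      have : (fun x => u t0 x * (a n * Real.exp (-lam n * s) * Real.sin (nu n * x))) =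
        fun x => (a n * Real.exp (-lam n * s)) * (u t0 x * Real.sin (nu n * x)) := by ext x; ring
      rw [this, intervalIntegral.integral_const_mul, int_eq_inner, hUi, hd]
      ring
    rw [e, ← int01]
    apply integral_nonneg_of_ae
    filter_upwards [hn t0 ht0.le, ae_Ioo] with x h5 h6
    exact mul_nonneg h5 (Wf_nonneg a ha1 hs0.le (Ioo_subset_Icc_self h6))
  have p2 : ∀ᵐ x ∂μ01, 0 ≤ (u T - U : Hsp) x := by
    apply nonneg_of_test
    intro q
    obtain ⟨a, ha1, ha2⟩ := hψ q
    simp only [ha2]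
    rw [int_finsupp]
    have := compare hC h hn ht0 ht0T.le a ha1
    have e : (a.sum fun n c => c * (inner ℝ (u T - U) (eS n) / Real.sqrt 2)) =
      ((a.sum fun n c => c * inner ℝ (u T) (eS n)) - (a.sum fun n c => c * (Real.exp (-lam n * (T - t0)) * inner ℝ (u t0) (eS n)))) / Real.sqrt 2 := by
      simp only [Finsupp.sum]
      rw [← Finset.sum_sub_distrib, Finset.sum_div]
      apply Finset.sum_congr rfl
      intro n _
      rw [inner_sub_left, hUi, hd]; ring
    rw [e]
    exact div_nonneg (by linarith) (Real.sqrt_nonneg _)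
  have hUx : ∀ x, (∑' n, d n • sB n) x = Real.sqrt 2 * ∑' n, d n * Real.sin (nu n * x) := by
    intro x
    rw [bcf_apply hsum, ← tsum_mul_left]
    congr 1; ext n; rw [sB_apply]; ring
  have hcount := heat_zero_countable d hs0 hdb (by
    by_contra hall
    push Not at hall
    apply hne
    apply eS_complete
    intro n
    have : U = 0 := by
      have : (∑' n, d n • sB n) = 0 := by
        ext x; rw [hUx, hall x]; simp
      rw [hU, this, map_zero]
    have h2 := hUi n
    rw [this, inner_zero_left, hd] at h2
    have := Real.exp_pos (-lam n * s)
    simpa [this.ne'] using h2.symm)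
  have hnull : ∀ᵐ x ∂μ01, x ∉ {x : ℝ | ∑' n, d n * Real.sin (nu n * x) = 0} := by
    have : ∀ᵐ x, x ∉ {x : ℝ | ∑' n, d n * Real.sin (nu n * x) = 0} := by rw [ae_iff]; simpa using hcount.measure_zero volume
    exact ae_restrict_of_ae this
  filter_upwards [p1, p2, hnull, TB_ae (∑' n, d n • sB n), Lp.coeFn_sub (u T) U] with x q1 q2 q3 q4 q5
  rw [q5, Pi.sub_apply] at q2
  have : U x ≠ 0 := by
    rw [q4, hUx]
    exact mul_ne_zero (by positivity) q3
  have : 0 < U x := lt_of_le_of_ne q1 this.symm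
  linarith

def oneH : Hsp := TB (BoundedContinuousFunction.const ℝ 1)
theorem oneH_ae : ∀ᵐ x ∂μ01, oneH x = 1 := by
  filter_upwards [TB_ae (BoundedContinuousFunction.const ℝ 1)] with x hx
  exact hx

def cn (n : ℕ) : ℝ := inner ℝ oneH (eS n)

theorem lin_eq {b ω : ℝ → ℝ} {b0 b1 ω0 ω1 τ : ℝ} (hC : Cond1 b ω b0 b1 ω0 ω1) {u r u' uxx : ℝ → Hsp}
    (h : IsStrongSolutionWith b ω τ u r u' uxx) (hn : NonnegOn u τ) (h0 : 0 < ‖u τ‖) (n : ℕ) {t : ℝ} (ht : τ < t) :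
    HasDerivAt (fun t => inner ℝ (u t) (eS n)) (-lam n * inner ℝ (u t) (eS n) + ω t * inner ℝ (u t) (eS n) + b t * cn n) t := by
  have hr : ∀ᵐ t, t ∈ Ioi τ → r t = b t • oneH + ω t • u t := by
    have h1 := ae_Ioi_iff.1 h.sel
    filter_upwards [h1] with t h1 ht
    apply Lp.ext
    filter_upwards [h1 ht, u_pos hC h hn h0 ht, oneH_ae, Lp.coeFn_add (b t • oneH) (ω t • u t),
      Lp.coeFn_smul (b t) oneH, Lp.coeFn_smul (ω t) (u t)] with x p1 p2 p3 p4 p5 p6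
    obtain ⟨hh, q1, q2⟩ := p1
    simp only [heaviside, not_lt.2 p2.le, if_false, p2.ne', mem_singleton_iff] at q1
    rw [p4, Pi.add_apply, p5, p6, Pi.smul_apply, Pi.smul_apply, p3, q2, q1]; simp
  have hp : IsPrim (fun t => inner ℝ (u t) (eS n)) (fun t => -lam n * inner ℝ (u t) (eS n) + ω t * inner ℝ (u t) (eS n) + b t * cn n) (Ioi τ) := by
    apply (hat_prim h n).congr_ae ordConnected_Ioi
    filter_upwards [hr] with t hr ht
    rw [hr ht, inner_add_left, inner_smul_left, inner_smul_left, cn]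
    simp; ring
  have hc : ContinuousOn (fun t => (inner ℝ (u t) (eS n) : ℝ)) (Ioi τ) :=
    hp.continuousOn ordConnected_Ioi isOpen_Ioi
  apply hp.hasDerivAt isOpen_Ioi _ ht
  have := hC.contb.continuousOn (s := Ioi τ)
  have := hC.contω.continuousOn (s := Ioi τ)
  fun_prop

theorem cn_bound (n : ℕ) : |cn n| ≤ 4 / ((n:ℝ) + 1) := by
  have e : cn n = Real.sqrt 2 * ((1 - Real.cos (nu n)) / nu n) := by
    rw [cn, oneH, eS, inner_TB_TB]
    simp only [BoundedContinuousFunction.const_apply, sB_apply, one_mul]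
    rw [intervalIntegral.integral_const_mul, intervalIntegral.integral_comp_mul_left _ (nu_pos n).ne', integral_sin]
    simp; ring
  rw [e, abs_mul, abs_of_nonneg (Real.sqrt_nonneg _), abs_div, abs_of_pos (nu_pos n)]
  have h1 : |1 - Real.cos (nu n)| ≤ 2 := by
    rw [abs_le]; constructor <;> linarith [Real.cos_le_one (nu n), Real.neg_one_le_cos (nu n)]
  have h2 : Real.sqrt 2 ≤ 2 := by rw [Real.sqrt_le_left] <;> norm_num
  have h3 := nu_ge n
  have h4 := nu_pos n
  calc Real.sqrt 2 * (|1 - Real.cos (nu n)| / nu n) ≤ 2 * (2 / ((n:ℝ)+1)) := by gcongr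
    _ = _ := by ring

theorem lam_le (n : ℕ) : lam n ≤ 16 * ((n:ℝ)+1)^2 := by
  unfold lam nu
  have := Real.pi_lt_four; have := Real.pi_pos
  rw [mul_pow]
  nlinarith [sq_nonneg ((n:ℝ)+1), mul_nonneg (sq_nonneg ((n:ℝ)+1)) (show 0 ≤ 16 - Real.pi^2 by nlinarith)]

theorem lam_ge_one (n : ℕ) : 1 ≤ lam n := by
  have := lam_ge n
  have : (0:ℝ) ≤ n := Nat.cast_nonneg n
  nlinarith

structure SD (τ : ℝ) (k : ℕ) (β : ℕ → ℝ → ℝ) (a : ℕ → ℝ → ℝ) : Prop where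
  der : ∀ n, ∀ t ∈ Ioi τ, HasDerivAt (a n) (-lam n * a n t + cn n * β 0 t) t
  bdd : ∀ t ∈ Ioi τ, ∃ M, ∀ n, |a n t| ≤ M
  prim : ∀ j ≤ k, IsPrim (β j) (β (j+1)) (Ioi τ)
  l2 : L2loc τ (β (k+1))

def AA (β : ℕ → ℝ → ℝ) (a : ℕ → ℝ → ℝ) : ℕ → ℕ → ℝ → ℝ
  | 0, n, t => a n t
  | j+1, n, t => -lam n * AA β a j n t + cn n * β j t

theorem IsPrim.const_mul {f f' : ℝ → ℝ} {S : Set ℝ} (h : IsPrim f f' S) (c : ℝ) :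
    IsPrim (fun t => c * f t) (fun t => c * f' t) S := by
  have := h.clm (c • ContinuousLinearMap.id ℝ ℝ)
  simpa using this

section
variable {τ : ℝ} {k : ℕ} {β : ℕ → ℝ → ℝ} {a : ℕ → ℝ → ℝ}

theorem SD.βc (h : SD τ k β a) {j : ℕ} (hj : j ≤ k) : ContinuousOn (β j) (Ioi τ) :=
  (h.prim j hj).continuousOn ordConnected_Ioi isOpen_Ioi

theorem SD.Aprim (h : SD τ k β a) (n : ℕ) {j : ℕ} (hj : j ≤ k+1) : IsPrim (AA β a j n) (AA β a (j+1) n) (Ioi τ) := by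
  induction j with
  | zero =>
    apply IsPrim.of_hasDerivAt ordConnected_Ioi (h.der n)
    have h1 : ContinuousOn (a n) (Ioi τ) := fun t ht => (h.der n t ht).continuousAt.continuousWithinAt
    have h2 := h.βc (Nat.zero_le k)
    show ContinuousOn (fun t => -lam n * a n t + cn n * β 0 t) (Ioi τ)
    fun_prop
  | succ j ih =>
    exact ((ih (by omega)).const_mul (-lam n)).add ((h.prim j (by omega)).const_mul (cn n))

theorem SD.Acont (h : SD τ k β a) (n : ℕ) {j : ℕ} (hj : j ≤ k+1) : ContinuousOn (AA β a j n) (Ioi τ) :=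
  (h.Aprim n hj).continuousOn ordConnected_Ioi isOpen_Ioi

theorem SD.Ader (h : SD τ k β a) (n : ℕ) {j : ℕ} (hj : j ≤ k) {t : ℝ} (ht : t ∈ Ioi τ) :
    HasDerivAt (AA β a j n) (AA β a (j+1) n t) t :=
  (h.Aprim n (by omega)).hasDerivAt isOpen_Ioi (h.Acont n (by omega)) ht

theorem SD.crude (h : SD τ k β a) {t : ℝ} (ht : t ∈ Ioi τ) (j : ℕ) : ∃ M, 0 ≤ M ∧ ∀ n, |AA β a j n t| ≤ M * lam n ^ j := by
  induction j with
  | zero =>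
    obtain ⟨M, hM⟩ := h.bdd t ht
    exact ⟨M, (abs_nonneg _).trans (hM 0), fun n => by simpa [AA] using hM n⟩
  | succ j ih =>
    obtain ⟨M, hM0, hM⟩ := ih
    refine ⟨M + 4 * |β j t|, by positivity, fun n => ?_⟩
    simp only [AA]
    refine (abs_add_le _ _).trans ?_
    rw [abs_mul, abs_mul, abs_neg, abs_of_pos (lam_pos n)]
    have h1 : |cn n| ≤ 4 := (cn_bound n).trans (by
      rw [div_le_iff₀ (by positivity)]; nlinarith [(Nat.cast_nonneg n : (0:ℝ) ≤ n)])
    have h2 : 1 ≤ lam n ^ (j+1) := one_le_pow₀ (lam_ge_one n)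
    have h3 := lam_pos n
    have h4 := hM n
    calc lam n * |AA β a j n t| + |cn n| * |β j t| ≤ lam n * (M * lam n ^ j) + 4 * |β j t| := by gcongr
      _ ≤ lam n * (M * lam n ^ j) + 4 * |β j t| * lam n ^ (j+1) := by
          have : 0 ≤ 4 * |β j t| := by positivity
          nlinarith
      _ = _ := by ring

theorem energy_r (l c y g : ℝ) (hl : 0 < l) : -l * y^2 + 2 * c * g * y ≤ c^2 / l * g^2 := by
  have : 0 ≤ (l * y - c * g)^2 / l := by positivity
  have e : (l * y - c * g)^2 / l = l * y^2 - 2 * c * g * y + c^2/l * g^2 := by field_simp; ring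
  linarith

theorem sq_prim {l c : ℝ} {y g : ℝ → ℝ} (hp : IsPrim y (fun t => -l * y t + c * g t) (Ioi τ)) :
    IsPrim (fun t => y t ^ 2) (fun t => (-l * y t ^2 + 2 * c * g t * y t) - l * y t^2) (Ioi τ) := by
  have h1 := hp.mul_real ordConnected_Ioi hp
  convert h1 using 1
  · ext t; ring
  · ext t; ring

theorem energy1 {l c : ℝ} (hl : 0 < l) {y g : ℝ → ℝ} (hp : IsPrim y (fun t => -l * y t + c * g t) (Ioi τ)) (hg : L2loc τ g)
    {t0 t : ℝ} (ht0 : τ < t0) (ht : t0 ≤ t) :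
    y t ^ 2 ≤ Real.exp (-l * (t - t0)) * y t0 ^ 2 + c^2 / l * ∫ s in t0..t, g s ^ 2 := by
  obtain ⟨i1, e1⟩ := exp_prim ordConnected_Ioi l t (sq_prim hp) t0 ht0 t (ht0.trans_le ht)
  simp only [sub_self, mul_zero, Real.exp_zero, one_mul] at e1
  have i2 : IntervalIntegrable (fun s => g s ^ 2) volume t0 t := by
    rw [intervalIntegrable_iff_integrableOn_Ioc_of_le ht]
    exact (hg t0 t ht0).integrable_sq
  have : ∫ s in t0..t, Real.exp (-l * (t - s)) * (-l * y s ^2 + 2 * c * g s * y s) ≤ ∫ s in t0..t, c^2 / l * g s ^ 2 := by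
    apply intervalIntegral.integral_mono_on ht i1 (i2.const_mul _)
    intro s hs
    have h1 : Real.exp (-l * (t - s)) ≤ 1 := Real.exp_le_one_iff.2 (by nlinarith [hs.2])
    have h2 := energy_r l c (y s) (g s) hl
    have h3 : 0 ≤ c^2 / l * g s ^ 2 := by positivity
    calc Real.exp (-l * (t - s)) * (-l * y s ^2 + 2 * c * g s * y s) ≤ Real.exp (-l * (t - s)) * (c^2 / l * g s ^ 2) := by gcongr
      _ ≤ _ := mul_le_of_le_one_left h3 h1
  rw [intervalIntegral.integral_const_mul] at this
  linarith

theorem energy2 {l c : ℝ} (hl : 0 < l) {y g : ℝ → ℝ} (hp : IsPrim y (fun t => -l * y t + c * g t) (Ioi τ)) (hg : L2loc τ g)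
    {t0 t : ℝ} (ht0 : τ < t0) (ht : t0 ≤ t) :
    l * ∫ s in t0..t, y s ^ 2 ≤ y t0 ^ 2 + c^2 / l * ∫ s in t0..t, g s ^ 2 := by
  obtain ⟨i1, e1⟩ := sq_prim hp t0 ht0 t (ht0.trans_le ht)
  have i2 : IntervalIntegrable (fun s => g s ^ 2) volume t0 t := by
    rw [intervalIntegrable_iff_integrableOn_Ioc_of_le ht]
    exact (hg t0 t ht0).integrable_sq
  have i3 : IntervalIntegrable (fun s => y s ^ 2) volume t0 t := by
    apply ContinuousOn.intervalIntegrable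
    exact (hp.continuousOn_uIcc ordConnected_Ioi ht0 (ht0.trans_le ht)).pow 2
  have : ∫ s in t0..t, ((-l * y s ^2 + 2 * c * g s * y s) - l * y s^2) ≤ ∫ s in t0..t, (c^2 / l * g s ^ 2 - l * y s ^ 2) := by
    apply intervalIntegral.integral_mono_on ht i1 ((i2.const_mul _).sub (i3.const_mul _))
    intro s hs
    have h2 := energy_r l c (y s) (g s) hl
    linarith
  rw [intervalIntegral.integral_sub (i2.const_mul _) (i3.const_mul _), intervalIntegral.integral_const_mul, intervalIntegral.integral_const_mul] at this
  have := sq_nonneg (y t)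
  linarith

theorem exp_pow_le (m n : ℕ) {s : ℝ} (hs : 0 < s) : Real.exp (-lam n * s) * lam n ^ m ≤ m.factorial / s ^ m := by
  have h1 := Real.pow_div_factorial_le_exp (x := lam n * s) (by have := lam_pos n; positivity) m
  rw [neg_mul, Real.exp_neg, inv_mul_le_iff₀ (Real.exp_pos _), mul_div_assoc', le_div_iff₀ (by positivity), ← mul_pow]
  rwa [div_le_iff₀ (by positivity)] at h1

theorem SD.top (h : SD τ k β a) {t1 T : ℝ} (ht1 : τ < t1) :
    ∃ C, 0 ≤ C ∧ ∀ n, ∀ t ∈ Icc t1 T, |AA β a (k+1) n t| ≤ C / ((n:ℝ)+1)^2 := by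
  set t0 := (τ + t1)/2 with ht0
  have h0 : τ < t0 := by rw [ht0]; linarith
  have h01 : t0 < t1 := by rw [ht0]; linarith
  obtain ⟨M, hM0, hM⟩ := h.crude h0 (k+1)
  set s := t1 - t0
  have hs : 0 < s := by simp only [s]; linarith
  set Gt := ∫ s in Ioc t0 T, β (k+1) s ^ 2 with hG
  have hG0 : 0 ≤ Gt := integral_nonneg fun _ => sq_nonneg _
  set m := (k+1) + (k+1) + 2 with hm
  set C2 := M^2 * (m.factorial / s^m) + 16 * Gt with hC2
  have hC20 : 0 ≤ C2 := by positivity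
  refine ⟨Real.sqrt C2, Real.sqrt_nonneg _, fun n t ht => ?_⟩
  have hn : (0:ℝ) < (n:ℝ) + 1 := by positivity
  apply abs_le_of_sq_le_sq _ (by positivity)
  rw [div_pow, Real.sq_sqrt hC20]
  have e1 := energy1 (lam_pos n) (h.Aprim n le_rfl) h.l2 h0 (h01.le.trans ht.1)
  have hl := lam_pos n
  have hlg := lam_ge n
  have b1 : Real.exp (-lam n * (t - t0)) * AA β a (k+1) n t0 ^ 2 ≤ M^2 * (m.factorial / s^m) / (((n:ℝ)+1)^2)^2 := by
    have q1 : AA β a (k+1) n t0 ^ 2 ≤ (M * lam n ^ (k+1))^2 := by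
      rw [← sq_abs]; gcongr; exact hM n
    have q2 : Real.exp (-lam n * (t - t0)) ≤ Real.exp (-lam n * s) := by
      apply Real.exp_le_exp.2
      have : s ≤ t - t0 := by simp only [s]; linarith [ht.1]
      nlinarith
    have q3 := exp_pow_le m n hs
    calc _ ≤ Real.exp (-lam n * s) * (M * lam n ^ (k+1))^2 := by gcongr
      _ = M^2 * (Real.exp (-lam n * s) * lam n ^ m) / lam n ^ 2 := by
          rw [hm]; field_simp; ring
      _ ≤ M^2 * (m.factorial / s^m) / (((n:ℝ)+1)^2)^2 := by gcongr
  have b2 : cn n ^2 / lam n * ∫ s in t0..t, β (k+1) s ^ 2 ≤ 16 * Gt / (((n:ℝ)+1)^2)^2 := by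
    have q1 : cn n ^ 2 ≤ (4 / ((n:ℝ)+1))^2 := by
      rw [← sq_abs]; gcongr; exact cn_bound n
    have q2 : ∫ s in t0..t, β (k+1) s ^ 2 ≤ Gt := by
      rw [intervalIntegral.integral_of_le (h01.le.trans ht.1), hG]
      apply setIntegral_mono_set (h.l2 t0 T h0).integrable_sq
      · exact Filter.Eventually.of_forall fun _ => sq_nonneg _
      · exact (Ioc_subset_Ioc_right ht.2).eventuallyLE
    have q3 : 0 ≤ ∫ s in t0..t, β (k+1) s ^ 2 :=
      intervalIntegral.integral_nonneg (h01.le.trans ht.1) fun _ _ => sq_nonneg _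
    calc _ ≤ (4 / ((n:ℝ)+1))^2 / (((n:ℝ)+1)^2) * Gt := by gcongr
      _ = _ := by field_simp; ring
  have : C2 / (((n:ℝ)+1)^2)^2 = M^2 * (m.factorial / s^m) / (((n:ℝ)+1)^2)^2 + 16 * Gt / (((n:ℝ)+1)^2)^2 := by
    rw [hC2]; ring
  rw [this]
  linarith

theorem SD.step (h : SD τ k β a) {t1 T : ℝ} (ht1 : τ < t1) {j : ℕ} (hj : j ≤ k)
    (hb : ∃ C, 0 ≤ C ∧ ∀ n, ∀ t ∈ Icc t1 T, |AA β a (j+1) n t| ≤ C / ((n:ℝ)+1)^2) :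
    ∃ C, 0 ≤ C ∧ ∀ n, ∀ t ∈ Icc t1 T, |AA β a j n t| ≤ C / ((n:ℝ)+1)^3 := by
  obtain ⟨C, hC0, hC⟩ := hb
  obtain ⟨B, hB⟩ := isCompact_Icc.exists_bound_of_continuousOn ((h.βc hj).mono (fun t (ht : t ∈ Icc t1 T) => lt_of_lt_of_le ht1 ht.1))
  refine ⟨4 * |B| + C, by positivity, fun n t ht => ?_⟩
  have hn : (1:ℝ) ≤ (n:ℝ) + 1 := by have : (0:ℝ) ≤ n := Nat.cast_nonneg n; linarith
  have hl := lam_pos n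
  have e : AA β a j n t = (cn n * β j t - AA β a (j+1) n t) / lam n := by
    simp only [AA]; field_simp; ring
  have hB' : |β j t| ≤ |B| := (hB t ht).trans (le_abs_self _)
  rw [e, abs_div, abs_of_pos hl]
  have h1 : |cn n * β j t - AA β a (j+1) n t| ≤ (4 * |B| + C) / ((n:ℝ)+1) := by
    refine (abs_sub _ _).trans ?_
    rw [abs_mul]
    have := cn_bound n
    calc _ ≤ 4 / ((n:ℝ)+1) * |B| + C / ((n:ℝ)+1)^2 := by gcongr; exact hC n t ht
      _ ≤ 4 / ((n:ℝ)+1) * |B| + C / ((n:ℝ)+1) := by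
        gcongr; nlinarith
      _ = _ := by ring
  calc _ ≤ (4 * |B| + C) / ((n:ℝ)+1) / (((n:ℝ)+1)^2) := by gcongr; exact lam_ge n
    _ = _ := by field_simp

theorem SD.bdd2 (h : SD τ k β a) {t1 T : ℝ} (ht1 : τ < t1) {j : ℕ} (hj : j ≤ k + 1) :
    ∃ C, 0 ≤ C ∧ ∀ n, ∀ t ∈ Icc t1 T, |AA β a j n t| ≤ C / ((n:ℝ)+1)^2 := by
  induction hj using Nat.decreasingInduction with
  | self => exact h.top ht1
  | of_succ j hj ih =>
    obtain ⟨C, h0, h1⟩ := h.step ht1 (by omega) ih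
    refine ⟨C, h0, fun n t ht => (h1 n t ht).trans ?_⟩
    have hn : (1:ℝ) ≤ (n:ℝ) + 1 := by have : (0:ℝ) ≤ n := Nat.cast_nonneg n; linarith
    gcongr
    · norm_num

theorem SD.bdd3 (h : SD τ k β a) {t1 T : ℝ} (ht1 : τ < t1) {j : ℕ} (hj : j ≤ k) :
    ∃ C, 0 ≤ C ∧ ∀ n, ∀ t ∈ Icc t1 T, |AA β a j n t| ≤ C / ((n:ℝ)+1)^3 :=
  h.step ht1 hj (h.bdd2 ht1 (by omega))

theorem SD.bddL2 (h : SD τ k β a) {t1 T : ℝ} (ht1 : τ < t1) (hT : t1 ≤ T) :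
    ∃ C, 0 ≤ C ∧ ∀ n, ∫ t in t1..T, AA β a (k+2) n t ^ 2 ≤ C / ((n:ℝ)+1)^2 := by
  obtain ⟨C, hC0, hC⟩ := h.bdd2 (T := T) ht1 le_rfl
  set Gt := ∫ s in t1..T, β (k+1) s ^ 2 with hG
  have hG0 : 0 ≤ Gt := intervalIntegral.integral_nonneg hT fun _ _ => sq_nonneg _
  refine ⟨32 * C^2 + 64 * Gt, by positivity, fun n => ?_⟩
  have hn : (1:ℝ) ≤ (n:ℝ) + 1 := by have : (0:ℝ) ≤ n := Nat.cast_nonneg n; linarith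
  have hl := lam_pos n
  have hp := h.Aprim n (le_refl (k+1))
  have e1 := energy2 hl hp h.l2 ht1 hT
  have i2 : IntervalIntegrable (fun s => β (k+1) s ^ 2) volume t1 T := by
    rw [intervalIntegrable_iff_integrableOn_Ioc_of_le hT]
    exact (h.l2 t1 T ht1).integrable_sq
  have i3 : IntervalIntegrable (fun s => AA β a (k+1) n s ^ 2) volume t1 T := by
    apply ContinuousOn.intervalIntegrable
    exact (hp.continuousOn_uIcc ordConnected_Ioi ht1 (ht1.trans_le hT)).pow 2
  have e2 : ∫ t in t1..T, AA β a (k+2) n t ^ 2 ≤ ∫ t in t1..T, (2 * lam n ^ 2 * AA β a (k+1) n t ^ 2 + 2 * cn n ^2 * β (k+1) t ^ 2) := by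
    have hle : ∀ t, AA β a (k+2) n t ^ 2 ≤ (2 * lam n ^ 2 * AA β a (k+1) n t ^ 2 + 2 * cn n ^2 * β (k+1) t ^ 2) := by
      intro t
      have : AA β a (k+2) n t = -lam n * AA β a (k+1) n t + cn n * β (k+1) t := rfl
      rw [this]; nlinarith [sq_nonneg (lam n * AA β a (k+1) n t + cn n * β (k+1) t)]
    rw [intervalIntegral.integral_of_le hT, intervalIntegral.integral_of_le hT]
    apply integral_mono_of_nonneg
    · exact Filter.Eventually.of_forall fun _ => sq_nonneg _
    · exact ((i3.const_mul _).add (i2.const_mul _)).1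
    · exact Filter.Eventually.of_forall hle
  rw [intervalIntegral.integral_add (i3.const_mul _) (i2.const_mul _), intervalIntegral.integral_const_mul, intervalIntegral.integral_const_mul] at e2
  refine e2.trans ?_
  rw [← hG] at e1 ⊢
  have q1 : cn n ^ 2 ≤ (4 / ((n:ℝ)+1))^2 := by
    rw [← sq_abs]; gcongr; exact cn_bound n
  have q2 : AA β a (k+1) n t1 ^ 2 ≤ (C / ((n:ℝ)+1)^2)^2 := by
    rw [← sq_abs]; gcongr; exact hC n t1 ⟨le_rfl, hT⟩
  have q3 := lam_le n
  have e3 : 2 * lam n ^ 2 * ∫ s in t1..T, AA β a (k+1) n s ^ 2 ≤ 2 * lam n * (AA β a (k+1) n t1 ^ 2) + 2 * cn n^2 * Gt := by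
    have := mul_le_mul_of_nonneg_left e1 (show 0 ≤ 2 * lam n by positivity)
    have e4 : 2 * lam n * (AA β a (k+1) n t1 ^ 2 + cn n^2 / lam n * Gt) = 2 * lam n * (AA β a (k+1) n t1 ^ 2) + 2 * cn n^2 * Gt := by
      field_simp
    rw [e4] at this
    linarith
  calc _ ≤ 2 * lam n * (AA β a (k+1) n t1 ^ 2) + 4 * cn n^2 * Gt := by linarith
    _ ≤ 2 * (16 * ((n:ℝ)+1)^2) * (C / ((n:ℝ)+1)^2)^2 + 4 * (4 / ((n:ℝ)+1))^2 * Gt := by gcongr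
    _ = _ := by field_simp; ring
end

abbrev l2s : Type := lp (fun _ : ℕ => ℝ) 2

theorem mem2 {a : ℕ → ℝ} : Memℓp a 2 ↔ Summable (fun n => a n ^ 2) := by
  rw [memℓp_gen_iff (by norm_num)]
  simp

open Classical in
def m2 (a : ℕ → ℝ) : l2s := if h : Memℓp a 2 then ⟨a, h⟩ else 0

theorem m2_apply {a : ℕ → ℝ} (h : Summable (fun n => a n ^ 2)) (n : ℕ) : m2 a n = a n := by
  rw [m2, dif_pos (mem2.2 h)]

theorem l2s_norm_sq (x : l2s) : ‖x‖ ^ 2 = ∑' n, x n ^ 2 := by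
  have := lp.norm_rpow_eq_tsum (p := 2) (by norm_num) x
  simpa using this

def LB (τ : ℝ) (f : ℕ → ℝ → ℝ) : Prop :=
  ∀ t1 T, τ < t1 → ∃ C, 0 ≤ C ∧ ∀ n : ℕ, ∀ t ∈ Icc t1 T, |f n t| ≤ C / ((n:ℝ) + 1)

theorem LB.summable {τ : ℝ} {f : ℕ → ℝ → ℝ} (h : LB τ f) {t : ℝ} (ht : τ < t) :
    Summable (fun n => f n t ^ 2) := by
  obtain ⟨C, hC, hb⟩ := h t t ht
  refine Summable.of_nonneg_of_le (fun _ => sq_nonneg _) (fun n => ?_) (summable_inv_sq.mul_left (C^2))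
  have := hb n t ⟨le_rfl, le_rfl⟩
  rw [← sq_abs]
  calc _ ≤ (C / ((n:ℝ)+1))^2 := by gcongr
    _ = _ := by field_simp

theorem m2_cont {τ : ℝ} {f : ℕ → ℝ → ℝ} (hc : ∀ n, ContinuousOn (f n) (Ioi τ)) (h : LB τ f) :
    ContinuousOn (fun t => m2 (fun n => f n t)) (Ioi τ) := by
  intro t0 ht0
  have ht0' : τ < t0 := ht0
  apply ContinuousAt.continuousWithinAt
  rw [ContinuousAt, tendsto_iff_norm_sub_tendsto_zero]
  obtain ⟨C, hC, hb⟩ := h ((τ + t0)/2) (t0 + 1) (by linarith)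
  have hnb : Icc ((τ + t0)/2) (t0+1) ∈ nhds t0 := Icc_mem_nhds (by linarith) (by linarith)
  have key : Filter.Tendsto (fun t => ∑' n, (f n t - f n t0)^2) (nhds t0) (nhds (∑' n : ℕ, (0:ℝ))) := by
    refine tendsto_tsum_of_dominated_convergence (bound := fun n : ℕ => (4*C^2) * (1 / ((n:ℝ)+1)^2)) (summable_inv_sq.mul_left _) ?_ ?_
    · intro n
      have : ContinuousAt (f n) t0 := (hc n).continuousAt (Ioi_mem_nhds ht0)
      have h2 := (this.sub (continuousAt_const (y := f n t0))).pow 2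
      have h3 : (f n t0 - f n t0)^2 = 0 := by simp
      have := h2.tendsto
      simp only [Pi.pow_apply, Pi.sub_apply, h3] at this
      exact this
    · filter_upwards [hnb] with t ht n
      have h1 := hb n t ht
      have h2 := hb n t0 (mem_of_mem_nhds hnb)
      rw [Real.norm_eq_abs, abs_of_nonneg (sq_nonneg _), ← sq_abs]
      calc _ ≤ (C / ((n:ℝ)+1) + C / ((n:ℝ)+1))^2 := by
            gcongr
            exact (abs_sub _ _).trans (add_le_add h1 h2)
        _ = _ := by field_simp; ring
  rw [tsum_zero] at key
  have key2 := (Real.continuous_sqrt.tendsto _).comp key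
  rw [Real.sqrt_zero] at key2
  refine key2.congr' ?_
  filter_upwards [Ioi_mem_nhds ht0] with t ht
  rw [Function.comp_apply, ← Real.sqrt_sq (norm_nonneg (m2 (fun n => f n t) - m2 (fun n => f n t0))), l2s_norm_sq]
  congr 2
  funext n
  rw [lp.coeFn_sub, Pi.sub_apply, m2_apply (h.summable ht), m2_apply (h.summable ht0)]

theorem m2_prim {τ : ℝ} {f g : ℕ → ℝ → ℝ} (hf : LB τ f) (hg : L2loc τ (fun t => m2 (fun n => g n t)))
    (hs : ∀ a c, τ < a → ∀ᵐ t ∂(volume.restrict (Ioc a c)), Summable (fun n => g n t ^ 2))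
    (hp : ∀ n, IsPrim (f n) (g n) (Ioi τ)) :
    IsPrim (fun t => m2 (fun n => f n t)) (fun t => m2 (fun n => g n t)) (Ioi τ) := by
  intro a ha c hc
  have hii := hg.intervalIntegrable ha hc
  refine ⟨hii, ?_⟩
  ext n
  rw [lp.coeFn_sub, Pi.sub_apply, m2_apply (hf.summable hc), m2_apply (hf.summable ha), (hp n a ha c hc).2]
  have := ContinuousLinearMap.intervalIntegral_comp_comm (lp.evalCLM ℝ (fun _ : ℕ => ℝ) 2 n) hii
  have e2 : (∫ s in a..c, m2 (fun n => g n s)) n = lp.evalCLM ℝ (fun _ : ℕ => ℝ) 2 n (∫ s in a..c, m2 (fun n => g n s)) := rfl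
  rw [e2, ← this]
  apply intervalIntegral.integral_congr_ae
  have h1 : ∀ a c, τ < a → ∀ᵐ t, t ∈ Ioc a c → g n t = lp.evalCLM ℝ (fun _ : ℕ => ℝ) 2 n (m2 (fun n => g n t)) := by
    intro a c ha
    rw [← ae_restrict_iff' measurableSet_Ioc]
    filter_upwards [hs a c ha] with t ht
    exact (m2_apply ht n).symm
  have : Set.uIoc a c = Ioc (min a c) (max a c) := rfl
  rw [this]
  exact h1 _ _ (lt_min ha hc)

theorem m2_L2 {τ : ℝ} {g : ℕ → ℝ → ℝ} (hg : ∀ n, L2loc τ (g n))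
    (hb : ∀ t1 T, τ < t1 → t1 ≤ T → ∃ M : ℕ → ℝ, Summable M ∧ ∀ n, ∫ t in t1..T, g n t ^ 2 ≤ M n) :
    L2loc τ (fun t => m2 (fun n => g n t)) ∧
    ∀ a c, τ < a → ∀ᵐ t ∂(volume.restrict (Ioc a c)), Summable (fun n => g n t ^ 2) := by
  have main : ∀ a c, τ < a → MemLp (fun t => m2 (fun n => g n t)) 2 (volume.restrict (Ioc a c)) ∧
    ∀ᵐ t ∂(volume.restrict (Ioc a c)), Summable (fun n => g n t ^ 2) := by
    intro a c ha
    rcases lt_or_ge c a with hca | hac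
    · rw [Ioc_eq_empty (not_lt.2 hca.le)]; simp
    obtain ⟨M, hM, hMb⟩ := hb a c ha hac
    have hmeas : ∀ n, AEMeasurable (fun t => ENNReal.ofReal (g n t ^ 2)) (volume.restrict (Ioc a c)) := fun n =>
      ((hg n a c ha).aestronglyMeasurable.aemeasurable.pow_const 2).ennreal_ofReal
    have hM0 : ∀ n, 0 ≤ M n := fun n => le_trans (intervalIntegral.integral_nonneg hac fun _ _ => sq_nonneg _) (hMb n)
    have hfin : ∫⁻ t in Ioc a c, ∑' n, ENNReal.ofReal (g n t ^ 2) ≠ ⊤ := by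
      rw [lintegral_tsum hmeas]
      have : ∀ n, ∫⁻ t in Ioc a c, ENNReal.ofReal (g n t ^ 2) ≤ ENNReal.ofReal (M n) := by
        intro n
        rw [← ofReal_integral_eq_lintegral_ofReal (hg n a c ha).integrable_sq (Filter.Eventually.of_forall fun _ => sq_nonneg _)]
        apply ENNReal.ofReal_le_ofReal
        rw [← intervalIntegral.integral_of_le hac]
        exact hMb n
      refine ne_top_of_le_ne_top ?_ (ENNReal.tsum_le_tsum this)
      rw [← ENNReal.ofReal_tsum_of_nonneg hM0 hM]
      exact ENNReal.ofReal_ne_top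
    have hsum : ∀ᵐ t ∂(volume.restrict (Ioc a c)), Summable (fun n => g n t ^ 2) := by
      have := ae_lt_top' (AEMeasurable.tsum hmeas) hfin
      filter_upwards [this] with t ht
      have := ENNReal.summable_toReal ht.ne
      simpa [ENNReal.toReal_ofReal, sq_nonneg] using this
    refine ⟨?_, hsum⟩
    have hm : AEStronglyMeasurable (fun t => m2 (fun n => g n t)) (volume.restrict (Ioc a c)) := by
      refine aestronglyMeasurable_of_tendsto_ae Filter.atTop (f := fun (N : ℕ) t => ∑ n ∈ Finset.range N, g n t • (lp.single 2 n (1:ℝ) : l2s)) ?_ ?_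
      · intro N
        apply Finset.aestronglyMeasurable_fun_sum
        intro n _
        exact (hg n a c ha).aestronglyMeasurable.smul_const _
      · filter_upwards [hsum] with t ht
        have := (lp.hasSum_single (p := 2) (by norm_num) (m2 (fun n => g n t))).tendsto_sum_nat
        refine this.congr fun N => ?_
        apply Finset.sum_congr rfl
        intro n _
        rw [m2_apply ht, ← lp.single_smul]; simp
    rw [memLp_two_iff_integrable_sq_norm hm]
    refine ⟨(hm.norm.pow 2), ?_⟩
    rw [hasFiniteIntegral_iff_ofReal (Filter.Eventually.of_forall fun _ => sq_nonneg _)]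
    refine lt_of_le_of_lt (le_of_eq ?_) hfin.lt_top
    apply lintegral_congr_ae
    filter_upwards [hsum] with t ht
    rw [l2s_norm_sq, ENNReal.ofReal_tsum_of_nonneg (fun _ => sq_nonneg _)]
    · simp_rw [m2_apply ht]
    · simp_rw [m2_apply ht]; exact ht
  exact ⟨fun a c ha => (main a c ha).1, fun a c ha => (main a c ha).2⟩

def Ts : l2s →L[ℝ] Hsp := (orthS.orthogonalFamily.linearIsometry).toContinuousLinearMap
def Tc : l2s →L[ℝ] Hsp := (orthC.orthogonalFamily.linearIsometry).toContinuousLinearMap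

theorem Ts_hasSum {a : ℕ → ℝ} (h : Summable (fun n => a n ^ 2)) : HasSum (fun n => a n • eS n) (Ts (m2 a)) := by
  have := orthS.orthogonalFamily.hasSum_linearIsometry (m2 a)
  simp_rw [m2_apply h] at this
  simp only [LinearIsometry.toSpanSingleton_apply] at this
  exact this
theorem Tc_hasSum {a : ℕ → ℝ} (h : Summable (fun n => a n ^ 2)) : HasSum (fun n => a n • eC n) (Tc (m2 a)) := by
  have := orthC.orthogonalFamily.hasSum_linearIsometry (m2 a)
  simp_rw [m2_apply h] at this
  simp only [LinearIsometry.toSpanSingleton_apply] at this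
  exact this

theorem Rg_chain {E : Type*} [NormedAddCommGroup E] [NormedSpace ℝ E] {τ : ℝ} (m : ℕ) :
    ∀ D : ℕ → ℝ → E, (∀ j < m, IsPrim (D j) (D (j+1)) (Ioi τ)) → L2loc τ (D m) → Rg τ m (D 0) := by
  induction m with
  | zero => intro D _ h; exact h
  | succ m ih =>
    intro D h h2
    exact ⟨D 1, ih (fun j => D (j+1)) (fun j hj => h (j+1) (by omega)) h2, h 0 (by omega)⟩

/-- weak derivative, tested through `L²` inner products -/
def WD (v w : Hsp) : Prop :=
  ∀ φ φ' : BoundedContinuousFunction ℝ ℝ, (∀ x, HasDerivAt φ (φ' x) x) → φ 0 = 0 → φ 1 = 0 →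
    inner ℝ v (TB φ') = - inner ℝ w (TB φ)

theorem WD.add {v w v' w' : Hsp} (h : WD v w) (h' : WD v' w') : WD (v + v') (w + w') := by
  intro φ φ' a b c
  rw [inner_add_left, inner_add_left, h φ φ' a b c, h' φ φ' a b c]; ring

theorem WD.smul {v w : Hsp} (h : WD v w) (r : ℝ) : WD (r • v) (r • w) := by
  intro φ φ' a b c
  rw [real_inner_smul_left, real_inner_smul_left, h φ φ' a b c]; ring

theorem WD.isSpatial {v w : Hsp} (h : WD v w) : IsSpatialWeakDeriv v w := by
  intro φ hφ hcs hsub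
  have hcd : Continuous (deriv φ) := hφ.continuous_deriv (by norm_num)
  obtain ⟨C, hC⟩ := hcs.exists_bound_of_continuous hφ.continuous
  obtain ⟨C', hC'⟩ := hcs.deriv.exists_bound_of_continuous hcd
  let φB := BoundedContinuousFunction.ofNormedAddCommGroup φ hφ.continuous C hC
  let φB' := BoundedContinuousFunction.ofNormedAddCommGroup (deriv φ) hcd C' hC'
  have z : ∀ x, x ∉ Ioo (0:ℝ) 1 → φ x = 0 := fun x hx => image_eq_zero_of_notMem_tsupport fun h => hx (hsub h)
  have := h φB φB' (fun x => (hφ.differentiable (by norm_num) x).hasDerivAt) (z 0 (by simp)) (z 1 (by simp))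
  rw [inner_TB, inner_TB] at this
  rw [← integral_Ioc_eq_integral_Ioo, ← integral_Ioc_eq_integral_Ioo, ← intervalIntegral.integral_of_le zero_le_one,
    ← intervalIntegral.integral_of_le zero_le_one]
  simp_rw [mul_comm (deriv φ _), mul_comm (φ _)]
  exact this

theorem wd_basis {f f' φ φ' : BoundedContinuousFunction ℝ ℝ} (hf : ∀ x, HasDerivAt f (f' x) x)
    (hφ : ∀ x, HasDerivAt φ (φ' x) x) (h0 : φ 0 = 0) (h1 : φ 1 = 0) :
    inner ℝ (TB f) (TB φ') = - inner ℝ (TB f') (TB φ) := by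
  rw [inner_TB_TB, inner_TB_TB]
  have := intervalIntegral.integral_deriv_mul_eq_sub (a := 0) (b := 1) (u := f) (v := φ) (u' := f') (v' := φ')
    (fun x _ => hf x) (fun x _ => hφ x) (f'.continuous.intervalIntegrable _ _) (φ'.continuous.intervalIntegrable _ _)
  rw [intervalIntegral.integral_add, h0, h1] at this
  · linarith
  · exact (f'.continuous.mul φ.continuous).intervalIntegrable _ _
  · exact (f.continuous.mul φ'.continuous).intervalIntegrable _ _

theorem wd_tsum {D E : Hsp} {a a' : ℕ → ℝ} {p q : ℕ → Hsp} (h : ∀ n, WD (a n • p n) (a' n • q n))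
    (hD : HasSum (fun n => a n • p n) D) (hE : HasSum (fun n => a' n • q n) E) : WD D E := by
  intro φ φ' x y z
  have h1 := (innerSL ℝ (TB φ')).hasSum hD
  have h2 := ((innerSL ℝ (TB φ)).hasSum hE).neg
  simp only [innerSL_apply_apply] at h1 h2
  rw [real_inner_comm, real_inner_comm (TB φ) E]
  refine h1.unique ?_
  have e : (fun n => inner ℝ (TB φ') (a n • p n)) = fun n => -inner ℝ (TB φ) (a' n • q n) := by
    funext n
    rw [real_inner_comm, real_inner_comm (a' n • q n)]
    exact h n φ φ' x y z
  rw [e]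
  exact h2

theorem wd_sin (n : ℕ) : WD (eS n) (nu n • eC n) := by
  intro φ φ' x y z
  have : nu n • eC n = TB (nu n • cB n) := by rw [map_smul]; rfl
  rw [this]
  refine wd_basis ?_ x y z
  intro x
  have := ((Real.hasDerivAt_sin (nu n * x)).comp x ((hasDerivAt_id x).const_mul (nu n))).const_mul (Real.sqrt 2)
  refine this.congr_deriv ?_ |>.congr_of_eventuallyEq (Filter.Eventually.of_forall fun y => ?_)
  · simp; ring
  · simp

theorem wd_cos (n : ℕ) : WD (eC n) (-nu n • eS n) := by
  intro φ φ' x y z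
  have : -nu n • eS n = TB (-nu n • sB n) := by rw [map_smul]; rfl
  rw [this]
  refine wd_basis ?_ x y z
  intro x
  have := ((Real.hasDerivAt_cos (nu n * x)).comp x ((hasDerivAt_id x).const_mul (nu n))).const_mul (Real.sqrt 2)
  refine this.congr_deriv ?_ |>.congr_of_eventuallyEq (Filter.Eventually.of_forall fun y => ?_)
  · simp; ring
  · simp

theorem wd_one : WD oneH 0 := by
  intro φ φ' x y z
  have := wd_basis (f := BoundedContinuousFunction.const ℝ 1) (f' := 0) (fun x => by simpa using! hasDerivAt_const x (1:ℝ)) x y z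
  rw [map_zero] at this
  exact this

theorem oneH_hasSum : HasSum (fun n => cn n • eS n) oneH := by
  have := hbS.hasSum_repr oneH
  simp_rw [HilbertBasis.repr_apply_apply, hbS_apply] at this
  simp_rw [cn, real_inner_comm (eS _) oneH] 
  exact this

theorem nu_le (n : ℕ) : nu n ≤ 4 * ((n:ℝ)+1) := by
  unfold nu
  have := Real.pi_lt_four
  have : (0:ℝ) ≤ n := Nat.cast_nonneg n
  nlinarith

section
variable {τ : ℝ} {k : ℕ} {β : ℕ → ℝ → ℝ} {a : ℕ → ℝ → ℝ}

theorem SD.LBa (h : SD τ k β a) {j : ℕ} (hj : j ≤ k+1) : LB τ (AA β a j) := by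
  intro t1 T ht
  obtain ⟨C, h0, h1⟩ := h.bdd2 (T := T) ht hj
  refine ⟨C, h0, fun n t ht => (h1 n t ht).trans ?_⟩
  have hn : (1:ℝ) ≤ (n:ℝ) + 1 := by have : (0:ℝ) ≤ n := Nat.cast_nonneg n; linarith
  gcongr
  nlinarith

theorem SD.LBn (h : SD τ k β a) {j : ℕ} (hj : j ≤ k+1) : LB τ (fun n t => nu n * AA β a j n t) := by
  intro t1 T ht
  obtain ⟨C, h0, h1⟩ := h.bdd2 (T := T) ht hj
  refine ⟨4*C, by positivity, fun n t ht => ?_⟩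
  rw [abs_mul, abs_of_pos (nu_pos n)]
  have h2 := h1 n t ht
  have h3 := nu_le n
  calc _ ≤ 4 * ((n:ℝ)+1) * (C / ((n:ℝ)+1)^2) := by gcongr
    _ = _ := by field_simp

variable (β a) in
def Dv (j : ℕ) (t : ℝ) : Hsp := Ts (m2 (fun n => AA β a j n t))
variable (β a) in
def Ev (j : ℕ) (t : ℝ) : Hsp := Tc (m2 (fun n => nu n * AA β a j n t))

theorem SD.Dcont (h : SD τ k β a) {j : ℕ} (hj : j ≤ k+1) : ContinuousOn (Dv β a j) (Ioi τ) :=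
  Ts.continuous.comp_continuousOn (m2_cont (fun n => h.Acont n hj) (h.LBa hj))

theorem SD.Econt (h : SD τ k β a) {j : ℕ} (hj : j ≤ k+1) : ContinuousOn (Ev β a j) (Ioi τ) :=
  Tc.continuous.comp_continuousOn (m2_cont (fun n => continuousOn_const.mul (h.Acont n hj)) (h.LBn hj))

theorem SD.Ltop (h : SD τ k β a) : L2loc τ (fun t => m2 (fun n => AA β a (k+2) n t)) ∧
    ∀ a' c, τ < a' → ∀ᵐ t ∂(volume.restrict (Ioc a' c)), Summable (fun n => AA β a (k+2) n t ^ 2) := by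
  apply m2_L2
  · intro n a' c ha
    have h1 := (L2loc_of_continuousOn (h.Acont n le_rfl) a' c ha).const_mul (-lam n)
    have h2 := (h.l2 a' c ha).const_mul (cn n)
    exact h1.add h2
  · intro t1 T ht hT
    obtain ⟨C, h0, h1⟩ := h.bddL2 ht hT
    refine ⟨_, summable_inv_sq.mul_left C, fun n => (h1 n).trans (le_of_eq (by ring))⟩

theorem SD.Dprim (h : SD τ k β a) {j : ℕ} (hj : j ≤ k+1) : IsPrim (Dv β a j) (Dv β a (j+1)) (Ioi τ) := by
  refine IsPrim.clm ?_ Ts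
  rcases Nat.lt_or_ge j (k+1) with h1 | h1
  · refine m2_prim (h.LBa hj) (L2loc_of_continuousOn (m2_cont (fun n => h.Acont n h1) (h.LBa h1))) ?_ (fun n => h.Aprim n hj)
    intro a' c ha
    rw [ae_restrict_iff' measurableSet_Ioc]
    exact Filter.Eventually.of_forall fun t ht => (h.LBa h1).summable (ha.trans ht.1)
  · obtain rfl : j = k+1 := by omega
    exact m2_prim (h.LBa hj) h.Ltop.1 h.Ltop.2 (fun n => h.Aprim n hj)

theorem SD.Eprim (h : SD τ k β a) {j : ℕ} (hj : j ≤ k) : IsPrim (Ev β a j) (Ev β a (j+1)) (Ioi τ) := by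
  refine IsPrim.clm ?_ Tc
  have h1 : j + 1 ≤ k + 1 := by omega
  refine m2_prim (h.LBn (by omega)) (L2loc_of_continuousOn (m2_cont (fun n => continuousOn_const.mul (h.Acont n h1)) (h.LBn h1))) ?_ (fun n => (h.Aprim n (by omega)).const_mul _)
  intro a' c ha
  rw [ae_restrict_iff' measurableSet_Ioc]
  exact Filter.Eventually.of_forall fun t ht => (h.LBn h1).summable (ha.trans ht.1)

theorem SD.Drg (h : SD τ k β a) : Rg τ (k+2) (Dv β a 0) := by
  apply Rg_chain (k+2) (Dv β a) (fun j hj => h.Dprim (by omega))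
  intro a' c ha
  exact Ts.comp_memLp' (h.Ltop.1 a' c ha)

theorem SD.DC (h : SD τ k β a) {j : ℕ} (m : ℕ) (hj : j + m ≤ k+1) : ContDiffOn ℝ m (Dv β a j) (Ioi τ) := by
  refine contDiffOn_of_chain (D := fun i => Dv β a (j+i)) (fun i hi t ht => ?_) (h.Dcont hj)
  exact (h.Dprim (j := j+i) (by omega)).hasDerivAt isOpen_Ioi (h.Dcont (by omega)) ht

theorem SD.EC (h : SD τ k β a) {j : ℕ} (m : ℕ) (hj : j + m ≤ k+1) : ContDiffOn ℝ m (Ev β a j) (Ioi τ) := by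
  refine contDiffOn_of_chain (D := fun i => Ev β a (j+i)) (fun i hi t ht => ?_) (h.Econt hj)
  exact (h.Eprim (j := j+i) (by omega)).hasDerivAt isOpen_Ioi (h.Econt (by omega)) ht

theorem SD.wdD (h : SD τ k β a) {j : ℕ} (hj : j ≤ k+1) {t : ℝ} (ht : t ∈ Ioi τ) : WD (Dv β a j t) (Ev β a j t) := by
  refine wd_tsum (fun n => ?_) (Ts_hasSum ((h.LBa hj).summable ht)) (Tc_hasSum ((h.LBn hj).summable ht))
  have := (wd_sin n).smul (AA β a j n t)
  rwa [smul_smul, mul_comm _ (nu n)] at this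

theorem SD.wdE (h : SD τ k β a) {j : ℕ} (hj : j ≤ k) {t : ℝ} (ht : t ∈ Ioi τ) :
    WD (Ev β a j t) (Dv β a (j+1) t + (-β j t) • oneH) := by
  have h1 := (Ts_hasSum ((h.LBa (show j+1 ≤ k+1 by omega)).summable ht)).add (oneH_hasSum.const_smul (-β j t))
  simp_rw [smul_smul, ← add_smul] at h1
  refine wd_tsum (fun n => ?_) (Tc_hasSum ((h.LBn (show j ≤ k+1 by omega)).summable ht)) h1
  have := (wd_cos n).smul (nu n * AA β a j n t)
  rw [smul_smul] at this
  convert this using 2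
  simp only [AA, lam]; ring
end

structure Setup (τ : ℝ) (k : ℕ) (u : ℝ → Hsp) (ω e : ℝ → ℝ) (β a : ℕ → ℝ → ℝ) : Prop where
  sd : SD τ k β a
  rgb : ∀ j ≤ k + 1, Rg τ (k + 1 - j) (β j)
  rge : Rg τ (k + 2) e
  eder : ∀ t ∈ Ioi τ, HasDerivAt e (ω t * e t) t
  omc : Continuous ω
  eq : ∀ t ∈ Ioi τ, u t = e t • Dv β a 0 t

theorem setup_exists {b ω : ℝ → ℝ} {b0 b1 ω0 ω1 τ : ℝ} (hC : Cond1 b ω b0 b1 ω0 ω1) {u : ℝ → Hsp}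
    (h : IsStrongSolution b ω τ u) (hn : NonnegOn u τ) (h0 : 0 < ‖u τ‖) (k : ℕ)
    (hb : Wkloc (k+1) b) (hω : Wkloc (k+1) ω) : ∃ e β a, Setup τ k u ω e β a := by
  obtain ⟨r, u', uxx, h⟩ := h
  set Om : ℝ → ℝ := fun t => ∫ s in τ..t, ω s with hOm
  have dOm : ∀ t, HasDerivAt Om (ω t) t := fun t =>
    intervalIntegral.integral_hasDerivAt_right (hC.contω.intervalIntegrable _ _)
      (hC.contω.stronglyMeasurableAtFilter _ _) hC.contω.continuousAt
  set e : ℝ → ℝ := fun t => Real.exp (Om t)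
  set f : ℝ → ℝ := fun t => Real.exp (-Om t)
  have de : ∀ t ∈ Ioi τ, HasDerivAt e (ω t * e t) t := fun t _ => by
    have := (dOm t).exp; rwa [mul_comm] at this
  have df : ∀ t ∈ Ioi τ, HasDerivAt f ((-ω t) * f t) t := fun t _ => by
    have := (dOm t).neg.exp; rwa [mul_comm] at this
  have rb := Rg_of_Wkloc hC.contb hb τ
  have rw' := Rg_of_Wkloc hC.contω hω τ
  have re : Rg τ (k+2) e := rw'.exp e de
  have rnw : Rg τ (k+1) (fun t => -ω t) := by
    have := rw'.clm (-ContinuousLinearMap.id ℝ ℝ)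
    exact this
  have rf : Rg τ (k+2) f := rnw.exp f df
  have rβ : Rg τ (k+1) (fun t => f t * b t) := Rg.smul rf.pred rb
  obtain ⟨β, β0, β1, β2, β3⟩ := rβ.chain
  have hfe : ∀ t, e t * f t = 1 := fun t => by
    show Real.exp _ * Real.exp _ = 1
    rw [← Real.exp_add]; simp
  set a : ℕ → ℝ → ℝ := fun n t => f t * inner ℝ (u t) (eS n)
  have sd : SD τ k β a := by
    refine ⟨fun n t ht => ?_, fun t ht => ⟨|f t| * ‖u t‖, fun n => ?_⟩, fun j hj => β1 j (by omega), β2⟩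
    · have := (df t ht).mul (lin_eq hC h hn h0 n ht)
      refine this.congr_deriv ?_
      rw [β0]
      simp only [a]; ring
    · simp only [a]
      rw [abs_mul]
      gcongr
      have := abs_real_inner_le_norm (u t) (eS n)
      rwa [orthS.1 n, mul_one] at this
  refine ⟨e, β, a, sd, β3, re, de, hC.contω, fun t ht => ?_⟩
  apply Hsp_ext
  intro n
  rw [real_inner_smul_left, Dv, inner_hasSum (Ts_hasSum ((sd.LBa (Nat.zero_le _)).summable ht)) n]
  show _ = e t * (f t * _)
  rw [← mul_assoc, hfe, one_mul]

section
variable {τ : ℝ} {k : ℕ} {u : ℝ → Hsp} {ω e : ℝ → ℝ} {β a : ℕ → ℝ → ℝ}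

theorem Setup.rgu (h : Setup τ k u ω e β a) : Rg τ (k+2) u :=
  (Rg.smul h.rge h.sd.Drg).congr fun t ht => (h.eq t ht).symm

theorem Setup.eC (h : Setup τ k u ω e β a) : ContDiffOn ℝ ((k+1 : ℕ)) e (Ioi τ) := h.rge.contDiffOn

theorem Setup.ckV (h : Setup τ k u ω e β a) : CkIntoV (k+1) u (Ioi τ) := by
  refine ⟨timeCk_of_contDiffOn h.rgu.contDiffOn, fun t => e t • Ev β a 0 t, fun t ht => ?_, ?_⟩
  · rw [h.eq t ht]
    exact ((h.sd.wdD (Nat.zero_le _) ht).smul _).isSpatial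
  · exact timeCk_of_contDiffOn (h.eC.smul (h.sd.EC (k+1) (by omega)))

def Dx (u : ℝ → Hsp) (e : ℝ → ℝ) (β a : ℕ → ℝ → ℝ) (i : ℕ) : ℝ → Hsp :=
  if i = 0 then u else
  if i % 2 = 0 then fun t => e t • (Dv β a (i/2) t + (-β (i/2-1) t) • oneH) else
  fun t => e t • Ev β a (i/2) t

theorem Setup.cjH (h : Setup τ k u ω e β a) {j : ℕ} (hj : j ≤ k) : CjIntoHm j (2*(k-j)+3) u (Ioi τ) := by
  refine ⟨Dx u e β a, by simp [Dx], fun i hi t ht => ?_, fun i hi => ?_⟩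
  · apply WD.isSpatial
    rcases Nat.even_or_odd' i with ⟨m, rfl | rfl⟩
    · have e2 : Dx u e β a (2*m+1) t = e t • Ev β a m t := by
        rw [Dx, if_neg (by omega), if_neg (by omega), show (2*m+1)/2 = m by omega]
      rw [e2]
      rcases Nat.eq_zero_or_pos m with rfl | hm
      · rw [Dx, if_pos (by omega), h.eq t ht]
        exact (h.sd.wdD (by omega) ht).smul _
      · rw [Dx, if_neg (by omega), if_pos (by omega), show 2*m/2 = m by omega]
        have := ((h.sd.wdD (show m ≤ k+1 by omega) ht).add (wd_one.smul (-β (m-1) t))).smul (e t)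
        rwa [smul_zero, add_zero] at this
    · rw [Dx, if_neg (by omega), if_neg (by omega), Dx, if_neg (by omega), if_pos (by omega), show (2*m+1)/2 = m by omega,
        show (2*m+1+1)/2 = m+1 by omega, show m+1-1 = m by omega]
      exact (h.sd.wdE (by omega) ht).smul _
  · apply timeCk_of_contDiffOn
    have he : ContDiffOn ℝ j e (Ioi τ) := h.eC.of_le (by exact_mod_cast (by omega : j ≤ k+1))
    unfold Dx
    split_ifs with h1 h2
    · exact h.rgu.contDiffOn.of_le (by exact_mod_cast (by omega : j ≤ k+1))
    · have hc : ContDiffOn ℝ j (β (i/2-1)) (Ioi τ) := ?_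
      · exact he.smul ((h.sd.DC j (by omega)).add (hc.neg.smul contDiffOn_const))
      have := h.rgb (i/2-1) (by omega)
      rw [show k+1-(i/2-1) = (k-(i/2-1))+1 by omega] at this
      exact this.contDiffOn.of_le (by exact_mod_cast (by omega : j ≤ k-(i/2-1)))
    · exact he.smul (h.sd.EC j (by omega))
end

theorem hasFDerivWithinAt_of_partials {τ : ℝ} {F F1 F2 : ℝ × ℝ → ℝ}
    (h1 : ∀ t ∈ Ioi τ, ∀ x ∈ Icc (0:ℝ) 1, HasDerivAt (fun s => F (s, x)) (F1 (t, x)) t)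
    (h2 : ∀ t ∈ Ioi τ, ∀ x ∈ Icc (0:ℝ) 1, HasDerivWithinAt (fun y => F (t, y)) (F2 (t, x)) (Icc 0 1) x)
    (hc : ContinuousOn F2 (Ioi τ ×ˢ Icc (0:ℝ) 1)) {p : ℝ × ℝ} (hp : p ∈ Ioi τ ×ˢ Icc (0:ℝ) 1) :
    HasFDerivWithinAt F (F1 p • ContinuousLinearMap.fst ℝ ℝ ℝ + F2 p • ContinuousLinearMap.snd ℝ ℝ ℝ)
      (Ioi τ ×ˢ Icc (0:ℝ) 1) p := by
  obtain ⟨t0, x0⟩ := p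
  have ht0 : t0 ∈ Ioi τ := hp.1
  have hx0 : x0 ∈ Icc (0:ℝ) 1 := hp.2
  rw [hasFDerivWithinAt_iff_isLittleO, Asymptotics.isLittleO_iff]
  intro ε hε
  have a1 := (h1 t0 ht0 x0 hx0)
  rw [hasDerivAt_iff_isLittleO, Asymptotics.isLittleO_iff] at a1
  obtain ⟨d1, hd1, a1⟩ := Metric.eventually_nhds_iff.1 (a1 (half_pos hε))
  obtain ⟨d2, hd2, a2⟩ := Metric.continuousOn_iff.1 hc (t0, x0) hp (ε/2) (half_pos hε)
  have hball := Metric.ball_mem_nhds (t0, x0) (lt_min hd1 hd2)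
  filter_upwards [mem_nhdsWithin_of_mem_nhds hball, self_mem_nhdsWithin] with q hq hqS
  obtain ⟨t, x⟩ := q
  have htx : dist t t0 < min d1 d2 ∧ dist x x0 < min d1 d2 := by
    have := Metric.mem_ball.1 hq
    rw [Prod.dist_eq] at this
    exact max_lt_iff.1 this
  have ht : t ∈ Ioi τ := hqS.1
  have hx : x ∈ Icc (0:ℝ) 1 := hqS.2
  have b1 := a1 (htx.1.trans_le (min_le_left _ _))
  have b2 : ‖(F (t, x) - F2 (t0, x0) * x) - (F (t, x0) - F2 (t0, x0) * x0)‖ ≤ ε/2 * ‖x - x0‖ := by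
    refine Convex.norm_image_sub_le_of_norm_hasDerivWithin_le (f := fun y => F (t, y) - F2 (t0, x0) * y)
      (f' := fun y => F2 (t, y) - F2 (t0, x0)) (s := Icc 0 1 ∩ Metric.ball x0 d2) ?_ ?_
      ((convex_Icc 0 1).inter (convex_ball x0 d2)) ⟨hx0, Metric.mem_ball_self hd2⟩ ⟨hx, Metric.mem_ball.2 (htx.2.trans_le (min_le_right _ _))⟩
    · intro y hy
      have := (h2 t ht y hy.1).mono (inter_subset_left (t := Metric.ball x0 d2))
      have h3 := ((hasDerivAt_id y).const_mul (F2 (t0, x0))).hasDerivWithinAt (s := Icc 0 1 ∩ Metric.ball x0 d2)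
      have := this.sub h3
      rw [mul_one] at this
      exact this
    · intro y hy
      have := a2 (t, y) ⟨ht, hy.1⟩ (by rw [Prod.dist_eq]; exact max_lt (htx.1.trans_le (min_le_right _ _)) hy.2)
      rw [Real.dist_eq] at this
      exact this.le
  have n1 : ‖t - t0‖ ≤ ‖(t, x) - (t0, x0)‖ := norm_fst_le ((t, x) - (t0, x0))
  have n2 : ‖x - x0‖ ≤ ‖(t, x) - (t0, x0)‖ := norm_snd_le ((t, x) - (t0, x0))
  have e : F (t, x) - F (t0, x0) - (F1 (t0, x0) • ContinuousLinearMap.fst ℝ ℝ ℝ + F2 (t0, x0) • ContinuousLinearMap.snd ℝ ℝ ℝ) ((t, x) - (t0, x0))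
      = ((F (t, x) - F2 (t0, x0) * x) - (F (t, x0) - F2 (t0, x0) * x0)) + (F (t, x0) - F (t0, x0) - (t - t0) • F1 (t0, x0)) := by
    simp; ring
  rw [e]
  refine (norm_add_le _ _).trans ?_
  calc _ ≤ ε/2 * ‖x - x0‖ + ε/2 * ‖t - t0‖ := add_le_add b2 b1
    _ ≤ ε/2 * ‖(t, x) - (t0, x0)‖ + ε/2 * ‖(t, x) - (t0, x0)‖ := by gcongr
    _ = _ := by ring

theorem contDiffOn_of_partials {τ : ℝ} {F F1 F2 : ℝ × ℝ → ℝ} {m : ℕ}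
    (h1 : ∀ t ∈ Ioi τ, ∀ x ∈ Icc (0:ℝ) 1, HasDerivAt (fun s => F (s, x)) (F1 (t, x)) t)
    (h2 : ∀ t ∈ Ioi τ, ∀ x ∈ Icc (0:ℝ) 1, HasDerivWithinAt (fun y => F (t, y)) (F2 (t, x)) (Icc 0 1) x)
    (c1 : ContDiffOn ℝ m F1 (Ioi τ ×ˢ Icc (0:ℝ) 1)) (c2 : ContDiffOn ℝ m F2 (Ioi τ ×ˢ Icc (0:ℝ) 1)) :
    ContDiffOn ℝ (m+1 : ℕ) F (Ioi τ ×ˢ Icc (0:ℝ) 1) := by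
  have hu : UniqueDiffOn ℝ (Ioi τ ×ˢ Icc (0:ℝ) 1) := (uniqueDiffOn_Ioi τ).prod (uniqueDiffOn_Icc zero_lt_one)
  push_cast
  rw [contDiffOn_succ_iff_hasFDerivWithinAt_of_uniqueDiffOn hu]
  refine ⟨fun h => by simp at h, _, ?_, fun p hp => hasFDerivWithinAt_of_partials h1 h2 c2.continuousOn hp⟩
  exact (c1.smul contDiffOn_const).add (c2.smul contDiffOn_const)

def LB2 (τ : ℝ) (f : ℕ → ℝ → ℝ) : Prop :=
  ∀ t1 T, τ < t1 → ∃ C, 0 ≤ C ∧ ∀ n : ℕ, ∀ t ∈ Icc t1 T, |f n t| ≤ C / ((n:ℝ) + 1)^2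

theorem bcf_le2 {g : BoundedContinuousFunction ℝ ℝ} (h : ‖g‖ ≤ 2) (x : ℝ) : |g x| ≤ 2 :=
  (g.norm_coe_le_norm x).trans h

theorem LB2.summ {τ : ℝ} {f : ℕ → ℝ → ℝ} (h : LB2 τ f) {t : ℝ} (ht : t ∈ Ioi τ) : Summable (fun n => f n t) := by
  obtain ⟨C, hC, hb⟩ := h t t ht
  refine Summable.of_norm_bounded (summable_inv_sq.mul_left C) fun n => ?_
  have := hb n t ⟨le_rfl, le_rfl⟩
  rw [mul_one_div]; exact this

theorem ser_bd {C : ℝ} {n : ℕ} {y z : ℝ} (h : |y| ≤ C / ((n:ℝ)+1)^2) (hz : |z| ≤ 2) (hC : 0 ≤ C) :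
    ‖y * z‖ ≤ (2*C) * (1 / ((n:ℝ)+1)^2) := by
  rw [Real.norm_eq_abs, abs_mul]
  calc _ ≤ C / ((n:ℝ)+1)^2 * 2 := by gcongr
    _ = _ := by ring

theorem nhds_Ioo_of {τ t : ℝ} (ht : t ∈ Ioi τ) : ∃ t1 T, τ < t1 ∧ t ∈ Ioo t1 T := by
  have : τ < t := ht
  exact ⟨(τ+t)/2, t+1, by linarith, by linarith, by linarith⟩

theorem ser_cont {τ : ℝ} {f : ℕ → ℝ → ℝ} (hc : ∀ n, ContinuousOn (f n) (Ioi τ)) (h : LB2 τ f)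
    {g : ℕ → BoundedContinuousFunction ℝ ℝ} (hg : ∀ n, ‖g n‖ ≤ 2) {S : Set ℝ} :
    ContinuousOn (fun p : ℝ × ℝ => ∑' n, f n p.1 * g n p.2) (Ioi τ ×ˢ S) := by
  rintro ⟨t, x⟩ ⟨ht, hx⟩
  obtain ⟨t1, T, h1, h2⟩ := nhds_Ioo_of ht
  obtain ⟨C, hC, hb⟩ := h t1 T h1
  have : ContinuousOn (fun p : ℝ × ℝ => ∑' n, f n p.1 * g n p.2) (Ioo t1 T ×ˢ univ) := by
    refine continuousOn_tsum (fun n => ?_) (summable_inv_sq.mul_left (2*C)) ?_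
    · exact ((hc n).comp continuousOn_fst fun p hp => lt_trans h1 hp.1.1).mul ((g n).continuous.comp continuous_snd).continuousOn
    · intro n p hp
      exact ser_bd (hb n p.1 ⟨hp.1.1.le, hp.1.2.le⟩) (bcf_le2 (hg n) _) hC
  exact (this.continuousAt (prod_mem_nhds (Ioo_mem_nhds h2.1 h2.2) Filter.univ_mem)).continuousWithinAt

theorem ser_dt {τ : ℝ} {f f' : ℕ → ℝ → ℝ} (hd : ∀ n, ∀ t ∈ Ioi τ, HasDerivAt (f n) (f' n t) t) (hf : LB2 τ f) (h : LB2 τ f')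
    {g : ℕ → BoundedContinuousFunction ℝ ℝ} (hg : ∀ n, ‖g n‖ ≤ 2) {t : ℝ} (ht : t ∈ Ioi τ) (x : ℝ) :
    HasDerivAt (fun s => ∑' n, f n s * g n x) (∑' n, f' n t * g n x) t := by
  obtain ⟨t1, T, h1, h2⟩ := nhds_Ioo_of ht
  obtain ⟨C, hC, hb⟩ := h t1 T h1
  obtain ⟨C', hC', hb'⟩ := hf t1 T h1
  refine hasDerivAt_tsum_of_isPreconnected (summable_inv_sq.mul_left (2*C)) isOpen_Ioo isPreconnected_Ioo
    (g := fun n s => f n s * g n x) (g' := fun n s => f' n s * g n x)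
    (fun n y hy => (hd n y (lt_trans h1 hy.1)).mul_const _)
    (fun n y hy => ser_bd (hb n y ⟨hy.1.le, hy.2.le⟩) (bcf_le2 (hg n) _) hC) h2 ?_ h2
  exact Summable.of_norm_bounded (summable_inv_sq.mul_left (2*C')) fun n => ser_bd (hb' n t ⟨h2.1.le, h2.2.le⟩) (bcf_le2 (hg n) _) hC'

theorem sB_der (n : ℕ) (x : ℝ) : HasDerivAt (sB n) (nu n * cB n x) x := by
  have := ((Real.hasDerivAt_sin (nu n * x)).comp x ((hasDerivAt_id x).const_mul (nu n))).const_mul (Real.sqrt 2)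
  refine this.congr_deriv ?_ |>.congr_of_eventuallyEq (Filter.Eventually.of_forall fun y => ?_)
  · simp; ring
  · simp

theorem cB_der (n : ℕ) (x : ℝ) : HasDerivAt (cB n) (-nu n * sB n x) x := by
  have := ((Real.hasDerivAt_cos (nu n * x)).comp x ((hasDerivAt_id x).const_mul (nu n))).const_mul (Real.sqrt 2)
  refine this.congr_deriv ?_ |>.congr_of_eventuallyEq (Filter.Eventually.of_forall fun y => ?_)
  · simp; ring
  · simp

theorem ser_dx {d : ℕ → ℝ} {g g' : ℕ → BoundedContinuousFunction ℝ ℝ} {l : ℕ → ℝ} {C : ℝ} (hg : ∀ n, ‖g n‖ ≤ 2) (hg' : ∀ n, ‖g' n‖ ≤ 2)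
    (hd : ∀ n x, HasDerivAt (g n) (l n * g' n x) x) (hs : Summable d) (hC : 0 ≤ C)
    (hb : ∀ n : ℕ, |d n * l n| ≤ C / ((n:ℝ)+1)^2) (x : ℝ) :
    HasDerivAt (fun y => ∑' n, d n * g n y) (∑' n, (d n * l n) * g' n x) x := by
  refine hasDerivAt_tsum (summable_inv_sq.mul_left (2*C)) (g := fun n y => d n * g n y) (g' := fun n y => (d n * l n) * g' n y) (y₀ := 0) ?_
    (fun n y => ser_bd (hb n) (bcf_le2 (hg' n) _) hC) ?_ x
  · intro n y
    have := (hd n y).const_mul (d n)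
    rwa [← mul_assoc] at this
  · refine Summable.of_norm_bounded (hs.abs.mul_right 2) fun n => ?_
    rw [Real.norm_eq_abs, abs_mul]
    exact mul_le_mul_of_nonneg_left (bcf_le2 (hg n) _) (abs_nonneg _)

theorem cn_eq (n : ℕ) : cn n = Real.sqrt 2 * ((1 - Real.cos (nu n)) / nu n) := by
  rw [cn, oneH, eS, inner_TB_TB]
  simp only [BoundedContinuousFunction.const_apply, sB_apply, one_mul]
  rw [intervalIntegral.integral_const_mul, intervalIntegral.integral_comp_mul_left _ (nu_pos n).ne', integral_sin]
  simp; ring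

def clampB : ℝ → ℝ := fun x => max 0 (min x 1)

def qB : BoundedContinuousFunction ℝ ℝ :=
  BoundedContinuousFunction.ofNormedAddCommGroup (fun x => clampB x * (1 - clampB x) / 2) (by unfold clampB; fun_prop) 1 (by
    intro x
    have h0 : 0 ≤ clampB x := le_max_left _ _
    have h1 : clampB x ≤ 1 := max_le zero_le_one (min_le_right _ _)
    rw [Real.norm_eq_abs, abs_le]
    constructor <;> nlinarith)

theorem qB_apply {x : ℝ} (hx : x ∈ Icc (0:ℝ) 1) : qB x = x * (1 - x) / 2 := by
  show clampB x * (1 - clampB x) / 2 = _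
  have : clampB x = x := by rw [clampB, min_eq_left hx.2, max_eq_right hx.1]
  rw [this]

theorem qB_coef (n : ℕ) : inner ℝ (TB qB) (eS n) = cn n / lam n := by
  rw [eS, inner_TB_TB]
  have hν := (nu_pos n).ne'
  have e1 : ∫ x in (0:ℝ)..1, qB x * sB n x = ∫ x in (0:ℝ)..1, Real.sqrt 2 * ((x * (1 - x) / 2) * Real.sin (nu n * x)) := by
    apply intervalIntegral.integral_congr
    intro x hx
    rw [uIcc_of_le zero_le_one] at hx
    simp only [sB_apply]
    rw [qB_apply hx]; ring
  rw [e1, intervalIntegral.integral_const_mul]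
  have := intervalIntegral.integral_eq_sub_of_hasDerivAt (a := 0) (b := 1)
    (f := fun x => -(x * (1-x)/2) * (Real.cos (nu n * x) / nu n) + (1/2 - x) * (Real.sin (nu n * x) / nu n^2) - Real.cos (nu n * x) / nu n ^ 3)
    (f' := fun x => (x * (1 - x) / 2) * Real.sin (nu n * x)) ?_ ?_
  · rw [this, cn_eq]
    simp [sin_nu, lam]
    field_simp
    ring
  · intro x _
    have hl : HasDerivAt (fun x => nu n * x) (nu n) x := by simpa using (hasDerivAt_id x).const_mul (nu n)
    have hcos := (Real.hasDerivAt_cos (nu n * x)).comp x hl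
    have hsin := (Real.hasDerivAt_sin (nu n * x)).comp x hl
    have hid := hasDerivAt_id x
    have hp : HasDerivAt (fun x : ℝ => -(x * (1-x)/2)) (-(1/2 - x)) x := by
      have := ((hid.mul (hid.const_sub 1)).div_const 2).neg
      refine this.congr_deriv ?_
      simp; ring
    have hq : HasDerivAt (fun x : ℝ => 1/2 - x) (-1) x := hid.const_sub _
    have := ((hp.mul (hcos.div_const (nu n))).add (hq.mul (hsin.div_const (nu n ^ 2)))).sub (hcos.div_const (nu n ^ 3))
    refine this.congr_deriv ?_
    simp only [Function.comp]
    field_simp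
    ring
  · apply Continuous.intervalIntegrable; fun_prop

theorem cont_eq {f g : ℝ → ℝ} (hf : ContinuousOn f (Icc 0 1)) (hg : ContinuousOn g (Icc 0 1)) (h : ∀ᵐ x ∂μ01, f x = g x) :
    EqOn f g (Ioo 0 1) := by
  intro x hx
  have h1 := cont_nonneg (hf.sub hg) (by filter_upwards [h] with x hx; simp [hx]) x hx
  have h2 := cont_nonneg (hg.sub hf) (by filter_upwards [h] with x hx; simp [hx]) x hx
  simp at h1 h2
  exact le_antisymm h2 h1

theorem cnlam_bd (n : ℕ) : |cn n / lam n| ≤ 4 / ((n:ℝ)+1)^2 := by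
  rw [abs_div, abs_of_pos (lam_pos n)]
  have h1 := cn_bound n
  have h2 := lam_ge n
  have hn : (0:ℝ) ≤ n := Nat.cast_nonneg n
  calc _ ≤ (4 / ((n:ℝ)+1)) / ((n:ℝ)+1)^2 := by gcongr
    _ ≤ 4 / ((n:ℝ)+1)^2 := by
      gcongr
      rw [div_le_iff₀ (by positivity)]; nlinarith

theorem cnnu_bd (n : ℕ) : |cn n / nu n| ≤ 4 / ((n:ℝ)+1)^2 := by
  rw [abs_div, abs_of_pos (nu_pos n)]
  have h1 := cn_bound n
  have h2 := nu_ge n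
  calc _ ≤ (4 / ((n:ℝ)+1)) / ((n:ℝ)+1) := by gcongr
    _ = _ := by field_simp

theorem summ_of_bd {d : ℕ → ℝ} {C : ℝ} (h : ∀ n : ℕ, |d n| ≤ C / ((n:ℝ)+1)^2) : Summable d :=
  Summable.of_norm_bounded (summable_inv_sq.mul_left C) fun n => by rw [mul_one_div]; exact h n

def Gs (x : ℝ) : ℝ := ∑' n, cn n / nu n * cB n x

theorem Gs_cont : Continuous Gs := by
  have h := summ_of_bd cnnu_bd
  have : Gs = (∑' n, (cn n / nu n) • cB n : BoundedContinuousFunction ℝ ℝ) := by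
    funext x; rw [bcf_applyC h]; rfl
  rw [this]; exact BoundedContinuousFunction.continuous _

theorem Gs_eq : EqOn Gs (fun x => 1/2 - x) (Icc 0 1) := by
  have hs := summ_of_bd cnlam_bd
  have e1 : TB (∑' n, (cn n / lam n) • sB n) = TB qB := by
    apply Hsp_ext; intro n
    rw [inner_hasSum (bcf_hasSum hs), qB_coef]
  have e2 : EqOn (fun x => ∑' n, cn n / lam n * sB n x) (fun x => x * (1-x)/2) (Ioo 0 1) := by
    have h1 : EqOn (∑' n, (cn n / lam n) • sB n : BoundedContinuousFunction ℝ ℝ) qB (Ioo 0 1) := by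
      apply cont_eq (BoundedContinuousFunction.continuous _).continuousOn qB.continuous.continuousOn
      filter_upwards [TB_ae (∑' n, (cn n / lam n) • sB n), TB_ae qB] with x h1 h2
      rw [← h1, ← h2, e1]
    intro x hx
    have := h1 hx
    rw [bcf_apply hs, qB_apply (Ioo_subset_Icc_self hx)] at this
    exact this
  have e3 : EqOn Gs (fun x => 1/2 - x) (Ioo 0 1) := by
    intro x hx
    have h1 : ∀ n, cn n / lam n * nu n = cn n / nu n := fun n => by
      have := (nu_pos n).ne'; unfold lam; field_simp
    have d1 := ser_dx (g := sB) (g' := cB) (l := nu) (C := 4) sB_norm cB_norm sB_der hs (by norm_num) (fun n => by rw [h1]; exact cnnu_bd n) x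
    simp_rw [h1] at d1
    have hid := hasDerivAt_id x
    have hp : HasDerivAt (fun x : ℝ => x * (1-x)/2) (1/2 - x) x := by
      have := ((hid.mul (hid.const_sub 1)).div_const 2)
      refine this.congr_deriv ?_
      simp; ring
    exact d1.unique (hp.congr_of_eventuallyEq (e2.eventuallyEq_of_mem (Ioo_mem_nhds hx.1 hx.2)))
  have := e3.closure Gs_cont (by fun_prop)
  rwa [closure_Ioo zero_ne_one] at this

section
variable {τ : ℝ} {k : ℕ} {β : ℕ → ℝ → ℝ} {a : ℕ → ℝ → ℝ}
variable (β a) in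
def Df (j : ℕ) (p : ℝ × ℝ) : ℝ := ∑' n, AA β a j n p.1 * sB n p.2
variable (β a) in
def Ef (j : ℕ) (p : ℝ × ℝ) : ℝ := ∑' n, (AA β a j n p.1 * nu n) * cB n p.2

theorem SD.LB2a (h : SD τ k β a) {j : ℕ} (hj : j ≤ k+1) : LB2 τ (AA β a j) := fun _ _ ht => h.bdd2 ht hj

theorem SD.LB2n (h : SD τ k β a) {j : ℕ} (hj : j ≤ k) : LB2 τ (fun n t => AA β a j n t * nu n) := by
  intro t1 T ht
  obtain ⟨C, h0, h1⟩ := h.bdd3 (T := T) ht hj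
  refine ⟨4*C, by positivity, fun n t ht => ?_⟩
  rw [abs_mul, abs_of_pos (nu_pos n)]
  have h2 := h1 n t ht
  have h3 := nu_le n
  have := nu_pos n
  calc _ ≤ (C / ((n:ℝ)+1)^3) * (4 * ((n:ℝ)+1)) := by gcongr
    _ = _ := by field_simp

theorem SD.Dfc (h : SD τ k β a) {j : ℕ} (hj : j ≤ k+1) : ContinuousOn (Df β a j) (Ioi τ ×ˢ Icc (0:ℝ) 1) :=
  ser_cont (fun n => h.Acont n hj) (h.LB2a hj) sB_norm

theorem SD.Efc (h : SD τ k β a) {j : ℕ} (hj : j ≤ k) : ContinuousOn (Ef β a j) (Ioi τ ×ˢ Icc (0:ℝ) 1) :=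
  ser_cont (f := fun n t => AA β a j n t * nu n) (fun n => (h.Acont n (by omega)).mul continuousOn_const) (h.LB2n hj) cB_norm

theorem SD.Dft (h : SD τ k β a) {j : ℕ} (hj : j ≤ k) {t : ℝ} (ht : t ∈ Ioi τ) (x : ℝ) :
    HasDerivAt (fun s => Df β a j (s, x)) (Df β a (j+1) (t, x)) t :=
  ser_dt (fun n t ht => h.Ader n hj ht) (h.LB2a (by omega)) (h.LB2a (by omega)) sB_norm ht x

theorem SD.Eft (h : SD τ k β a) {j : ℕ} (hj : j + 1 ≤ k) {t : ℝ} (ht : t ∈ Ioi τ) (x : ℝ) :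
    HasDerivAt (fun s => Ef β a j (s, x)) (Ef β a (j+1) (t, x)) t :=
  ser_dt (f := fun n t => AA β a j n t * nu n) (f' := fun n t => AA β a (j+1) n t * nu n)
    (fun n t ht => (h.Ader n (by omega) ht).mul_const _) (h.LB2n (by omega)) (h.LB2n (by omega)) cB_norm ht x

theorem SD.Dfx (h : SD τ k β a) {j : ℕ} (hj : j ≤ k) {t : ℝ} (ht : t ∈ Ioi τ) (x : ℝ) :
    HasDerivAt (fun y => Df β a j (t, y)) (Ef β a j (t, x)) x := by
  obtain ⟨C, hC, hb⟩ := h.LB2n hj t t ht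
  exact ser_dx (g := sB) (g' := cB) (l := nu) sB_norm cB_norm sB_der ((h.LB2a (by omega)).summ ht) hC
    (fun n => hb n t ⟨le_rfl, le_rfl⟩) x

theorem SD.Efx (h : SD τ k β a) {j : ℕ} (hj : j ≤ k) {t : ℝ} (ht : t ∈ Ioi τ) {x : ℝ} (hx : x ∈ Icc (0:ℝ) 1) :
    HasDerivWithinAt (fun y => Ef β a j (t, y)) (Df β a (j+1) (t, x) - β j t) (Icc 0 1) x := by
  obtain ⟨C, hC, hb⟩ := h.LB2a (show j+1 ≤ k+1 by omega) t t ht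
  have hb' : ∀ n : ℕ, |AA β a (j+1) n t| ≤ C / ((n:ℝ)+1)^2 := fun n => hb n t ⟨le_rfl, le_rfl⟩
  have hd : ∀ n, (-AA β a (j+1) n t / nu n) * (-nu n) = AA β a (j+1) n t := fun n => by
    have := (nu_pos n).ne'; field_simp
  have hdb : ∀ n : ℕ, |(-AA β a (j+1) n t / nu n)| ≤ C / ((n:ℝ)+1)^2 := fun n => by
    rw [abs_div, abs_neg, abs_of_pos (nu_pos n)]
    have h1 := nu_ge n
    have h2 : (0:ℝ) ≤ n := Nat.cast_nonneg n
    exact (div_le_self (abs_nonneg _) (by linarith)).trans (hb' n)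
  have hs := summ_of_bd hdb
  have d1 := ser_dx (g := cB) (g' := sB) (l := fun n => -nu n) cB_norm sB_norm cB_der hs hC (fun n => by rw [hd]; exact hb' n) x
  simp_rw [hd] at d1
  have e : ∀ y ∈ Icc (0:ℝ) 1, Ef β a j (t, y) = β j t * (1/2 - y) + ∑' n, (-AA β a (j+1) n t / nu n) * cB n y := by
    intro y hy
    have hG : Gs y = 1/2 - y := Gs_eq hy
    rw [← hG, Gs, ← tsum_mul_left, ← Summable.tsum_add]
    · apply tsum_congr; intro n
      simp only [AA, lam]
      have := (nu_pos n).ne'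
      field_simp; ring
    · apply Summable.mul_left
      refine Summable.of_norm_bounded ((summ_of_bd cnnu_bd).abs.mul_right 2) fun n => ?_
      rw [Real.norm_eq_abs, abs_mul]
      exact mul_le_mul_of_nonneg_left (bcf_le2 (cB_norm n) _) (abs_nonneg _)
    · refine Summable.of_norm_bounded (hs.abs.mul_right 2) fun n => ?_
      rw [Real.norm_eq_abs, abs_mul]
      exact mul_le_mul_of_nonneg_left (bcf_le2 (cB_norm n) _) (abs_nonneg _)
  have d2 : HasDerivAt (fun y => β j t * (1/2 - y) + ∑' n, (-AA β a (j+1) n t / nu n) * cB n y) (Df β a (j+1) (t, x) - β j t) x := by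
    refine ((((hasDerivAt_id x).const_sub (1/2)).const_mul (β j t)).add d1).congr_deriv ?_
    rw [Df]; ring
  exact d2.hasDerivWithinAt.congr e (e x hx)

theorem SD.Df_ae (h : SD τ k β a) {t : ℝ} (ht : t ∈ Ioi τ) : ∀ᵐ x ∂μ01, Df β a 0 (t, x) = Dv β a 0 t x := by
  have hs := (h.LB2a (Nat.zero_le (k+1))).summ ht
  have : Dv β a 0 t = TB (∑' n, AA β a 0 n t • sB n) :=
    (Ts_hasSum ((h.LBa (Nat.zero_le _)).summable ht)).unique (bcf_hasSum hs)
  rw [this]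
  filter_upwards [TB_ae (∑' n, AA β a 0 n t • sB n)] with x hx
  rw [hx, bcf_apply hs]; rfl

theorem SD.smooth (h : SD τ k β a) (hβ : ∀ j ≤ k, ContDiffOn ℝ (k-j : ℕ) (β j) (Ioi τ)) (m : ℕ) :
    (∀ j, j + m ≤ k + 1 → ContDiffOn ℝ m (Df β a j) (Ioi τ ×ˢ Icc (0:ℝ) 1)) ∧
    (∀ j, j + m ≤ k → ContDiffOn ℝ m (Ef β a j) (Ioi τ ×ˢ Icc (0:ℝ) 1)) := by
  induction m with
  | zero =>
    refine ⟨fun j hj => ?_, fun j hj => ?_⟩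
    · simpa using h.Dfc hj
    · simpa using h.Efc hj
  | succ m ih =>
    refine ⟨fun j hj => ?_, fun j hj => ?_⟩
    · exact contDiffOn_of_partials (fun t ht x hx => h.Dft (by omega) ht x) (fun t ht x hx => (h.Dfx (by omega) ht x).hasDerivWithinAt)
        (ih.1 (j+1) (by omega)) (ih.2 j (by omega))
    · have hb : ContDiffOn ℝ m (fun p : ℝ × ℝ => β j p.1) (Ioi τ ×ˢ Icc (0:ℝ) 1) :=
        ((hβ j (by omega)).of_le (by exact_mod_cast (by omega : m ≤ k - j))).comp contDiffOn_fst fun p hp => hp.1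
      exact contDiffOn_of_partials (F2 := fun p => Df β a (j+1) p - β j p.1) (fun t ht x hx => h.Eft (by omega) ht x) (fun t ht x hx => h.Efx (by omega) ht hx)
        (ih.2 (j+1) (by omega)) ((ih.1 (j+1) (by omega)).sub hb)

variable {u : ℝ → Hsp} {ω e : ℝ → ℝ}

theorem Setup.F_ae (h : Setup τ k u ω e β a) {t : ℝ} (ht : t ∈ Ioi τ) : ∀ᵐ x ∂μ01, e t * Df β a 0 (t, x) = u t x := by
  filter_upwards [h.sd.Df_ae ht, Lp.coeFn_smul (e t) (Dv β a 0 t)] with x h1 h2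
  rw [h.eq t ht, h2, h1]; rfl

theorem Setup.smoothF (h : Setup τ k u ω e β a) : ∃ F : ℝ × ℝ → ℝ, ContDiffOn ℝ (k + 1) F (Ioi τ ×ˢ Icc (0:ℝ) 1) ∧
        ∀ t ∈ Ioi τ, ∀ᵐ x ∂μ01, F (t, x) = u t x := by
  refine ⟨fun p => e p.1 * Df β a 0 p, ?_, fun t ht => h.F_ae ht⟩
  have h1 := (h.sd.smooth (fun j hj => ?_) (k+1)).1 0 (by omega)
  · have h2 : ContDiffOn ℝ (k+1 : ℕ) (fun p : ℝ × ℝ => e p.1) (Ioi τ ×ˢ Icc (0:ℝ) 1) :=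
      h.eC.comp contDiffOn_fst fun p hp => hp.1
    have := h2.mul h1
    push_cast at this
    exact this
  · have := h.rgb j (by omega)
    rw [show k+1-j = (k-j)+1 by omega] at this
    exact this.contDiffOn

theorem Setup.classical (h : Setup τ k u ω e β a) : ClassicalUtUxx τ u := by
  have hec : ContinuousOn (fun p : ℝ × ℝ => e p.1) (Ioi τ ×ˢ Icc (0:ℝ) 1) :=
    h.eC.continuousOn.comp continuousOn_fst fun p hp => hp.1
  have hbc : ContinuousOn (fun p : ℝ × ℝ => β 0 p.1) (Ioi τ ×ˢ Icc (0:ℝ) 1) :=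
    (h.sd.βc (Nat.zero_le k)).comp continuousOn_fst fun p hp => hp.1
  refine ⟨fun t x => e t * Df β a 0 (t, x), fun t x => e t * Ef β a 0 (t, x),
    fun t x => (ω t * e t) * Df β a 0 (t, x) + e t * Df β a 1 (t, x),
    fun t x => e t * (Df β a 1 (t, x) - β 0 t), fun t ht => h.F_ae ht, ?_, ?_, ?_, ?_, ?_⟩
  · intro t ht x hx
    exact (h.eder t ht).mul (h.sd.Dft (Nat.zero_le _) ht x)
  · intro t ht x hx
    exact ((h.sd.Dfx (Nat.zero_le _) ht x).const_mul (e t)).hasDerivWithinAt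
  · intro t ht x hx
    exact (h.sd.Efx (Nat.zero_le _) ht hx).const_mul (e t)
  · exact (((h.omc.comp continuous_fst).continuousOn.mul hec).mul (h.sd.Dfc (Nat.zero_le _))).add (hec.mul (h.sd.Dfc (show 1 ≤ k+1 by omega)))
  · exact hec.mul ((h.sd.Dfc (show 1 ≤ k+1 by omega)).sub hbc)
end

/-- regularity of the unique non-negative solution when
`b, ω ∈ W^{1,2}_loc(ℝ)` (resp. `W^{k+1,2}_loc(ℝ)`). -/
theorem statement6
    (b ω : ℝ → ℝ) (b0 b1 ω0 ω1 τ : ℝ) (hC : Cond1 b ω b0 b1 ω0 ω1)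
    (hb : Wkloc 1 b) (hω : Wkloc 1 ω)
    (uτ : Hsp) (huτ0 : ∀ᵐ x ∂μ01, 0 ≤ uτ x) (huτpos : 0 < ‖uτ‖)
    (u : ℝ → Hsp)
    (hsol : IsStrongSolution b ω τ u) (hinit : u τ = uτ) (hnneg : NonnegOn u τ) :
    (CjIntoHm 0 3 u (Ioi τ) ∧
     CkIntoV 1 u (Ioi τ) ∧
     HasL2locTimeDerivChain 2 u τ ∧
     ClassicalUtUxx τ u) ∧
    ∀ k : ℕ, 1 ≤ k → Wkloc (k + 1) b → Wkloc (k + 1) ω →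
      CkIntoV (k + 1) u (Ioi τ) ∧
      (∀ j ≤ k, CjIntoHm j (2 * (k - j) + 3) u (Ioi τ)) ∧
      HasL2locTimeDerivChain (k + 2) u τ ∧
      ∃ F : ℝ × ℝ → ℝ, ContDiffOn ℝ (k + 1) F (Ioi τ ×ˢ Icc (0:ℝ) 1) ∧
        ∀ t ∈ Ioi τ, ∀ᵐ x ∂μ01, F (t, x) = u t x := by
  have h0 : 0 < ‖u τ‖ := by rw [hinit]; exact huτpos
  refine ⟨?_, fun k hk hbk hωk => ?_⟩
  · obtain ⟨e, β, a, S⟩ := setup_exists hC hsol hnneg h0 0 hb hω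
    exact ⟨S.cjH (Nat.zero_le 0), S.ckV, S.rgu.l2chain, S.classical⟩
  · obtain ⟨e, β, a, S⟩ := setup_exists hC hsol hnneg h0 k hbk hωk
    exact ⟨S.ckV, fun j hj => S.cjH hj, S.rgu.l2chain, S.smoothF⟩

end
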